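/- Let $q > 1$ be an integer and $P$ an infinite set of primes such that for some squarefree $m > 1$ coprime to $q$, with $q$ not a perfect $p$-th power for any prime $p \mid m$, every prime in $P$ admits a solution to $x^m \equiv q \pmod p$. Then the upper natural density of $P$ in the primes is at most $\varphi(m)/m < 1$. -/

import Mathlib

section

namespace WI
open MeasureTheory Filter Topology Set Complex

/-- The Fejér type kernel. -/
noncomputable def ker (v : ℝ) : ℝ := if v = 0 then 1 else 2 * (1 - Real.cos v) / v ^ 2

lemma ker_nonneg (v : ℝ) : 0 ≤ ker v := by
  unfold ker
  split_ifs
  · norm_num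
  · have := Real.cos_le_one v
    apply div_nonneg <;> nlinarith [sq_nonneg v]

lemma ker_le (v : ℝ) : ker v ≤ 8 * (1 + v ^ 2)⁻¹ := by
  unfold ker
  split_ifs with h
  · subst h; norm_num
  · have h2 : 0 < v ^ 2 := by positivity
    rw [← div_eq_mul_inv, div_le_div_iff₀ h2 (by positivity)]
    have h1 := Real.one_sub_sq_div_two_le_cos (x := v)
    have h3 := Real.neg_one_le_cos v
    nlinarith

lemma ker_measurable : Measurable ker := by
  unfold ker
  refine Measurable.ite (measurableSet_eq) measurable_const ?_
  fun_prop

lemma ker_integrable : Integrable ker := by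
  refine (integrable_inv_one_add_sq.const_mul 8).mono' ker_measurable.aestronglyMeasurable ?_
  filter_upwards with v
  rw [Real.norm_of_nonneg (ker_nonneg v)]
  exact ker_le v

lemma ker_integral_pos : 0 < ∫ v, ker v := by
  rw [integral_pos_iff_support_of_nonneg ker_nonneg ker_integrable]
  refine lt_of_lt_of_le ?_ (measure_mono (s := Ioo (0:ℝ) 1) ?_)
  · simp
  · intro v hv
    simp only [Function.mem_support, ker, hv.1.ne', if_false]
    have : Real.cos v < 1 := by
      rw [← Real.cos_zero]
      apply Real.cos_lt_cos_of_nonneg_of_le_pi le_rfl _ hv.1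
      linarith [hv.2, Real.pi_gt_three]
    have h2 : 0 < v ^ 2 := pow_pos hv.1 2
    apply ne_of_gt
    apply div_pos <;> linarith

lemma ker_eq (v : ℝ) :
    (ker v : ℂ) = ∫ τ in (-1:ℝ)..1, ((1 - |τ| : ℝ) : ℂ) * cexp (I * τ * v) := by
  rw [← intervalIntegral.integral_add_adjacent_intervals (b := 0)
    (Continuous.intervalIntegrable (by fun_prop) _ _)
    (Continuous.intervalIntegrable (by fun_prop) _ _)]
  have e1 : ∫ τ in (-1:ℝ)..0, ((1 - |τ| : ℝ) : ℂ) * cexp (I * τ * v)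
      = ∫ τ in (-1:ℝ)..0, (1 + τ : ℂ) * cexp (I * τ * v) := by
    apply intervalIntegral.integral_congr
    intro τ hτ
    rw [uIcc_of_le (by norm_num)] at hτ
    simp only [abs_of_nonpos hτ.2]
    push_cast; ring
  have e2 : ∫ τ in (0:ℝ)..1, ((1 - |τ| : ℝ) : ℂ) * cexp (I * τ * v)
      = ∫ τ in (0:ℝ)..1, (1 - τ : ℂ) * cexp (I * τ * v) := by
    apply intervalIntegral.integral_congr
    intro τ hτ
    rw [uIcc_of_le (by norm_num)] at hτ
    simp only [abs_of_nonneg hτ.1]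
    push_cast; ring
  rw [e1, e2]
  by_cases hv : v = 0
  · subst hv
    simp only [ker, if_true, ofReal_zero, mul_zero, Complex.exp_zero, mul_one]
    rw [intervalIntegral.integral_eq_sub_of_hasDerivAt (f := fun τ : ℝ => (τ + τ ^ 2 / 2 : ℂ)),
      intervalIntegral.integral_eq_sub_of_hasDerivAt (f := fun τ : ℝ => (τ - τ ^ 2 / 2 : ℂ))]
    · push_cast; norm_num
    · intro x _
      have := (hasDerivAt_id x).ofReal_comp
      simp only [id] at this
      refine (this.sub ((this.pow 2).div_const 2)).congr_deriv ?_
      push_cast; ring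
    · exact Continuous.intervalIntegrable (by fun_prop) _ _
    · intro x _
      have := (hasDerivAt_id x).ofReal_comp
      simp only [id] at this
      refine (this.add ((this.pow 2).div_const 2)).congr_deriv ?_
      push_cast; ring
    · exact Continuous.intervalIntegrable (by fun_prop) _ _
  · have hvc : (v : ℂ) ≠ 0 := by exact_mod_cast hv
    have hiv : I * v ≠ 0 := mul_ne_zero I_ne_zero hvc
    have hd (x : ℝ) : HasDerivAt (fun τ : ℝ => cexp (I * τ * v)) (cexp (I * x * v) * (I * v)) x := by
      have h0 := (hasDerivAt_id x).ofReal_comp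
      simp only [id] at h0
      have := ((h0.const_mul I).mul_const (v:ℂ)).cexp
      convert this using 1
      push_cast; ring
    rw [intervalIntegral.integral_eq_sub_of_hasDerivAt
        (f := fun τ : ℝ => ((1 + τ) * cexp (I * τ * v) / (I * v) - cexp (I * τ * v) / (I * v) ^ 2 : ℂ)),
      intervalIntegral.integral_eq_sub_of_hasDerivAt
        (f := fun τ : ℝ => ((1 - τ) * cexp (I * τ * v) / (I * v) + cexp (I * τ * v) / (I * v) ^ 2 : ℂ))]
    · simp only [ker, hv, if_false]
      push_cast
      rw [Complex.cos]
      have h1 : cexp (I * 1 * v) = cexp (v * I) := by ring_nf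
      have h2 : cexp (I * (-1) * v) = cexp (-v * I) := by ring_nf
      rw [h1, h2]
      simp only [mul_zero, zero_mul, Complex.exp_zero, mul_pow, I_sq]
      field_simp
      ring
    · intro x _
      have h0 := (hasDerivAt_id x).ofReal_comp
      simp only [id] at h0
      refine (((((h0.const_sub 1).mul (hd x)).div_const (I * v)).add ((hd x).div_const ((I * v)^2)))).congr_deriv ?_
      push_cast
      field_simp
      ring
    · exact Continuous.intervalIntegrable (by fun_prop) _ _
    · intro x _
      have h0 := (hasDerivAt_id x).ofReal_comp
      simp only [id] at h0
      refine (((((h0.const_add 1).mul (hd x)).div_const (I * v)).sub ((hd x).div_const ((I * v)^2)))).congr_deriv ?_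
      push_cast
      field_simp
      ring
    · exact Continuous.intervalIntegrable (by fun_prop) _ _

/-- smoothed identity with damping -/
lemma damp (b : ℝ → ℝ) (hbm : Measurable b) (C : ℝ) (hb : ∀ u, |b u| ≤ C) (g : ℂ → ℂ)
    (hL : ∀ ε : ℝ, 0 < ε → ∀ t : ℝ, ∫ u in Ioi (0:ℝ), (b u : ℂ) * cexp (-(ε + I * t) * u)
      = g (1 + ε + I * t)) (l y ε : ℝ) (hε : 0 < ε) :
    ∫ u in Ioi (0:ℝ), (b u : ℂ) * cexp (-ε * u) * (ker (l * (y - u)) : ℂ)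
      = ∫ τ in (-1:ℝ)..1, ((1 - |τ| : ℝ) : ℂ) * cexp (I * τ * (l * y)) * g (1 + ε + I * (l * τ : ℝ)) := by
  have h1 : ∀ u : ℝ, (b u : ℂ) * cexp (-ε * u) * (ker (l * (y - u)) : ℂ)
      = ∫ τ in Ioc (-1:ℝ) 1, (b u : ℂ) * cexp (-ε * u) * (((1 - |τ| : ℝ) : ℂ) * cexp (I * τ * (l * (y - u)))) := by
    intro u
    rw [ker_eq, intervalIntegral.integral_of_le (by norm_num), integral_const_mul]
    push_cast
    rfl
  simp_rw [h1]
  rw [integral_integral_swap]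
  · rw [intervalIntegral.integral_of_le (by norm_num)]
    congr 1
    ext τ
    rw [← hL ε hε, ← integral_const_mul]
    congr 1
    ext u
    have : cexp (-ε * u) * cexp (I * τ * (l * (y - u))) =
      cexp (I * τ * (l * y)) * cexp (-(ε + I * (l * τ : ℝ)) * u) := by
      rw [← Complex.exp_add, ← Complex.exp_add]
      congr 1; push_cast; ring
    linear_combination (b u : ℂ) * ((1 - |τ| : ℝ) : ℂ) * this
  · have hi : Integrable (fun z : ℝ × ℝ => (C * Real.exp (-ε * z.1)) * (1:ℝ))
        ((volume.restrict (Ioi 0)).prod (volume.restrict (Ioc (-1:ℝ) 1))) := by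
      apply Integrable.mul_prod (f := fun u : ℝ => C * Real.exp (-ε * u)) (g := fun _ : ℝ => (1:ℝ))
      · exact (integrableOn_exp_mul_Ioi (by linarith) 0).const_mul C
      · exact integrable_const _
    refine hi.mono' ?_ ?_
    · apply Measurable.aestronglyMeasurable
      unfold Function.uncurry
      fun_prop
    · have : ∀ᵐ z ∂((volume.restrict (Ioi (0:ℝ))).prod (volume.restrict (Ioc (-1:ℝ) 1))),
          z ∈ (Ioi (0:ℝ)) ×ˢ (Ioc (-1:ℝ) 1) := by
        rw [Measure.prod_restrict]
        exact ae_restrict_mem (measurableSet_Ioi.prod measurableSet_Ioc)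
      filter_upwards [this] with z hz
      have h0 : |z.2| ≤ 1 := abs_le.mpr ⟨hz.2.1.le, hz.2.2⟩
      simp only [Function.uncurry, norm_mul, Complex.norm_exp, Complex.norm_real, Real.norm_eq_abs]
      have e1 : (-(ε:ℂ) * z.1).re = -ε * z.1 := by simp
      have e2 : (I * (z.2:ℂ) * (l * (y - z.1))).re = 0 := by simp
      rw [e1, e2, Real.exp_zero, mul_one]
      apply mul_le_mul _ _ (abs_nonneg _) (mul_nonneg ((abs_nonneg _).trans (hb 0)) (Real.exp_nonneg _))
      · exact mul_le_mul_of_nonneg_right (hb _) (Real.exp_nonneg _)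
      · rw [abs_of_nonneg (by linarith)]
        linarith [abs_nonneg z.2]

lemma ker_comp_integrable (l y : ℝ) (hl : l ≠ 0) : Integrable (fun u => ker (l * (y - u))) := by
  exact (ker_integrable.comp_mul_left' hl).comp_sub_left y

lemma undamp (b : ℝ → ℝ) (hbm : Measurable b) (C : ℝ) (hb : ∀ u, |b u| ≤ C) (g : ℂ → ℂ)
    (hg : ContinuousOn g {s | 1 ≤ s.re})
    (hL : ∀ ε : ℝ, 0 < ε → ∀ t : ℝ, ∫ u in Ioi (0:ℝ), (b u : ℂ) * cexp (-(ε + I * t) * u)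
      = g (1 + ε + I * t)) (l y : ℝ) (hl : l ≠ 0) :
    ∫ u in Ioi (0:ℝ), (b u : ℂ) * (ker (l * (y - u)) : ℂ)
      = ∫ τ in (-1:ℝ)..1, ((1 - |τ| : ℝ) : ℂ) * cexp (I * τ * (l * y)) * g (1 + I * (l * τ : ℝ)) := by
  have hCn : 0 ≤ C := (abs_nonneg _).trans (hb 0)
  have hlim1 : Tendsto (fun ε : ℝ => ∫ u in Ioi (0:ℝ), (b u : ℂ) * cexp (-ε * u) * (ker (l * (y - u)) : ℂ))
      (𝓝[>] 0) (𝓝 (∫ u in Ioi (0:ℝ), (b u : ℂ) * (ker (l * (y - u)) : ℂ))) := by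
    apply tendsto_integral_filter_of_dominated_convergence (fun u => C * ker (l * (y - u)))
    · filter_upwards with ε
      apply Measurable.aestronglyMeasurable
      have := ker_measurable
      fun_prop
    · filter_upwards [self_mem_nhdsWithin] with ε hε
      filter_upwards [ae_restrict_mem measurableSet_Ioi] with u hu
      simp only [norm_mul, Complex.norm_exp, Complex.norm_real, Real.norm_eq_abs]
      rw [abs_of_nonneg (ker_nonneg _)]
      apply mul_le_mul_of_nonneg_right _ (ker_nonneg _)
      have : Real.exp ((-(ε:ℂ) * u).re) ≤ 1 := by
        rw [Real.exp_le_one_iff]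
        simp only [neg_mul, neg_re, re_ofReal_mul, ofReal_re]
        have : 0 < ε * u := mul_pos hε hu
        linarith
      calc |b u| * _ ≤ C * 1 := mul_le_mul (hb u) this (Real.exp_nonneg _) hCn
        _ = C := mul_one C
    · exact ((ker_comp_integrable l y hl).const_mul C).integrableOn
    · filter_upwards with u
      have : Tendsto (fun ε : ℝ => (b u : ℂ) * cexp (-ε * u) * (ker (l * (y - u)) : ℂ)) (𝓝 0)
        (𝓝 ((b u : ℂ) * cexp (-(0:ℝ) * u) * (ker (l * (y - u)) : ℂ))) := by
        apply Continuous.tendsto (f := fun ε : ℝ => (b u : ℂ) * cexp (-ε * u) * (ker (l * (y - u)) : ℂ))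
        fun_prop
      simp only [ofReal_zero, neg_zero, zero_mul, Complex.exp_zero, mul_one] at this
      exact this.mono_left nhdsWithin_le_nhds
  have hcont : ContinuousOn (fun p : ℝ × ℝ => ((1 - |p.2| : ℝ) : ℂ) * cexp (I * p.2 * (l * y)) * g (1 + p.1 + I * (l * p.2 : ℝ)))
      (Icc 0 1 ×ˢ Icc (-1) 1) := by
    apply ContinuousOn.mul
    · apply Continuous.continuousOn; fun_prop
    · apply hg.comp
      · apply Continuous.continuousOn; fun_prop
      · intro p hp
        simp
        exact hp.1.1
  obtain ⟨M, hM⟩ := (isCompact_Icc.prod isCompact_Icc).exists_bound_of_continuousOn hcont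
  have hlim2 : Tendsto (fun ε : ℝ => ∫ τ in (-1:ℝ)..1, ((1 - |τ| : ℝ) : ℂ) * cexp (I * τ * (l * y)) * g (1 + ε + I * (l * τ : ℝ)))
      (𝓝[>] 0) (𝓝 (∫ τ in (-1:ℝ)..1, ((1 - |τ| : ℝ) : ℂ) * cexp (I * τ * (l * y)) * g (1 + I * (l * τ : ℝ)))) := by
    simp_rw [intervalIntegral.integral_of_le (show (-1:ℝ) ≤ 1 by norm_num)]
    have hev : ∀ᶠ ε : ℝ in 𝓝[>] 0, ε ∈ Ioc (0:ℝ) 1 := Ioc_mem_nhdsGT one_pos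
    apply tendsto_integral_filter_of_dominated_convergence (fun u => M)
    · filter_upwards [hev] with ε hε
      apply ContinuousOn.aestronglyMeasurable _ measurableSet_Ioc
      have := hcont.comp (f := fun τ : ℝ => (ε, τ)) (s := Ioc (-1) 1) (by fun_prop) (fun τ hτ => ⟨⟨hε.1.le, hε.2⟩, ⟨hτ.1.le, hτ.2⟩⟩)
      exact this
    · filter_upwards [hev] with ε hε
      filter_upwards [ae_restrict_mem measurableSet_Ioc] with τ hτ
      exact hM (ε, τ) ⟨⟨hε.1.le, hε.2⟩, ⟨hτ.1.le, hτ.2⟩⟩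
    · exact integrable_const _
    · filter_upwards [ae_restrict_mem measurableSet_Ioc] with τ hτ
      have h2 := hcont.comp (f := fun ε : ℝ => (ε, τ)) (s := Icc 0 1) (by fun_prop) (fun ε hε => ⟨hε, ⟨hτ.1.le, hτ.2⟩⟩)
      have h3 := (h2 0 (by simp)).mono_left (nhdsWithin_mono 0 Ioc_subset_Icc_self)
      rw [nhdsWithin_Ioc_eq_nhdsGT one_pos] at h3
      simpa [Function.comp_def] using h3
  refine tendsto_nhds_unique hlim1 (hlim2.congr' ?_)
  filter_upwards [self_mem_nhdsWithin] with ε hε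
  exact (damp b hbm C hb g hL l y ε hε).symm

lemma conv_tendsto (b : ℝ → ℝ) (hbm : Measurable b) (C : ℝ) (hb : ∀ u, |b u| ≤ C) (g : ℂ → ℂ)
    (hg : ContinuousOn g {s | 1 ≤ s.re})
    (hL : ∀ ε : ℝ, 0 < ε → ∀ t : ℝ, ∫ u in Ioi (0:ℝ), (b u : ℂ) * cexp (-(ε + I * t) * u)
      = g (1 + ε + I * t)) (l : ℝ) (hl : 0 < l) :
    Tendsto (fun y => ∫ u in Ioi (0:ℝ), b u * ker (l * (y - u))) atTop (𝓝 0) := by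
  have h1 := Real.tendsto_integral_exp_smul_cocompact
    (fun τ => (Ioc (-1:ℝ) 1).indicator (fun τ => ((1 - |τ| : ℝ) : ℂ) * g (1 + I * (l * τ : ℝ))) τ)
  have h2 : Tendsto (fun y : ℝ => -(l * y / (2 * Real.pi))) atTop (cocompact ℝ) := by
    refine Tendsto.mono_right ?_ atBot_le_cocompact
    refine tendsto_neg_atTop_atBot.comp ?_
    exact (tendsto_id.const_mul_atTop hl).atTop_div_const (by positivity)
  have h3 := h1.comp h2
  have h4 : Tendsto (fun y => ((∫ u in Ioi (0:ℝ), b u * ker (l * (y - u)) : ℝ) : ℂ)) atTop (𝓝 0) := by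
    refine h3.congr fun y => ?_
    have := undamp b hbm C hb g hg hL l y hl.ne'
    have e : ((∫ u in Ioi (0:ℝ), b u * ker (l * (y - u)) : ℝ) : ℂ) = ∫ u in Ioi (0:ℝ), (b u : ℂ) * (ker (l * (y - u)) : ℂ) := by
      rw [← integral_complex_ofReal]
      push_cast; rfl
    rw [e, this, intervalIntegral.integral_of_le (by norm_num), ← integral_indicator measurableSet_Ioc]
    simp only [Function.comp]
    congr 1
    ext τ
    by_cases hτ : τ ∈ Ioc (-1:ℝ) 1
    · simp only [indicator_of_mem hτ]
      rw [Circle.smul_def, Real.fourierChar_apply, smul_eq_mul]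
      have : cexp (↑(2 * Real.pi * -(τ * -(l * y / (2 * Real.pi)))) * I) = cexp (I * τ * (l * y)) := by
        congr 1
        push_cast
        have : (Real.pi : ℂ) ≠ 0 := by exact_mod_cast Real.pi_ne_zero
        field_simp
      rw [this]; ring
    · simp [indicator_of_notMem hτ]
  have h5 := (Complex.continuous_re.tendsto 0).comp h4
  simpa [Function.comp_def] using h5

end WI

end

section

namespace WI
open MeasureTheory Filter Topology Set Complex

lemma ker_cv (S : Set ℝ) (hS : MeasurableSet S) (l y : ℝ) (hl : 0 < l) :
    ∫ u in {u | l * (y - u) ∈ S}, l * ker (l * (y - u)) = ∫ w in S, ker w := by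
  have hm : MeasurableSet {u : ℝ | l * (y - u) ∈ S} :=
    (show Measurable (fun u : ℝ => l * (y - u)) by fun_prop) hS
  rw [← integral_indicator hm, ← integral_indicator hS]
  have h1 : ({u : ℝ | l * (y - u) ∈ S}).indicator (fun u => l * ker (l * (y - u)))
      = fun u => l * (S.indicator ker) (l * (y - u)) := by
    ext u
    by_cases h : l * (y - u) ∈ S
    · rw [indicator_of_mem (by exact h), indicator_of_mem h]
    · rw [indicator_of_notMem (by exact h), indicator_of_notMem h, mul_zero]
  rw [h1, integral_const_mul, integral_sub_left_eq_self (fun v => (S.indicator ker) (l * v)),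
    Measure.integral_comp_mul_left, abs_of_pos (by positivity), smul_eq_mul, ← mul_assoc,
    mul_inv_cancel₀ hl.ne', one_mul]

lemma ker_conv_one (l : ℝ) (hl : 0 < l) :
    Tendsto (fun y => ∫ u in Ioi (0:ℝ), l * ker (l * (y - u))) atTop (𝓝 (∫ w, ker w)) := by
  have h1 : ∀ y : ℝ, ∫ u in Ioi (0:ℝ), l * ker (l * (y - u)) = ∫ w in Iio (l * y), ker w := by
    intro y
    rw [← ker_cv (Iio (l * y)) measurableSet_Iio l y hl]
    congr 2
    ext u
    simp only [mem_Ioi, mem_Iio, mem_ofPred_eq]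
    rw [mul_lt_mul_iff_right₀ hl]
    constructor <;> intro h <;> linarith
  simp_rw [h1]
  exact (aecover_Iio (tendsto_id.const_mul_atTop hl)).integral_tendsto_of_countably_generated ker_integrable

noncomputable def J (r : ℝ) : ℝ := ∫ w in Icc (-r) r, ker w

lemma J_tendsto : Tendsto J atTop (𝓝 (∫ w, ker w)) :=
  (aecover_Icc tendsto_neg_atTop_atBot tendsto_id).integral_tendsto_of_countably_generated ker_integrable

lemma taub (B : ℝ → ℝ) (hBm : Measurable B) (C : ℝ) (hB0 : ∀ u, 0 ≤ B u) (hBC : ∀ u, B u ≤ C)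
    (hmono : ∀ u v, 0 ≤ u → u ≤ v → B u * Real.exp u ≤ B v * Real.exp v) (g : ℂ → ℂ)
    (hg : ContinuousOn g {s | 1 ≤ s.re})
    (hL : ∀ ε : ℝ, 0 < ε → ∀ t : ℝ, ∫ u in Ioi (0:ℝ), ((B u - 1 : ℝ) : ℂ) * cexp (-(ε + I * t) * u)
      = g (1 + ε + I * t)) :
    Tendsto B atTop (𝓝 1) := by
  set K : ℝ := ∫ w, ker w with hK
  have hKpos : 0 < K := ker_integral_pos
  have hC0 : 0 ≤ C := (hB0 0).trans (hBC 0)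
  have hintg : ∀ l y : ℝ, 0 < l → Integrable (fun u => B u * (l * ker (l * (y - u)))) := by
    intro l y hl
    refine (((ker_comp_integrable l y hl.ne').const_mul l).bdd_mul (c := C) hBm.aestronglyMeasurable ?_)
    filter_upwards with u
    rw [Real.norm_of_nonneg (hB0 u)]; exact hBC u
  have hlim : ∀ l : ℝ, 0 < l → Tendsto (fun y => ∫ u in Ioi (0:ℝ), B u * (l * ker (l * (y - u)))) atTop (𝓝 K) := by
    intro l hl
    have h1 := conv_tendsto (fun u => B u - 1) (hBm.sub_const 1) (C + 1) (fun u => by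
      rw [abs_le]; constructor <;> linarith [hB0 u, hBC u]) g hg hL l hl
    have h2 := (h1.const_mul l).add (ker_conv_one l hl)
    rw [mul_zero, zero_add] at h2
    refine h2.congr fun y => ?_
    rw [← integral_const_mul, ← integral_add]
    · congr 1; ext u; ring
    · have := ((hintg l y hl).sub ((ker_comp_integrable l y hl.ne').const_mul l)).integrableOn (s := Ioi 0)
      refine this.congr ?_
      filter_upwards with u
      simp only [Pi.sub_apply]; ring
    · exact ((ker_comp_integrable l y hl.ne').const_mul l).integrableOn
  have hknn : ∀ l y u : ℝ, 0 < l → 0 ≤ l * ker (l * (y - u)) := fun l y u hl => mul_nonneg hl.le (ker_nonneg _)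
  -- upper bound
  have hup : ∀ δ r : ℝ, 0 < δ → 0 < r → ∀ᶠ y in atTop, B y * Real.exp (-δ) * J r < K + δ := by
    intro δ r hδ hr
    set l := 2 * r / δ with hl'
    have hl : 0 < l := by positivity
    have hr' : l * (δ / 2) = r := by rw [hl']; field_simp
    have h1 := (hlim l hl).comp (tendsto_atTop_add_const_right atTop (δ / 2) tendsto_id)
    have h2 := h1.eventually_lt_const (show K < K + δ by linarith)
    filter_upwards [h2, eventually_gt_atTop 0] with y hy hy0
    refine lt_of_le_of_lt ?_ hy
    simp only [Function.comp, id]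
    rw [J, ← ker_cv _ measurableSet_Icc l (y + δ / 2) hl, ← integral_const_mul]
    have hset : {u : ℝ | l * (y + δ / 2 - u) ∈ Icc (-r) r} = Icc y (y + δ) := by
      ext u
      simp only [mem_ofPred_eq, mem_Icc]
      rw [← hr', ← mul_neg, mul_le_mul_iff_right₀ hl, mul_le_mul_iff_right₀ hl]
      constructor <;> rintro ⟨h1, h2⟩ <;> constructor <;> linarith
    rw [hset]
    calc _ ≤ ∫ u in Icc y (y + δ), B u * (l * ker (l * (y + δ / 2 - u))) := by
          apply setIntegral_mono_on
          · exact (((ker_comp_integrable l _ hl.ne').const_mul l).const_mul _).integrableOn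
          · exact (hintg l _ hl).integrableOn
          · exact measurableSet_Icc
          · intro u hu
            apply mul_le_mul_of_nonneg_right _ (hknn _ _ _ hl)
            have h3 := hmono y u hy0.le hu.1
            have h4 : Real.exp u ≤ Real.exp y * Real.exp δ := by
              rw [← Real.exp_add]; exact Real.exp_le_exp.mpr hu.2
            rw [Real.exp_neg, ← div_eq_mul_inv, div_le_iff₀ (Real.exp_pos _)]
            have h5 : B u * Real.exp u ≤ B u * (Real.exp y * Real.exp δ) := mul_le_mul_of_nonneg_left h4 (hB0 u)
            have h6 := Real.exp_pos y
            nlinarith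
      _ ≤ _ := by
          apply setIntegral_mono_set (hintg l _ hl).integrableOn
          · filter_upwards with u
            exact mul_nonneg (hB0 u) (hknn _ _ _ hl)
          · apply LE.le.eventuallyLE
            intro u hu
            exact lt_of_lt_of_le hy0 hu.1
  have hlow : ∀ δ r : ℝ, 0 < δ → 0 < r → ∀ᶠ y in atTop, K - δ < B y * Real.exp δ * K + C * (K - J r) := by
    intro δ r hδ hr
    set l := 2 * r / δ with hl'
    have hl : 0 < l := by positivity
    have hr' : l * (δ / 2) = r := by rw [hl']; field_simp
    have h1 := (hlim l hl).comp (tendsto_atTop_add_const_right atTop (-(δ / 2)) tendsto_id)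
    have h2 := h1.eventually_const_lt (show K - δ < K by linarith)
    filter_upwards [h2, eventually_gt_atTop δ] with y hy hy0
    refine lt_of_lt_of_le hy ?_
    simp only [Function.comp, id]
    have e1 : K - J r = ∫ w in (Icc (-r) r)ᶜ, ker w := by
      rw [hK, J, ← integral_add_compl (measurableSet_Icc (a := -r) (b := r)) ker_integrable]; ring
    have e2 : K = ∫ u, l * ker (l * (y + -(δ / 2) - u)) := by
      have := ker_cv univ MeasurableSet.univ l (y + -(δ/2)) hl
      simp at this
      rw [hK, ← this]
    rw [e1, ← ker_cv _ measurableSet_Icc.compl l (y + -(δ / 2)) hl, ← integral_const_mul C]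
    have e3 : B y * Real.exp δ * K = ∫ u, B y * Real.exp δ * (l * ker (l * (y + -(δ / 2) - u))) := by
      rw [integral_const_mul, ← e2]
    rw [e3, ← integral_indicator measurableSet_Ioi, ← integral_indicator, ← integral_add]
    · apply integral_mono
      · exact (hintg l _ hl).indicator measurableSet_Ioi
      · refine (((ker_comp_integrable l _ hl.ne').const_mul l).const_mul _).add ?_
        refine (((ker_comp_integrable l _ hl.ne').const_mul l).const_mul _).indicator ?_
        exact (show Measurable (fun u : ℝ => l * (y + -(δ/2) - u)) by fun_prop) measurableSet_Icc.compl
      · intro u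
        have hk := hknn l (y + -(δ/2)) u hl
        by_cases hu : u ∈ Icc (y - δ) y
        · have hu0 : 0 < u := by linarith [hu.1]
          simp only
          rw [indicator_of_mem (show u ∈ Ioi (0:ℝ) from hu0)]
          have h3 := hmono u y hu0.le hu.2
          have h4 : Real.exp y ≤ Real.exp u * Real.exp δ := by
            rw [← Real.exp_add]; exact Real.exp_le_exp.mpr (by linarith [hu.1])
          have h5 : B y * Real.exp y ≤ B y * (Real.exp u * Real.exp δ) := mul_le_mul_of_nonneg_left h4 (hB0 y)
          have h6 : B u ≤ B y * Real.exp δ := by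
            have h6 := Real.exp_pos u
            nlinarith
          have h7 : 0 ≤ ({u : ℝ | l * (y + -(δ/2) - u) ∈ (Icc (-r) r)ᶜ}).indicator (fun u => C * (l * ker (l * (y + -(δ/2) - u)))) u :=
            indicator_nonneg (fun u _ => mul_nonneg hC0 (hknn _ _ _ hl)) u
          have := mul_le_mul_of_nonneg_right h6 hk
          linarith
        · simp only
          have hmem : u ∈ {u : ℝ | l * (y + -(δ/2) - u) ∈ (Icc (-r) r)ᶜ} := by
            simp only [mem_ofPred_eq, mem_compl_iff, mem_Icc]
            rw [← hr', ← mul_neg, mul_le_mul_iff_right₀ hl, mul_le_mul_iff_right₀ hl]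
            intro ⟨h1, h2⟩
            exact hu ⟨by linarith, by linarith⟩
          rw [indicator_of_mem hmem]
          have h8 : (Ioi (0:ℝ)).indicator (fun u => B u * (l * ker (l * (y + -(δ/2) - u)))) u ≤ B u * (l * ker (l * (y + -(δ/2) - u))) :=
            indicator_le_self' (fun _ _ => mul_nonneg (hB0 u) hk) u
          have h9 := mul_le_mul_of_nonneg_right (hBC u) hk
          have h10 : 0 ≤ B y * Real.exp δ * (l * ker (l * (y + -(δ/2) - u))) := mul_nonneg (mul_nonneg (hB0 y) (Real.exp_nonneg _)) hk
          linarith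
    · exact (((ker_comp_integrable l _ hl.ne').const_mul l).const_mul _)
    · refine (((ker_comp_integrable l _ hl.ne').const_mul l).const_mul _).indicator ?_
      exact (show Measurable (fun u : ℝ => l * (y + -(δ/2) - u)) by fun_prop) measurableSet_Icc.compl
    · exact (show Measurable (fun u : ℝ => l * (y + -(δ/2) - u)) by fun_prop) measurableSet_Icc.compl
  have hJ : Tendsto (fun θ : ℝ => J θ⁻¹) (𝓝[>] 0) (𝓝 K) := J_tendsto.comp tendsto_inv_nhdsGT_zero
  have hid : Tendsto (fun θ : ℝ => θ) (𝓝[>] 0) (𝓝 0) := tendsto_id.mono_left nhdsWithin_le_nhds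
  have hexp : Tendsto (fun θ : ℝ => Real.exp (-θ)) (𝓝[>] 0) (𝓝 1) := by
    have := (Real.continuous_exp.tendsto _).comp hid.neg
    simpa [Function.comp_def] using this
  have hexp' : Tendsto (fun θ : ℝ => Real.exp θ) (𝓝[>] 0) (𝓝 1) := by
    have := (Real.continuous_exp.tendsto _).comp hid
    simpa [Function.comp_def] using this
  rw [tendsto_order]
  constructor
  · intro a ha
    have hT : Tendsto (fun θ : ℝ => (K - θ - C * (K - J θ⁻¹)) / (Real.exp θ * K)) (𝓝[>] 0) (𝓝 ((K - 0 - C * (K - K)) / (1 * K))) :=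
      ((tendsto_const_nhds.sub hid).sub ((tendsto_const_nhds.sub hJ).const_mul C)).div (hexp'.mul_const K) (by positivity)
    have : (K - 0 - C * (K - K)) / (1 * K) = 1 := by field_simp; ring
    rw [this] at hT
    obtain ⟨θ, h1, h2⟩ := ((hT.eventually_const_lt ha).and self_mem_nhdsWithin).exists
    have h2 : 0 < θ := h2
    filter_upwards [hlow θ θ⁻¹ h2 (by positivity)] with y hy
    rw [lt_div_iff₀ (by positivity)] at h1
    have : a * (Real.exp θ * K) < B y * (Real.exp θ * K) := by linarith
    exact lt_of_mul_lt_mul_right this (by positivity)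
  · intro a ha
    have hT : Tendsto (fun θ : ℝ => (K + θ) / (Real.exp (-θ) * J θ⁻¹)) (𝓝[>] 0) (𝓝 ((K + 0) / (1 * K))) :=
      (tendsto_const_nhds.add hid).div (hexp.mul hJ) (by positivity)
    have : (K + 0) / (1 * K) = 1 := by field_simp; ring
    rw [this] at hT
    obtain ⟨θ, ⟨h1, h3⟩, h2⟩ := (((hT.eventually_lt_const ha).and (hJ.eventually_const_lt hKpos)).and self_mem_nhdsWithin).exists
    have h2 : 0 < θ := h2
    filter_upwards [hup θ θ⁻¹ h2 (by positivity)] with y hy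
    have hpos : 0 < Real.exp (-θ) * J θ⁻¹ := by positivity
    rw [div_lt_iff₀ hpos] at h1
    have : B y * (Real.exp (-θ) * J θ⁻¹) < a * (Real.exp (-θ) * J θ⁻¹) := by linarith
    exact lt_of_mul_lt_mul_right this hpos.le

/-- Wiener–Ikehara (with a Chebyshev bound as hypothesis). -/
theorem wiener_ikehara (a : ℕ → ℝ) (ha : ∀ n, 0 ≤ a n) (C : ℝ)
    (hC : ∀ N : ℕ, ∑ k ∈ Finset.Icc 1 N, a k ≤ C * N) (g : ℂ → ℂ)
    (hg : ContinuousOn g {s | 1 ≤ s.re})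
    (h : ∀ s : ℂ, 1 < s.re → LSeries (fun n => (a n : ℂ)) s / s - 1 / (s - 1) = g s) :
    Tendsto (fun N : ℕ => (∑ k ∈ Finset.Icc 1 N, a k) / N) atTop (𝓝 1) := by
  set S : ℝ → ℝ := fun t => ∑ k ∈ Finset.Icc 1 ⌊t⌋₊, a k with hS
  have hSmono : Monotone S := fun x y hxy => Finset.sum_le_sum_of_subset_of_nonneg
    (Finset.Icc_subset_Icc_right (Nat.floor_mono hxy)) (fun _ _ _ => ha _)
  have hS0 : ∀ t, 0 ≤ S t := fun t => Finset.sum_nonneg fun _ _ => ha _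
  have hC0 : 0 ≤ C := by
    have := hC 1
    simp at this
    exact (ha 1).trans this
  have hSC : ∀ t, 0 ≤ t → S t ≤ C * t := fun t ht =>
    (hC _).trans (mul_le_mul_of_nonneg_left (Nat.floor_le ht) hC0)
  set B : ℝ → ℝ := fun u => S (Real.exp u) * Real.exp (-u) with hB
  have hBm : Measurable B := (hSmono.measurable.comp Real.measurable_exp).mul (by fun_prop)
  have hBe : ∀ u, B u * Real.exp u = S (Real.exp u) := fun u => by
    rw [hB]; simp only; rw [mul_assoc, ← Real.exp_add]; simp
  have key : Tendsto B atTop (𝓝 1) := by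
    refine taub B hBm C (fun u => mul_nonneg (hS0 _) (Real.exp_nonneg _)) ?_ ?_ g hg ?_
    · intro u
      have := hSC _ (Real.exp_nonneg u)
      rw [← hBe] at this
      exact le_of_mul_le_mul_right this (Real.exp_pos u)
    · intro u v _ huv
      rw [hBe, hBe]
      exact hSmono (Real.exp_le_exp.mpr huv)
    · intro ε hε t
      set s : ℂ := 1 + ε + I * t with hs
      have hsre : 1 < s.re := by simp [hs, hε]
      have hs0 : s ≠ 0 := fun h0 => by rw [h0] at hsre; simp at hsre; linarith
      rw [← h s hsre, LSeries_eq_mul_integral_of_nonneg a zero_le_one hsre ?_ ha, mul_div_cancel_left₀ _ hs0]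
      · have himg : Ioi (1:ℝ) = Real.exp '' Ioi 0 := by
          ext x; constructor
          · intro hx
            exact ⟨Real.log x, Real.log_pos hx, Real.exp_log (by linarith [show (1:ℝ) < x from hx])⟩
          · rintro ⟨y, hy, rfl⟩
            exact Real.one_lt_exp_iff.mpr hy
        rw [himg, integral_image_eq_integral_abs_deriv_smul measurableSet_Ioi
          (fun x _ => (Real.hasDerivAt_exp x).hasDerivWithinAt) Real.exp_injective.injOn]
        have h1 : ∫ u in Ioi (0:ℝ), cexp (-(ε + I * t) * u) = 1 / (s - 1) := by
          rw [integral_exp_mul_complex_Ioi (by simp [hε])]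
          have e : s - 1 = ε + I * t := by rw [hs]; ring
          rw [e]
          have e0 : (ε + I * t : ℂ) ≠ 0 := fun h0 => by
            have := congrArg Complex.re h0
            simp at this
            exact hε.ne' this
          simp only [ofReal_zero, mul_zero, Complex.exp_zero]
          rw [neg_div_neg_eq]
        rw [← h1, ← integral_sub]
        · congr 1
          ext u
          have h2 : cexp (-(ε + I * t) * u) = cexp u * cexp (u * -(s + 1)) * cexp u := by
            rw [← Complex.exp_add, ← Complex.exp_add, hs]; congr 1; ring
          rw [abs_of_pos (Real.exp_pos u), Complex.real_smul, ofReal_exp, Complex.cpow_def_of_ne_zero (Complex.exp_ne_zero _),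
            ← ofReal_exp, ← Complex.ofReal_log (Real.exp_nonneg _), Real.log_exp, ofReal_exp, h2]
          simp only [hB, hS]
          push_cast
          rw [Complex.exp_neg]
          have := Complex.exp_ne_zero (u:ℂ)
          field_simp
        · have hi : Integrable (fun u : ℝ => C * Real.exp (-ε * u)) (volume.restrict (Ioi 0)) :=
            (integrableOn_exp_mul_Ioi (by linarith) 0).const_mul C
          refine hi.mono' ?_ ?_
          · apply Measurable.aestronglyMeasurable
            have e : (fun u : ℝ => |Real.exp u| • ((∑ k ∈ Finset.Icc 1 ⌊Real.exp u⌋₊, (a k : ℂ)) * ((Real.exp u : ℝ) : ℂ) ^ (-(s + 1))))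
              = fun u : ℝ => |Real.exp u| • ((S (Real.exp u) : ℂ) * ((Real.exp u : ℝ) : ℂ) ^ (-(s + 1))) := by
              ext u; simp [hS]
            rw [e]
            have := hSmono.measurable
            fun_prop
          · filter_upwards with u
            rw [norm_smul, norm_mul, Complex.norm_cpow_eq_rpow_re_of_pos (Real.exp_pos u)]
            have e : (∑ k ∈ Finset.Icc 1 ⌊Real.exp u⌋₊, (a k : ℂ)) = (S (Real.exp u) : ℂ) := by simp [hS]
            rw [e, Complex.norm_real, Real.norm_of_nonneg (hS0 _), ← Real.exp_mul, Real.norm_of_nonneg (abs_nonneg _), abs_of_nonneg (Real.exp_nonneg u)]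
            have e2 : (-(s+1)).re = -(2 + ε) := by simp [hs]; ring
            rw [e2]
            calc _ ≤ Real.exp u * ((C * Real.exp u) * Real.exp (u * -(2 + ε))) := by
                  gcongr
                  exact hSC _ (Real.exp_nonneg u)
              _ = C * (Real.exp u * Real.exp u * Real.exp (u * -(2 + ε))) := by ring
              _ = _ := by rw [← Real.exp_add, ← Real.exp_add]; congr 2; ring
        · exact integrableOn_exp_mul_complex_Ioi (by simp [hε]) 0
      · apply Asymptotics.IsBigO.of_bound C
        filter_upwards with n
        rw [Real.norm_of_nonneg (Finset.sum_nonneg fun _ _ => ha _), Real.rpow_one, Real.norm_of_nonneg (by positivity)]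
        exact hC n
  have h2 := key.comp (Real.tendsto_log_atTop.comp tendsto_natCast_atTop_atTop)
  refine h2.congr' ?_
  filter_upwards [eventually_gt_atTop 0] with N hN
  have : (0:ℝ) < N := by exact_mod_cast hN
  simp only [Function.comp, hB, hS]
  rw [Real.exp_neg, Real.exp_log this, Nat.floor_natCast, div_eq_mul_inv]

end WI

end

section

open Filter Topology Set Complex

namespace LS

variable {E : Type*} [NormedAddCommGroup E] [NormedSpace ℝ E]
  [FiniteDimensional ℝ E] {L : Submodule ℤ E} [DiscreteTopology L]
  {ι : Type*} [Fintype ι] (b : Module.Basis ι ℤ L)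

/-- residue representative -/
noncomputable def rep (k : ℕ) (r : ι → Fin k) : L := ∑ i, ((r i : ℕ) : ℤ) • b i

/-- division with remainder in a lattice -/
noncomputable def dm (k : ℕ) [NeZero k] : L × (ι → Fin k) ≃ L :=
  ((Equiv.prodCongr b.equivFun.toEquiv (Equiv.refl _)).trans
    ((Equiv.arrowProdEquivProdArrow ι (fun _ => ℤ) (fun _ => Fin k)).symm.trans
      (Equiv.piCongrRight fun _ => (Int.divModEquiv k).symm))).trans b.equivFun.symm.toEquiv

lemma dm_apply (k : ℕ) [NeZero k] (y : L) (r : ι → Fin k) :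
    dm b k (y, r) = k • y + rep b k r := by
  apply b.equivFun.injective
  ext i
  have e : b.repr (rep b k r) i = (r i : ℕ) := by
    rw [rep, ← b.equivFun_symm_apply (fun i => ((r i : ℕ) : ℤ)), ← b.equivFun_apply, LinearEquiv.apply_symm_apply]
  simp only [dm, Equiv.trans_apply, LinearEquiv.coe_toEquiv, LinearEquiv.apply_symm_apply, map_add, Pi.add_apply]
  rw [b.equivFun_apply (rep b k r), e]
  simp [Int.divModEquiv, Equiv.arrowProdEquivProdArrow, Equiv.piCongrRight]
  ring

theorem continuation (b : Module.Basis ι ℤ L) (hn : 0 < Fintype.card ι) (F : ℂ → L → ℂ)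
    (hF0 : ∀ s, F s 0 = 0)
    (hhol : ∀ x, DifferentiableOn ℂ (fun s => F s x) {s | 0 < s.re})
    (hhom : ∀ (k : ℕ) (s : ℂ) (x : L), 0 < k → 0 < s.re →
      F s (k • x) = (k : ℂ) ^ (-(Fintype.card ι * s)) * F s x)
    (hbd : ∀ s : ℂ, 1 < s.re → ∃ C : ℝ, ∀ x : L, x ≠ 0 →
      ‖F s x‖ ≤ C * ‖x‖ ^ (-(Fintype.card ι * s.re)))
    (hdiff : ∀ σ T R : ℝ, 0 < σ → ∃ C : ℝ, ∀ s : ℂ, σ < s.re → ‖s‖ < T → ∀ x v : L, x ≠ 0 →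
      ‖v‖ ≤ R → ‖F s (x + v) - F s x‖ ≤ C * ‖x‖ ^ (-(Fintype.card ι * σ) - 1))
    (k : ℕ) (hk : 2 ≤ k) :
    ∃ D : ℂ → ℂ, DifferentiableOn ℂ D {s | 1 - 1 / (Fintype.card ι : ℝ) < s.re} ∧
      ∀ s : ℂ, 1 < s.re → Summable (F s) ∧
        (1 - (k : ℂ) ^ (Fintype.card ι * (1 - s))) * ∑' x, F s x = D s := by
  classical
  set n := Fintype.card ι with hn'
  have hnR : (1:ℝ) ≤ n := by exact_mod_cast hn
  have : NeZero k := ⟨by omega⟩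
  have hk0 : (0:ℝ) < k := by exact_mod_cast (by omega : 0 < k)
  have hrank : Module.finrank ℤ L = n := Module.finrank_eq_card_basis b
  have hsub : ∀ s : ℂ, 1 - 1 / (n : ℝ) < s.re → 0 < s.re := by
    intro s hs
    have : 1 / (n:ℝ) ≤ 1 := by rw [div_le_one (by linarith)]; exact hnR
    linarith
  set G : ℂ → L → ℂ := fun s y => ∑ r : ι → Fin k, (F s (k • y + rep b k r) - F s (k • y)) with hG
  have hGhol : ∀ y, DifferentiableOn ℂ (fun s => G s y) {s | 0 < s.re} := fun y =>
    DifferentiableOn.fun_sum fun r _ => (hhol _).sub (hhol _)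
  refine ⟨fun s => G s 0 + ∑' y : L, if y = 0 then 0 else G s y, ?_, ?_⟩
  · refine ((hGhol 0).mono hsub).add ?_
    intro s₀ hs₀
    have hs₀ : 1 - 1 / (n : ℝ) < s₀.re := hs₀
    have h0 := hsub s₀ hs₀
    obtain ⟨σ, hσ1, hσ2⟩ := exists_between hs₀
    have hσ0 : 0 < σ := hsub σ (by simpa using hσ1)
    set U : Set ℂ := {s | σ < s.re} ∩ {s | ‖s‖ < ‖s₀‖ + 1} with hU
    have hUo : IsOpen U := (isOpen_lt continuous_const continuous_re).inter
      (isOpen_lt continuous_norm continuous_const)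
    have hmem : s₀ ∈ U := ⟨hσ2, by simp⟩
    choose C hC using fun r => hdiff σ (‖s₀‖ + 1) ‖rep b k r‖ hσ0
    have hexp : -(n * σ) - 1 < -(n:ℝ) := by
      have : (n:ℝ) * (1 - 1 / n) < n * σ := mul_lt_mul_of_pos_left hσ1 (by linarith)
      rw [mul_sub, mul_one_div_cancel (by linarith)] at this
      linarith
    have hsum := ZLattice.summable_norm_rpow L (-(n * σ) - 1) (by rw [hrank]; exact hexp)
    have hkx : ∀ y : L, ‖k • y‖ = k * ‖y‖ := fun y => by
      change ‖((k • y : L) : E)‖ = k * ‖(y : E)‖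
      simp [← Nat.cast_smul_eq_nsmul ℝ, norm_smul]
    have := differentiableOn_tsum_of_summable_norm (F := fun (y : L) (s : ℂ) => if y = 0 then 0 else G s y)
      (U := U) (u := fun y : L => (∑ r, C r * (k:ℝ) ^ (-(n * σ) - 1)) * ‖y‖ ^ (-(n * σ) - 1))
      (hsum.mul_left _) ?_ hUo ?_
    · exact (this.differentiableAt (hUo.mem_nhds hmem)).differentiableWithinAt
    · intro y
      by_cases hy : y = 0
      · simp [hy]
      · simp only [hy, if_false]
        exact (hGhol y).mono fun s hs => hσ0.trans hs.1
    · intro y s hs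
      by_cases hy : y = 0
      · simp only [hy, if_true, norm_zero]
        rw [Real.zero_rpow (by have : 0 < n * σ := by positivity
                               linarith)]
        simp
      · simp only [hy, if_false, hG]
        refine (norm_sum_le _ _).trans ?_
        rw [Finset.sum_mul]
        refine Finset.sum_le_sum fun r _ => ?_
        refine (hC r s hs.1 hs.2 (k • y) (rep b k r) ?_ le_rfl).trans_eq ?_
        · have : ‖k • y‖ ≠ 0 := by
            rw [hkx]; exact mul_ne_zero hk0.ne' (norm_ne_zero_iff.mpr hy)
          exact norm_ne_zero_iff.mp this
        · rw [hkx, Real.mul_rpow hk0.le (norm_nonneg _), mul_assoc]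
  · intro s hs
    have hs0 : 0 < s.re := by linarith
    obtain ⟨C, hC⟩ := hbd s hs
    have hS : Summable (F s) := by
      have h1 := ZLattice.summable_norm_rpow L (-(n * s.re)) (by
        rw [hrank]; nlinarith)
      refine Summable.of_norm_bounded (h1.mul_left C) fun x => ?_
      by_cases hx : x = 0
      · rw [hx, hF0, norm_zero, norm_zero, Real.zero_rpow (by nlinarith)]; simp
      · exact hC x hx
    refine ⟨hS, ?_⟩
    have hS2 : Summable fun p : L × (ι → Fin k) => F s (dm b k p) := (dm b k).summable_iff.mpr hS
    have e1 : ∑' x, F s x = ∑' y, ∑ r, F s (k • y + rep b k r) := by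
      rw [← (dm b k).tsum_eq, hS2.tsum_prod]
      simp only [tsum_fintype, dm_apply]
    have hS3 : Summable fun y => ∑ r, F s (k • y + rep b k r) := by
      have := hS2.prod
      simpa only [tsum_fintype, dm_apply] using this
    have hS4 : Summable fun y => F s (k • y) := by
      have : (fun y => F s (k • y)) = fun y => (k : ℂ) ^ (-(n * s)) * F s y :=
        funext fun y => hhom k s y (by omega) hs0
      rw [this]; exact hS.mul_left _
    have e2 : (k : ℂ) ^ (n * (1 - s)) * ∑' x, F s x = ∑' y, ∑ r : ι → Fin k, F s (k • y) := by
      simp only [Finset.sum_const, Finset.card_univ, Fintype.card_pi, Fintype.card_fin, Finset.prod_const, nsmul_eq_mul]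
      rw [tsum_mul_left, ← tsum_mul_left, ← tsum_mul_left]
      refine tsum_congr fun y => ?_
      rw [hhom k s y (by omega) hs0, ← mul_assoc]
      congr 1
      have hkc : (k:ℂ) ≠ 0 := by exact_mod_cast (by omega : k ≠ 0)
      push_cast
      rw [show (Fintype.card ι : ℕ) = n from rfl, ← Complex.cpow_natCast, ← Complex.cpow_add _ _ hkc]
      congr 1; ring
    have hS5 : Summable fun y => ∑ r : ι → Fin k, F s (k • y) := by
      simp only [Finset.sum_const, nsmul_eq_mul]
      exact hS4.mul_left _
    have hGs : Summable (G s) := by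
      have := hS3.sub hS5
      simpa only [hG, Finset.sum_sub_distrib] using this
    rw [sub_mul, one_mul, e2, e1, ← hS3.tsum_sub hS5]
    simp only [← Finset.sum_sub_distrib]
    change ∑' y, G s y = _
    exact hGs.tsum_eq_add_tsum_ite 0

end LS

end

section

open Filter Topology Set Complex NumberField NumberField.InfinitePlace NumberField.mixedEmbedding
  NumberField.Units NumberField.Units.dirichletUnitTheorem NumberField.mixedEmbedding.fundamentalCone Module

namespace NF
open scoped Classical

variable {K : Type*} [Field K] [NumberField K]

lemma sum_mult_log (x : mixedSpace K) (hx : mixedEmbedding.norm x ≠ 0) :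
    ∑ w : InfinitePlace K, (mult w : ℝ) * Real.log (normAtPlace w x) = Real.log (mixedEmbedding.norm x) := by
  rw [mixedEmbedding.norm_apply, Real.log_prod]
  · refine Finset.sum_congr rfl fun w _ => ?_
    rw [Real.log_pow]
  · intro w _
    exact pow_ne_zero _ (mixedEmbedding.norm_ne_zero_iff.mp hx w)

lemma sum_mult : ∑ w : InfinitePlace K, (mult w : ℝ) = finrank ℚ K := by
  rw [← InfinitePlace.sum_mult_eq]; push_cast; rfl

lemma norm_ge_of_place (x : mixedSpace K) (t : ℝ) (ht : 0 ≤ t) (h : ∀ w, t ≤ normAtPlace w x) :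
    t ^ finrank ℚ K ≤ mixedEmbedding.norm x := by
  rw [mixedEmbedding.norm_apply, ← InfinitePlace.sum_mult_eq, ← Finset.prod_pow_eq_pow_sum]
  exact Finset.prod_le_prod (fun _ _ => by positivity) fun w _ => pow_le_pow_left₀ ht (h w) _

lemma place_le_norm (x : mixedSpace K) (w : InfinitePlace K) : normAtPlace w x ≤ ‖x‖ := by
  rw [norm_eq_sup'_normAtPlace]
  exact Finset.le_sup' (fun w => normAtPlace w x) (Finset.mem_univ w)

lemma support_bound (A : ℝ) : ∃ c : ℝ, 0 < c ∧ c ≤ 1 ∧ ∀ x : mixedSpace K, mixedEmbedding.norm x ≠ 0 →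
    ‖logMap x‖ ≤ A → ∀ w, c * ‖x‖ ≤ normAtPlace w x := by
  set n : ℝ := (finrank ℚ K : ℝ) with hn
  have hn0 : 0 < n := by rw [hn]; exact_mod_cast finrank_pos
  set A' := |A| + Fintype.card (InfinitePlace K) * |A| with hA'
  have hA0 : 0 ≤ A' := by positivity
  refine ⟨Real.exp (-(2 * A')), Real.exp_pos _, Real.exp_le_one_iff.mpr (by linarith), fun x hx hA w => ?_⟩
  set N := mixedEmbedding.norm x with hN
  have hpos : ∀ w, 0 < normAtPlace w x := fun w =>
    lt_of_le_of_ne (normAtPlace_nonneg w x) (mixedEmbedding.norm_ne_zero_iff.mp hx w).symm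
  set lam : InfinitePlace K → ℝ := fun w => Real.log (normAtPlace w x) - Real.log N * n⁻¹ with hlam
  have h1 : ∀ w, w ≠ w₀ → |(mult w : ℝ) * lam w| ≤ |A| := fun w hw => by
    have := (norm_le_pi_norm (logMap x) ⟨w, hw⟩).trans hA
    exact this.trans (le_abs_self A)
  have hm : ∀ w : InfinitePlace K, (1:ℝ) ≤ mult w := fun w => by exact_mod_cast mult_pos
  have hsum : ∑ w : InfinitePlace K, (mult w : ℝ) * lam w = 0 := by
    simp only [hlam, mul_sub, Finset.sum_sub_distrib]
    rw [sum_mult_log x hx, ← Finset.sum_mul, sum_mult]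
    field_simp; ring
  have h2 : ∀ w, |(mult w : ℝ) * lam w| ≤ A' := fun w => by
    by_cases hw : w = w₀
    · rw [hw]
      rw [← Finset.add_sum_erase _ _ (Finset.mem_univ (w₀ : InfinitePlace K))] at hsum
      rw [eq_neg_of_add_eq_zero_left hsum, abs_neg]
      refine (Finset.abs_sum_le_sum_abs _ _).trans ?_
      refine (Finset.sum_le_card_nsmul _ _ |A| fun w hw => h1 w (Finset.ne_of_mem_erase hw)).trans ?_
      rw [nsmul_eq_mul, hA']
      have : (((Finset.univ : Finset (InfinitePlace K)).erase w₀).card : ℝ) ≤ Fintype.card (InfinitePlace K) := by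
        exact_mod_cast Finset.card_le_univ _
      have := mul_le_mul_of_nonneg_right this (abs_nonneg A)
      linarith [abs_nonneg A]
    · refine (h1 w hw).trans ?_
      rw [hA']
      have : 0 ≤ Fintype.card (InfinitePlace K) * |A| := by positivity
      linarith
  have h3 : ∀ w, |lam w| ≤ A' := fun w => by
    refine le_trans ?_ (h2 w)
    rw [abs_mul, abs_of_nonneg (show (0:ℝ) ≤ (mult w : ℝ) by linarith [hm w])]
    exact le_mul_of_one_le_left (abs_nonneg _) (hm w)
  have h4 : ‖x‖ ≤ normAtPlace w x * Real.exp (2 * A') := by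
    rw [norm_eq_sup'_normAtPlace]
    refine Finset.sup'_le _ _ fun v _ => ?_
    rw [← Real.exp_log (hpos v), ← Real.exp_log (hpos w), ← Real.exp_add, Real.exp_le_exp]
    have a1 := abs_le.mp (h3 v)
    have a2 := abs_le.mp (h3 w)
    simp only [hlam] at a1 a2
    linarith [a1.2, a2.1]
  calc _ ≤ Real.exp (-(2 * A')) * (normAtPlace w x * Real.exp (2 * A')) := by gcongr
    _ = normAtPlace w x * (Real.exp (-(2 * A')) * Real.exp (2 * A')) := by ring
    _ = _ := by rw [← Real.exp_add]; simp

lemma abs_log_sub_le {a b t r : ℝ} (ht : 0 < t) (ha : t ≤ a) (hb : t ≤ b) (h : |a - b| ≤ r) :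
    |Real.log a - Real.log b| ≤ r / t := by
  have key : ∀ a b : ℝ, t ≤ a → t ≤ b → |a - b| ≤ r → Real.log a - Real.log b ≤ r / t := by
    intro a b ha hb h
    have hb0 : 0 < b := by linarith
    have ha0 : 0 < a := by linarith
    rw [← Real.log_div ha0.ne' hb0.ne']
    have h1 := Real.log_le_sub_one_of_pos (div_pos ha0 hb0)
    refine h1.trans ?_
    rw [show a / b - 1 = (a - b) / b by field_simp]
    have h2 : a - b ≤ r := (le_abs_self _).trans h
    have h3 : 0 ≤ r := (abs_nonneg _).trans h
    exact (div_le_div_of_nonneg_right h2 hb0.le).trans (div_le_div_of_nonneg_left h3 ht hb)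
  rw [abs_le]
  constructor
  · have := key b a hb ha (by rwa [abs_sub_comm])
    linarith
  · exact key a b ha hb h

lemma place_sub_le (x v : mixedSpace K) (w : InfinitePlace K) :
    |normAtPlace w (x + v) - normAtPlace w x| ≤ ‖v‖ := by
  have h1 := normAtPlace_add_le w x v
  have h2 := normAtPlace_add_le w (x + v) (-v)
  rw [add_neg_cancel_right, normAtPlace_neg] at h2
  have := place_le_norm v w
  rw [abs_le]; constructor <;> linarith

/-- the weighted norm power -/
noncomputable def F (φ : logSpace K → ℝ) (s : ℂ) (x : mixedSpace K) : ℂ :=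
  if mixedEmbedding.norm x = 0 then 0 else φ (logMap x) * (mixedEmbedding.norm x : ℂ) ^ (-s)

lemma logMap_sub_le (x y : mixedSpace K) (hx : mixedEmbedding.norm x ≠ 0) (hy : mixedEmbedding.norm y ≠ 0)
    (ε : ℝ) (hε : 0 ≤ ε) (h : ∀ w, |Real.log (normAtPlace w x) - Real.log (normAtPlace w y)| ≤ ε) :
    |Real.log (mixedEmbedding.norm x) - Real.log (mixedEmbedding.norm y)| ≤ finrank ℚ K * ε ∧
    ‖logMap x - logMap y‖ ≤ 4 * ε := by
  have hn0 : (0:ℝ) < finrank ℚ K := by exact_mod_cast finrank_pos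
  have h1 : |Real.log (mixedEmbedding.norm x) - Real.log (mixedEmbedding.norm y)| ≤ finrank ℚ K * ε := by
    rw [← sum_mult_log x hx, ← sum_mult_log y hy, ← Finset.sum_sub_distrib, ← sum_mult, Finset.sum_mul]
    refine (Finset.abs_sum_le_sum_abs _ _).trans (Finset.sum_le_sum fun w _ => ?_)
    rw [← mul_sub, abs_mul, abs_of_nonneg (by positivity)]
    exact mul_le_mul_of_nonneg_left (h w) (by positivity)
  refine ⟨h1, ?_⟩
  rw [pi_norm_le_iff_of_nonneg (by positivity)]
  intro w
  rw [Pi.sub_apply, logMap_apply, logMap_apply, ← mul_sub, Real.norm_eq_abs, abs_mul, abs_of_nonneg (by positivity)]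
  have hm : (mult w.val : ℝ) ≤ 2 := by
    rw [mult]; split_ifs <;> norm_num
  have h2 : |Real.log (normAtPlace w.val x) - Real.log (mixedEmbedding.norm x) * (finrank ℚ K : ℝ)⁻¹ -
    (Real.log (normAtPlace w.val y) - Real.log (mixedEmbedding.norm y) * (finrank ℚ K : ℝ)⁻¹)| ≤ 2 * ε := by
    have e : Real.log (normAtPlace w.val x) - Real.log (mixedEmbedding.norm x) * (finrank ℚ K : ℝ)⁻¹ -
      (Real.log (normAtPlace w.val y) - Real.log (mixedEmbedding.norm y) * (finrank ℚ K : ℝ)⁻¹) =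
      (Real.log (normAtPlace w.val x) - Real.log (normAtPlace w.val y)) -
      (Real.log (mixedEmbedding.norm x) - Real.log (mixedEmbedding.norm y)) * (finrank ℚ K : ℝ)⁻¹ := by ring
    rw [e]
    refine (abs_sub _ _).trans ?_
    rw [abs_mul, abs_of_nonneg (inv_nonneg.mpr hn0.le)]
    have h3 := mul_le_mul_of_nonneg_right h1 (inv_nonneg.mpr hn0.le)
    rw [mul_comm (finrank ℚ K : ℝ) ε, mul_assoc, mul_inv_cancel₀ hn0.ne', mul_one] at h3
    linarith [h w.val]
  calc _ ≤ 2 * (2 * ε) := mul_le_mul hm h2 (abs_nonneg _) (by norm_num)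
    _ = _ := by ring

end NF

end

section

open Filter Topology Set Complex NumberField NumberField.InfinitePlace NumberField.mixedEmbedding
  NumberField.Units NumberField.Units.dirichletUnitTheorem NumberField.mixedEmbedding.fundamentalCone Module

namespace NF
open scoped Classical

variable {K : Type*} [Field K] [NumberField K]

lemma norm_F_le (φ : logSpace K → ℝ) (h1 : ∀ a, |φ a| ≤ 1) (s : ℂ) (x : mixedSpace K)
    (hx : mixedEmbedding.norm x ≠ 0) :
    ‖F φ s x‖ ≤ (mixedEmbedding.norm x) ^ (-s.re) := by
  have hpos : 0 < mixedEmbedding.norm x := lt_of_le_of_ne (mixedEmbedding.norm_nonneg x) hx.symm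
  rw [F, if_neg hx, norm_mul, Complex.norm_cpow_eq_rpow_re_of_pos hpos, Complex.norm_real, Complex.neg_re]
  exact mul_le_of_le_one_left (by positivity) (h1 _)

lemma norm_F_le' (φ : logSpace K → ℝ) (h1 : ∀ a, |φ a| ≤ 1) (A : ℝ) (hA : ∀ a, φ a ≠ 0 → ‖a‖ ≤ A)
    (s : ℂ) (hs : 0 < s.re) : ∃ C : ℝ, ∀ x : mixedSpace K, mixedEmbedding.norm x ≠ 0 →
    ‖F φ s x‖ ≤ C * ‖x‖ ^ (-(finrank ℚ K * s.re)) := by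
  obtain ⟨c, hc0, -, hc⟩ := support_bound (K := K) A
  refine ⟨c ^ (-(finrank ℚ K * s.re)), fun x hx => ?_⟩
  have hx0 : 0 < ‖x‖ := norm_pos_iff.mpr fun h => hx (by rw [h]; simp)
  by_cases hφ : φ (logMap x) = 0
  · rw [F, if_neg hx, hφ]
    simp only [ofReal_zero, zero_mul, norm_zero]
    positivity
  · have h2 := norm_ge_of_place x (c * ‖x‖) (by positivity) (hc x hx (hA _ hφ))
    refine (norm_F_le φ h1 s x hx).trans ?_
    rw [← Real.mul_rpow hc0.le hx0.le, ← mul_neg, Real.rpow_mul (by positivity), Real.rpow_natCast]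
    exact Real.rpow_le_rpow_of_nonpos (by positivity) h2 (by linarith)

lemma norm_exp_sub_one_le' (z : ℂ) : ‖cexp z - 1‖ ≤ ‖z‖ * Real.exp ‖z‖ := by
  have := Complex.norm_exp_sub_sum_le_norm_mul_exp z 1
  simpa using this

set_option maxHeartbeats 1000000 in
lemma F_diff (φ : logSpace K → ℝ) (h1 : ∀ a, |φ a| ≤ 1) (A : ℝ) (hA : ∀ a, φ a ≠ 0 → ‖a‖ ≤ A)
    (B : ℝ) (hB : ∀ a b, |φ a - φ b| ≤ B * ‖a - b‖) (σ T R : ℝ) (hσ : 0 < σ) :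
    ∃ C : ℝ, ∀ s : ℂ, σ < s.re → ‖s‖ < T → ∀ x v : mixedSpace K,
      1 ≤ mixedEmbedding.norm x → (x + v = 0 ∨ 1 ≤ mixedEmbedding.norm (x + v)) → ‖v‖ ≤ R →
      ‖F φ s (x + v) - F φ s x‖ ≤ C * ‖x‖ ^ (-(finrank ℚ K * σ) - 1) := by
  obtain ⟨c, hc0, hc1, hc⟩ := support_bound (K := K) A
  set n : ℝ := (finrank ℚ K : ℝ) with hn
  have hn0 : 0 < n := by rw [hn]; exact_mod_cast finrank_pos
  set R' := |R| with hR'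
  set T' := |T| with hT'
  have hT0 : 0 ≤ T' := abs_nonneg _
  have hR0 : 0 ≤ R' := abs_nonneg _
  have hB0 : 0 ≤ |B| := abs_nonneg _
  set M := 4 * R' / c + 1 with hM
  have hM0 : 0 < M := by positivity
  have hMge : 1 ≤ M := by rw [hM]; have : 0 ≤ 4 * R' / c := by positivity
                          linarith
  have hMc : 4 * R' ≤ c * M := by
    rw [hM, mul_add, mul_div_cancel₀ _ hc0.ne']; linarith
  set c4 := c / 4 with hc4
  have hc40 : 0 < c4 := by positivity
  set K1 := R' / c4 with hK1
  have hK10 : 0 ≤ K1 := by positivity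
  set C1 := (|B| * (4 * K1) + T' * (n * K1) * Real.exp (T' * (n * K1))) * c4 ^ (-(n * σ)) with hC1
  have hC10 : 0 ≤ C1 := by positivity
  set C2 := 2 * M ^ (n * σ + 1) with hC2
  have hC20 : 0 ≤ C2 := by positivity
  refine ⟨C1 + C2, fun s hs hsT x v hx hy hv => ?_⟩
  have hv : ‖v‖ ≤ R' := hv.trans (le_abs_self _)
  have hsT : ‖s‖ ≤ T' := hsT.le.trans (le_abs_self _)
  have hs0 : 0 < s.re := hσ.trans hs
  have hxn : mixedEmbedding.norm x ≠ 0 := by linarith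
  have hx0 : 0 < ‖x‖ := norm_pos_iff.mpr fun h => hxn (by rw [h]; simp)
  have hle1 : ∀ y : mixedSpace K, (y = 0 ∨ 1 ≤ mixedEmbedding.norm y) → ‖F φ s y‖ ≤ 1 := by
    intro y hy
    rcases hy with h | h
    · rw [h, F]; simp
    · exact (norm_F_le φ h1 s y (by linarith)).trans (Real.rpow_le_one_of_one_le_of_nonpos h (by linarith))
  have hX0 : 0 ≤ ‖x‖ ^ (-(n * σ) - 1) := by positivity
  rcases le_or_gt ‖x‖ M with hxM | hxM
  · have h2 : ‖F φ s (x + v) - F φ s x‖ ≤ 2 := by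
      refine (norm_sub_le _ _).trans ?_
      linarith [hle1 _ hy, hle1 x (Or.inr hx)]
    refine h2.trans ?_
    have h3 : M ^ (-(n * σ) - 1) ≤ ‖x‖ ^ (-(n * σ) - 1) :=
      Real.rpow_le_rpow_of_nonpos hx0 hxM (by have : 0 < n * σ := by positivity
                                              linarith)
    have h4 : C2 * M ^ (-(n * σ) - 1) = 2 := by
      rw [hC2, mul_assoc, ← Real.rpow_add hM0]; ring_nf; simp
    have h5 := mul_le_mul_of_nonneg_left h3 hC20
    have h6 : 0 ≤ C1 * ‖x‖ ^ (-(n * σ) - 1) := by positivity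
    linarith
  · have hcx : 4 * R' ≤ c * ‖x‖ := hMc.trans (by gcongr)
    have hxR : R' * 4 ≤ ‖x‖ := by linarith [mul_le_of_le_one_left hx0.le hc1]
    have hy0 : ‖x‖ - R' ≤ ‖x + v‖ := by
      have := norm_sub_le (x + v) v
      rw [add_sub_cancel_right] at this
      linarith
    have hyne : x + v ≠ 0 := fun h => by
      rw [h, norm_zero] at hy0; linarith
    have hyn : 1 ≤ mixedEmbedding.norm (x + v) := hy.resolve_left hyne
    have hyn0 : mixedEmbedding.norm (x + v) ≠ 0 := by linarith
    by_cases hφ : φ (logMap x) = 0 ∧ φ (logMap (x + v)) = 0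
    · rw [F, F, if_neg hyn0, if_neg hxn, hφ.1, hφ.2]
      simp only [ofReal_zero, zero_mul, sub_zero, norm_zero]
      positivity
    have hpl : ∀ w, c4 * ‖x‖ ≤ normAtPlace w x ∧ c4 * ‖x‖ ≤ normAtPlace w (x + v) := by
      intro w
      have h2 := abs_le.mp (place_sub_le x v w)
      rw [hc4]
      by_cases hφ1 : φ (logMap x) = 0
      · have hφ2 : φ (logMap (x + v)) ≠ 0 := fun h => hφ ⟨hφ1, h⟩
        have h3 := hc _ hyn0 (hA _ hφ2) w
        have h4 : c * (‖x‖ - R') ≤ c * ‖x + v‖ := by gcongr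
        have h5 : c * R' ≤ R' := mul_le_of_le_one_left hR0 hc1
        constructor <;> linarith
      · have h3 := hc _ hxn (hA _ hφ1) w
        constructor <;> linarith
    set ε := K1 / ‖x‖ with hε
    have hε0 : 0 ≤ ε := by positivity
    have hεK : ε ≤ K1 := div_le_self hK10 (by linarith)
    have hlog : ∀ w, |Real.log (normAtPlace w (x + v)) - Real.log (normAtPlace w x)| ≤ ε := by
      intro w
      have := abs_log_sub_le (by positivity) (hpl w).2 (hpl w).1 ((place_sub_le x v w).trans hv)
      rw [hε, hK1, div_div]; exact this
    obtain ⟨g1, g2⟩ := logMap_sub_le _ _ hyn0 hxn ε hε0 hlog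
    have hNx : (mixedEmbedding.norm x) ^ (-s.re) ≤ c4 ^ (-(n * σ)) * ‖x‖ ^ (-(n * σ)) := by
      have h2 := norm_ge_of_place x (c4 * ‖x‖) (by positivity) (fun w => (hpl w).1)
      calc _ ≤ (mixedEmbedding.norm x) ^ (-σ) := Real.rpow_le_rpow_of_exponent_le hx (by linarith)
        _ ≤ _ := by
          rw [← Real.mul_rpow hc40.le hx0.le, ← mul_neg, Real.rpow_mul (by positivity), Real.rpow_natCast]
          exact Real.rpow_le_rpow_of_nonpos (by positivity) h2 (by linarith)
    set a := Real.log (mixedEmbedding.norm x) with ha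
    set b := Real.log (mixedEmbedding.norm (x + v)) with hb
    have hpx : (mixedEmbedding.norm x : ℂ) ^ (-s) = cexp (-s * a) := by
      rw [Complex.cpow_def_of_ne_zero (by exact_mod_cast hxn), ← Complex.ofReal_log (by linarith), mul_comm]
    have hpy : (mixedEmbedding.norm (x + v) : ℂ) ^ (-s) = cexp (-s * a) * cexp (-s * (b - a : ℝ)) := by
      rw [Complex.cpow_def_of_ne_zero (by exact_mod_cast hyn0), ← Complex.ofReal_log (by linarith), ← Complex.exp_add]
      congr 1; push_cast; ring
    have hnx : ‖cexp (-s * a)‖ = (mixedEmbedding.norm x) ^ (-s.re) := by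
      rw [← hpx, Complex.norm_cpow_eq_rpow_re_of_pos (by linarith), Complex.neg_re]
    have hz : ‖-s * ((b - a : ℝ) : ℂ)‖ ≤ T' * (n * ε) := by
      rw [norm_mul, norm_neg, Complex.norm_real, Real.norm_eq_abs]
      exact mul_le_mul hsT g1 (abs_nonneg _) hT0
    have hz2 : T' * (n * ε) ≤ T' * (n * K1) := by gcongr
    have he : ‖cexp (-s * (b - a : ℝ)) - 1‖ ≤ T' * (n * ε) * Real.exp (T' * (n * K1)) :=
      (norm_exp_sub_one_le' _).trans (mul_le_mul hz (Real.exp_le_exp.mpr (hz.trans hz2)) (Real.exp_nonneg _) (by positivity))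
    have hsplit : F φ s (x + v) - F φ s x = cexp (-s * a) *
        (φ (logMap (x + v)) * (cexp (-s * (b - a : ℝ)) - 1) + ((φ (logMap (x + v)) - φ (logMap x) : ℝ) : ℂ)) := by
      rw [F, F, if_neg hyn0, if_neg hxn, hpx, hpy]; push_cast; ring
    have hφd : |φ (logMap (x + v)) - φ (logMap x)| ≤ |B| * (4 * ε) :=
      (hB _ _).trans (mul_le_mul (le_abs_self B) g2 (norm_nonneg _) hB0)
    have hin : ‖(φ (logMap (x + v)) * (cexp (-s * (b - a : ℝ)) - 1) + ((φ (logMap (x + v)) - φ (logMap x) : ℝ) : ℂ))‖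
        ≤ T' * (n * ε) * Real.exp (T' * (n * K1)) + |B| * (4 * ε) := by
      refine (norm_add_le _ _).trans (add_le_add ?_ ?_)
      · rw [norm_mul, Complex.norm_real]
        exact (mul_le_of_le_one_left (norm_nonneg _) (h1 _)).trans he
      · rw [Complex.norm_real]; exact hφd
    rw [hsplit, norm_mul, hnx]
    calc _ ≤ (c4 ^ (-(n * σ)) * ‖x‖ ^ (-(n * σ))) * (T' * (n * ε) * Real.exp (T' * (n * K1)) + |B| * (4 * ε)) :=
          mul_le_mul hNx hin (norm_nonneg _) (by positivity)
      _ = C1 * ‖x‖ ^ (-(n * σ) - 1) := by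
          rw [Real.rpow_sub_one hx0.ne', hC1, hε]; field_simp; ring
      _ ≤ _ := by
        have : 0 ≤ C2 * ‖x‖ ^ (-(n * σ) - 1) := by positivity
        linarith

end NF

end

section

open Filter Topology Set Module

namespace PU

/-- hat function -/
noncomputable def hat (t : ℝ) : ℝ := max 0 (1 - |t|)

lemma hat_nonneg (t : ℝ) : 0 ≤ hat t := le_max_left _ _
lemma hat_le_one (t : ℝ) : hat t ≤ 1 := max_le zero_le_one (by linarith [abs_nonneg t])
lemma hat_eq_zero {t : ℝ} (h : 1 ≤ |t|) : hat t = 0 := max_eq_left (by linarith)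
lemma hat_ne {t : ℝ} (h : hat t ≠ 0) : |t| < 1 := by
  by_contra h'
  exact h (hat_eq_zero (not_lt.mp h'))
lemma hat_lip (a b : ℝ) : |hat a - hat b| ≤ |a - b| := by
  have h1 := abs_max_sub_max_le_abs (1 - |a|) (1 - |b|) 0
  rw [max_comm, max_comm (1 - |b|)] at h1
  refine h1.trans ?_
  rw [show 1 - |a| - (1 - |b|) = |b| - |a| by ring]
  rw [abs_sub_comm a b]
  exact abs_abs_sub_abs_le_abs_sub b a

/-- the two relevant translates -/
noncomputable def S (t : ℝ) : Finset ℤ := {-⌊t⌋, -⌊t⌋ - 1}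

lemma hat_sum (t : ℝ) : ∑ c ∈ S t, hat (t + c) = 1 := by
  rw [S, Finset.sum_pair (by omega)]
  push_cast
  have h1 := Int.floor_le t
  have h2 := Int.lt_floor_add_one t
  rw [hat, hat, abs_of_nonneg (by linarith), abs_of_nonpos (by linarith), max_eq_right (by linarith), max_eq_right (by linarith)]
  ring

lemma hat_notMem {t : ℝ} {c : ℤ} (h : c ∉ S t) : hat (t + c) = 0 := by
  by_contra h'
  have h3 := abs_lt.mp (hat_ne h')
  apply h
  have h1 := Int.floor_le t
  have h2 := Int.lt_floor_add_one t
  have h4 : ⌊t⌋ + c < 1 := by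
    have : ((⌊t⌋ + c : ℤ) : ℝ) < 1 := by push_cast; linarith [h3.2]
    exact_mod_cast this
  have h5 : -2 < ⌊t⌋ + c := by
    have : (-2 : ℝ) < ((⌊t⌋ + c : ℤ) : ℝ) := by push_cast; linarith [h3.1]
    exact_mod_cast this
  simp only [S, Finset.mem_insert, Finset.mem_singleton]
  omega

lemma prod_lip {ι : Type*} (s : Finset ι) (a b : ι → ℝ) (ha : ∀ i, 0 ≤ a i ∧ a i ≤ 1) (hb : ∀ i, 0 ≤ b i ∧ b i ≤ 1) :
    |∏ i ∈ s, a i - ∏ i ∈ s, b i| ≤ ∑ i ∈ s, |a i - b i| := by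
  classical
  induction s using Finset.induction_on with
  | empty => simp
  | insert j s hj ih =>
    rw [Finset.prod_insert hj, Finset.prod_insert hj, Finset.sum_insert hj]
    have e : a j * ∏ i ∈ s, a i - b j * ∏ i ∈ s, b i =
      (a j - b j) * ∏ i ∈ s, a i + b j * (∏ i ∈ s, a i - ∏ i ∈ s, b i) := by ring
    rw [e]
    refine (abs_add_le _ _).trans (add_le_add ?_ ?_)
    · rw [abs_mul]
      refine mul_le_of_le_one_right (abs_nonneg _) ?_
      rw [abs_of_nonneg (Finset.prod_nonneg fun i _ => (ha i).1)]
      exact Finset.prod_le_one (fun i _ => (ha i).1) (fun i _ => (ha i).2)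
    · rw [abs_mul, abs_of_nonneg (hb j).1]
      exact (mul_le_of_le_one_left (abs_nonneg _) (hb j).2).trans ih

theorem exists_partition {E : Type*} [NormedAddCommGroup E] [NormedSpace ℝ E] [FiniteDimensional ℝ E]
    (L : Submodule ℤ E) [DiscreteTopology L] [IsZLattice ℝ L] {ι : Type*} [Fintype ι] (b : Basis ι ℤ L) :
    ∃ (φ : E → ℝ) (A B : ℝ), (∀ a, 0 ≤ φ a) ∧ (∀ a, |φ a| ≤ 1) ∧ (∀ a, φ a ≠ 0 → ‖a‖ ≤ A) ∧
      (∀ a b, |φ a - φ b| ≤ B * ‖a - b‖) ∧ ∀ x : E, HasSum (fun u : L => φ (u + x)) 1 := by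
  classical
  set b' : Basis ι ℝ E := b.ofZLatticeBasis ℝ L with hb'
  set e : E →L[ℝ] (ι → ℝ) := LinearMap.toContinuousLinearMap b'.equivFun.toLinearMap with he
  have he' : ∀ x i, e x i = b'.repr x i := fun x i => rfl
  refine ⟨fun x => ∏ i, hat (e x i), ∑ i, ‖b' i‖, Fintype.card ι * ‖e‖, fun a => Finset.prod_nonneg fun i _ => hat_nonneg _,
    ?_, ?_, ?_, ?_⟩
  · intro a
    rw [abs_of_nonneg (Finset.prod_nonneg fun i _ => hat_nonneg _)]
    exact Finset.prod_le_one (fun i _ => hat_nonneg _) fun i _ => hat_le_one _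
  · intro a ha
    rw [Finset.prod_ne_zero_iff] at ha
    rw [← b'.sum_repr a]
    refine (norm_sum_le _ _).trans (Finset.sum_le_sum fun i _ => ?_)
    rw [norm_smul]
    exact mul_le_of_le_one_left (norm_nonneg _) (hat_ne (ha i (Finset.mem_univ i))).le
  · intro x y
    refine (prod_lip _ _ _ (fun i => ⟨hat_nonneg _, hat_le_one _⟩) (fun i => ⟨hat_nonneg _, hat_le_one _⟩)).trans ?_
    refine (Finset.sum_le_card_nsmul _ _ (‖e‖ * ‖x - y‖) fun i _ => ?_).trans_eq ?_
    · refine (hat_lip _ _).trans ?_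
      rw [← Pi.sub_apply, ← map_sub]
      exact (norm_le_pi_norm (e (x - y)) i).trans (e.le_opNorm _)
    · rw [nsmul_eq_mul, Finset.card_univ]; ring
  · intro x
    have h1 : HasSum (fun c : ι → ℤ => ∏ i, hat (e x i + c i)) 1 := by
      have : ∑ c ∈ Fintype.piFinset (fun i => S (e x i)), ∏ i, hat (e x i + c i) = 1 := by
        rw [← Finset.prod_univ_sum (fun i => S (e x i)) (fun i c => hat (e x i + c))]
        exact Finset.prod_eq_one fun i _ => hat_sum _
      rw [← this]
      refine hasSum_sum_of_ne_finset_zero fun c hc => ?_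
      rw [Fintype.mem_piFinset] at hc
      push Not at hc
      obtain ⟨i, hi⟩ := hc
      exact Finset.prod_eq_zero (Finset.mem_univ i) (hat_notMem hi)
    rw [← b.equivFun.toEquiv.hasSum_iff] at h1
    convert h1 using 1
    ext u
    refine Finset.prod_congr rfl fun i _ => ?_
    congr 1
    rw [map_add, Pi.add_apply, add_comm]
    congr 1
    rw [he', hb', b.ofZLatticeBasis_repr_apply ℝ L u i]
    rfl

end PU

end

section

open Filter Topology Set Complex NumberField NumberField.InfinitePlace NumberField.mixedEmbedding
  NumberField.Units NumberField.Units.dirichletUnitTheorem NumberField.mixedEmbedding.fundamentalCone Module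
open scoped nonZeroDivisors

namespace NF
open scoped Classical

variable {K : Type*} [Field K] [NumberField K]

lemma hasSum_units (φ : logSpace K → ℝ) (h0 : ∀ a, 0 ≤ φ a)
    (h : ∀ x : logSpace K, HasSum (fun u : unitLattice K => φ (u + x)) 1)
    (x : mixedSpace K) (hx : mixedEmbedding.norm x ≠ 0) :
    HasSum (fun u : (𝓞 K)ˣ => φ (logMap (u • x))) (torsionOrder K) := by
  have hmk : ∀ (t : torsion K) (c : (𝓞 K)ˣ ⧸ torsion K),
      (QuotientGroup.mk ((Quotient.out c) * (t : (𝓞 K)ˣ)) : (𝓞 K)ˣ ⧸ torsion K) = c := by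
    intro t c
    rw [QuotientGroup.mk_mul_of_mem _ t.2]
    exact Quotient.out_eq c
  let f : (torsion K) × ((𝓞 K)ˣ ⧸ torsion K) → (𝓞 K)ˣ := fun p => (Quotient.out p.2) * (p.1 : (𝓞 K)ˣ)
  have hf : Function.Bijective f := by
    constructor
    · rintro ⟨t, c⟩ ⟨t', c'⟩ hh
      have hc : c = c' := by rw [← hmk t c, ← hmk t' c']; exact congrArg _ hh
      subst hc
      have : (t : (𝓞 K)ˣ) = t' := mul_left_cancel hh
      rw [Subtype.ext this]
    · intro u
      have hm : (Quotient.out (QuotientGroup.mk u : (𝓞 K)ˣ ⧸ torsion K))⁻¹ * u ∈ torsion K := by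
        rw [← QuotientGroup.eq]; exact Quotient.out_eq _
      exact ⟨(⟨_, hm⟩, QuotientGroup.mk u), by simp [f]⟩
  let e := Equiv.ofBijective f hf
  have hlog : ∀ u : (𝓞 K)ˣ, (logEmbeddingEquiv K (Additive.ofMul (QuotientGroup.mk u)) : logSpace K)
      = logEmbedding K (Additive.ofMul u) := fun u => logEmbeddingEquiv_apply K u
  have h1 : HasSum (fun c : ((𝓞 K)ˣ ⧸ torsion K) =>
      φ ((logEmbeddingEquiv K (Additive.ofMul c) : logSpace K) + logMap x)) 1 :=
    ((Additive.ofMul.trans (logEmbeddingEquiv K).toEquiv).hasSum_iff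
      (f := fun u : unitLattice K => φ (u + logMap x))).mpr (h (logMap x))
  have : Fintype (torsion K) := Fintype.ofFinite _
  have h2 : HasSum (fun t : torsion K => (1:ℝ)) (torsionOrder K) := by
    have := hasSum_fintype (fun t : torsion K => (1:ℝ))
    simpa [torsionOrder, Nat.card_eq_fintype_card] using this
  have h3 := h2.mul h1 (h2.summable.mul_of_nonneg h1.summable (fun _ => zero_le_one) (fun _ => h0 _))
  rw [mul_one] at h3
  rw [← e.hasSum_iff]
  refine h3.congr_fun ?_
  rintro ⟨t, c⟩
  simp only [Function.comp, one_mul]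
  rw [logMap_unit_smul _ hx, ← hlog]
  congr 4
  exact (hmk t c)

/-- the lattice sum continuation for an ideal -/
lemma exists_lattice_continuation (φ : logSpace K → ℝ) (A B : ℝ) (h1 : ∀ a, |φ a| ≤ 1)
    (hA : ∀ a, φ a ≠ 0 → ‖a‖ ≤ A) (hB : ∀ a b, |φ a - φ b| ≤ B * ‖a - b‖)
    (J : (Ideal (𝓞 K))⁰) (k : ℕ) (hk : 2 ≤ k) :
    ∃ D : ℂ → ℂ, DifferentiableOn ℂ D {s | 1 - 1 / (finrank ℚ K : ℝ) < s.re} ∧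
      ∀ s : ℂ, 1 < s.re →
        Summable (fun x : idealLattice K (FractionalIdeal.mk0 K J) => F φ s (x : mixedSpace K)) ∧
        (1 - (k : ℂ) ^ ((finrank ℚ K : ℂ) * (1 - s))) *
          ∑' x : idealLattice K (FractionalIdeal.mk0 K J), F φ s (x : mixedSpace K) = D s := by
  set L := idealLattice K (FractionalIdeal.mk0 K J) with hL
  have hrank : finrank ℤ L = finrank ℚ K := by
    rw [ZLattice.rank ℝ L, mixedEmbedding.finrank]
  let b : Basis (Fin (finrank ℚ K)) ℤ L := Module.finBasisOfFinrankEq ℤ L hrank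
  have hintg : ∀ x ∈ L, x = 0 ∨ 1 ≤ mixedEmbedding.norm x := by
    intro x hx
    obtain ⟨y, hy, rfl⟩ := (mem_idealLattice K _).mp hx
    rw [FractionalIdeal.coe_mk0] at hy
    obtain ⟨z, hz, rfl⟩ := (FractionalIdeal.mem_coeIdeal _).mp hy
    by_cases hz0 : z = 0
    · left; simp [hz0]
    right
    rw [mixedEmbedding.norm_eq_norm]
    have : Algebra.norm ℚ (algebraMap (𝓞 K) K z) = ((Algebra.norm ℤ z : ℤ) : ℚ) := 
      (Algebra.coe_norm_int z).symm
    rw [this, ← Int.cast_abs, Rat.cast_intCast]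
    exact_mod_cast Int.one_le_abs (Algebra.norm_ne_zero_iff.mpr hz0)
  have key := LS.continuation (L := L) b (by simpa using finrank_pos) (fun s x => F φ s (x : mixedSpace K))
    ?_ ?_ ?_ ?_ ?_ k hk
  · simpa using key
  · intro s; simp [F]
  · intro x
    unfold F
    split_ifs with h
    · exact differentiableOn_const _
    · intro s hs
      have h' : (mixedEmbedding.norm (x : mixedSpace K) : ℂ) ≠ 0 := by exact_mod_cast h
      apply DifferentiableAt.differentiableWithinAt
      exact (((differentiable_id.neg).const_cpow (Or.inl h')).const_mul _).differentiableAt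
  · intro k s x hk hs
    have hk' : (k:ℝ) ≠ 0 := by exact_mod_cast hk.ne'
    have : ((k • x : L) : mixedSpace K) = (k:ℝ) • (x : mixedSpace K) := by
      push_cast
      rw [Nat.cast_smul_eq_nsmul]
    simp only [this]
    unfold F
    rw [mixedEmbedding.norm_smul]
    by_cases h : mixedEmbedding.norm (x : mixedSpace K) = 0
    · simp [h]
    have h2 : |(k:ℝ)| ^ finrank ℚ K * mixedEmbedding.norm (x : mixedSpace K) ≠ 0 := by
      simp [h, hk.ne']
    rw [if_neg h, if_neg h2, logMap_real_smul h hk']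
    rw [Complex.ofReal_mul, Complex.mul_cpow_ofReal_nonneg (by positivity) (mixedEmbedding.norm_nonneg _)]
    rw [Nat.abs_cast]
    push_cast
    rw [Fintype.card_fin, ← Complex.natCast_cpow_natCast_mul]
    rw [mul_neg]
    ring
  · intro s hs
    obtain ⟨C, hC⟩ := norm_F_le' φ h1 A hA s (by linarith)
    refine ⟨C, fun x hx => ?_⟩
    rw [Fintype.card_fin]
    refine hC _ ?_
    rcases hintg x x.2 with h | h
    · exact absurd (Subtype.ext h) hx
    · linarith
  · intro σ T R hσ
    obtain ⟨C, hC⟩ := F_diff φ h1 A hA B hB σ T R hσ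
    refine ⟨C, fun s hs hT x v hx hv => ?_⟩
    rw [Fintype.card_fin]
    refine hC s hs hT _ _ ?_ ?_ hv
    · rcases hintg x x.2 with h | h
      · exact absurd (Subtype.ext h) hx
      · exact h
    · exact hintg _ (x + v).2

end NF

end

section

open Filter Topology Set Complex NumberField NumberField.InfinitePlace NumberField.mixedEmbedding
  NumberField.Units NumberField.Units.dirichletUnitTheorem NumberField.mixedEmbedding.fundamentalCone Module
open scoped nonZeroDivisors

namespace NF
open scoped Classical

variable {K : Type*} [Field K] [NumberField K]

lemma exists_gen (C : ClassGroup (𝓞 K)) (J : (Ideal (𝓞 K))⁰) (hJ : ClassGroup.mk0 J = C⁻¹)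
    (I : {I : (Ideal (𝓞 K))⁰ // ClassGroup.mk0 I = C}) :
    ∃ g : 𝓞 K, g ≠ 0 ∧ Ideal.span {g} = (J : Ideal (𝓞 K)) * (I.1 : Ideal (𝓞 K)) := by
  have h : ClassGroup.mk0 (J * I.1) = 1 := by rw [map_mul, hJ, I.2]; simp
  rw [ClassGroup.mk0_eq_one_iff (J * I.1).2] at h
  obtain ⟨g, hg⟩ := h.principal
  have hg' : ((J * I.1 : (Ideal (𝓞 K))⁰) : Ideal (𝓞 K)) = Ideal.span {g} := hg
  refine ⟨g, ?_, by rw [← hg']; rfl⟩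
  rintro rfl
  apply nonZeroDivisors.coe_ne_zero (J * I.1)
  rw [hg']; simp

lemma gen_mem (J I : Ideal (𝓞 K)) (g : 𝓞 K) (hg : Ideal.span {g} = J * I) : g ∈ J := by
  have h1 : g ∈ Ideal.span {g} := Ideal.mem_span_singleton_self _
  have h2 : J * I ≤ J := Ideal.mul_le_left
  rw [hg] at h1
  exact h2 h1

set_option maxHeartbeats 1000000 in
lemma hasSum_class (φ : logSpace K → ℝ) (h0 : ∀ a, 0 ≤ φ a)
    (h : ∀ x : logSpace K, HasSum (fun u : unitLattice K => φ (u + x)) 1)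
    (C : ClassGroup (𝓞 K)) (J : (Ideal (𝓞 K))⁰) (hJ : ClassGroup.mk0 J = C⁻¹) (s : ℂ)
    (hs : Summable (fun x : idealLattice K (FractionalIdeal.mk0 K J) => F φ s (x : mixedSpace K))) :
    HasSum (fun I : {I : (Ideal (𝓞 K))⁰ // ClassGroup.mk0 I = C} =>
      (torsionOrder K : ℂ) * (Ideal.absNorm (J : Ideal (𝓞 K)) : ℂ) ^ (-s) *
        (Ideal.absNorm (I.1 : Ideal (𝓞 K)) : ℂ) ^ (-s))
      (∑' x : idealLattice K (FractionalIdeal.mk0 K J), F φ s (x : mixedSpace K)) := by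
  choose g hg0 hg using exists_gen C J hJ
  have hmem : ∀ I (u : (𝓞 K)ˣ), mixedEmbedding K (((u : 𝓞 K) * g I : 𝓞 K) : K) ∈
      idealLattice K (FractionalIdeal.mk0 K J) := by
    intro I u
    refine (mem_idealLattice K _).mpr ⟨_, ?_, rfl⟩
    rw [FractionalIdeal.coe_mk0]
    refine (FractionalIdeal.mem_coeIdeal _).mpr ⟨_, ?_, rfl⟩
    exact Ideal.mul_mem_left _ _ (gen_mem J.1 I.1.1 (g I) (hg I))
  let e : {I : (Ideal (𝓞 K))⁰ // ClassGroup.mk0 I = C} × (𝓞 K)ˣ →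
      idealLattice K (FractionalIdeal.mk0 K J) := fun p => ⟨_, hmem p.1 p.2⟩
  have hspan : ∀ I (u : (𝓞 K)ˣ), Ideal.span {(u : 𝓞 K) * g I} =
      (J : Ideal (𝓞 K)) * (I.1 : Ideal (𝓞 K)) := by
    intro I u
    rw [← hg, Ideal.span_singleton_mul_left_unit u.isUnit]
  have hJ0 : (J : Ideal (𝓞 K)) ≠ 0 := nonZeroDivisors.coe_ne_zero J
  have hinj : Function.Injective e := by
    rintro ⟨I, u⟩ ⟨I', u'⟩ hh
    have h1 : (u : 𝓞 K) * g I = u' * g I' := by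
      have := congrArg Subtype.val hh
      exact RingOfIntegers.coe_injective (mixedEmbedding_injective K this)
    have h2 : I = I' := by
      have := hspan I u
      rw [h1, hspan I' u'] at this
      exact (Subtype.ext (Subtype.ext (mul_left_cancel₀ hJ0 this))).symm
    subst h2
    have h3 := mul_right_cancel₀ (hg0 I) h1
    rw [Units.ext h3]
  have hrange : ∀ x ∉ Set.range e, F φ s (x : mixedSpace K) = 0 := by
    intro x hx
    obtain ⟨y, hy, hyx⟩ := (mem_idealLattice K _).mp x.2
    rw [FractionalIdeal.coe_mk0] at hy
    obtain ⟨z, hz, rfl⟩ := (FractionalIdeal.mem_coeIdeal _).mp hy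
    by_cases hz0 : z = 0
    · simp [← hyx, hz0, F]
    exfalso
    apply hx
    have hdvd : (J : Ideal (𝓞 K)) ∣ Ideal.span {z} := by
      rw [Ideal.dvd_span_singleton]; exact hz
    obtain ⟨I, hI⟩ := hdvd
    have hI0 : I ≠ 0 := by
      rintro rfl
      rw [mul_zero] at hI
      exact hz0 (by simpa using hI)
    let I' : (Ideal (𝓞 K))⁰ := ⟨I, mem_nonZeroDivisors_of_ne_zero hI0⟩
    have hIC : ClassGroup.mk0 I' = C := by
      have : ClassGroup.mk0 (J * I') = 1 := by
        rw [ClassGroup.mk0_eq_one_iff (J * I').2]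
        exact ⟨⟨z, by exact hI.symm⟩⟩
      rw [map_mul, hJ] at this
      exact (inv_mul_eq_one.mp this).symm
    have hass : Associated (g ⟨I', hIC⟩) z := by
      rw [← Ideal.span_singleton_eq_span_singleton, hg, hI]
    obtain ⟨u, hu⟩ := hass
    refine ⟨(⟨I', hIC⟩, u), Subtype.ext ?_⟩
    simp only [e]
    rw [← hyx, mul_comm, hu]
  have hsum := (hinj.hasSum_iff (f := fun x : idealLattice K (FractionalIdeal.mk0 K J) =>
    F φ s (x : mixedSpace K)) hrange).mpr hs.hasSum
  refine hsum.prod_fiberwise fun I => ?_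
  have hn0 : mixedEmbedding.norm (mixedEmbedding K (g I : K)) ≠ 0 := by
    rw [mixedEmbedding.norm_eq_norm]
    simp [hg0 I]
  have key := (Complex.hasSum_ofReal.mpr (hasSum_units φ h0 h _ hn0)).mul_right
    ((Ideal.absNorm (J : Ideal (𝓞 K)) : ℂ) ^ (-s) *
        (Ideal.absNorm (I.1 : Ideal (𝓞 K)) : ℂ) ^ (-s))
  push_cast at key
  rw [← mul_assoc] at key
  refine key.congr_fun fun u => ?_
  have hsm : ((e (I, u)) : mixedSpace K) = u • mixedEmbedding K (g I : K) := by
    simp [e, unitSMul_smul]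
  have hnorm : mixedEmbedding.norm (mixedEmbedding K (g I : K)) =
      (Ideal.absNorm (J : Ideal (𝓞 K)) : ℝ) * (Ideal.absNorm (I.1 : Ideal (𝓞 K)) : ℝ) := by
    rw [mixedEmbedding.norm_eq_norm, ← Algebra.coe_norm_int, ← Int.cast_abs, Rat.cast_intCast,
      Int.abs_eq_natAbs, ← Ideal.absNorm_span_singleton, hg, map_mul]
    push_cast; rfl
  simp only [Function.comp, hsm]
  unfold F
  rw [norm_unit_smul, if_neg hn0, hnorm, Complex.ofReal_mul,
    Complex.mul_cpow_ofReal_nonneg (by positivity) (by positivity)]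
  push_cast
  rfl

variable (K) in
theorem exists_zeta_continuation (k : ℕ) (hk : 2 ≤ k) :
    ∃ D : ℂ → ℂ, DifferentiableOn ℂ D {s | 1 - 1 / (finrank ℚ K : ℝ) < s.re} ∧
      ∀ s : ℂ, 1 < s.re →
        Summable (fun I : (Ideal (𝓞 K))⁰ => (Ideal.absNorm (I : Ideal (𝓞 K)) : ℂ) ^ (-s)) ∧
        (1 - (k : ℂ) ^ ((finrank ℚ K : ℂ) * (1 - s))) *
          ∑' I : (Ideal (𝓞 K))⁰, (Ideal.absNorm (I : Ideal (𝓞 K)) : ℂ) ^ (-s) = D s := by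
  obtain ⟨φ, A, B, h0, h1, hA, hB, hφ⟩ := PU.exists_partition (unitLattice K) (basisUnitLattice K)
  choose J hJ using fun C : ClassGroup (𝓞 K) => ClassGroup.mk0_surjective C⁻¹
  choose D hD hD' using fun C => exists_lattice_continuation φ A B h1 hA hB (J C) k hk
  have hN0 : ∀ C, (Ideal.absNorm (J C : Ideal (𝓞 K)) : ℂ) ≠ 0 := fun C => by
    exact_mod_cast Ideal.absNorm_ne_zero_of_nonZeroDivisors (J C)
  refine ⟨fun s => ∑ C, (torsionOrder K : ℂ)⁻¹ * (Ideal.absNorm (J C : Ideal (𝓞 K)) : ℂ) ^ s * D C s, ?_, ?_⟩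
  · refine DifferentiableOn.fun_sum fun C _ => DifferentiableOn.mul ?_ (hD C)
    exact ((differentiable_id.const_cpow (Or.inl (hN0 C))).const_mul _).differentiableOn
  · intro s hs
    have hC : ∀ C, HasSum (fun I : {I : (Ideal (𝓞 K))⁰ // ClassGroup.mk0 I = C} =>
        (Ideal.absNorm (I.1 : Ideal (𝓞 K)) : ℂ) ^ (-s))
        ((torsionOrder K : ℂ)⁻¹ * (Ideal.absNorm (J C : Ideal (𝓞 K)) : ℂ) ^ s *
          ∑' x : idealLattice K (FractionalIdeal.mk0 K (J C)), F φ s (x : mixedSpace K)) := by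
      intro C
      have := (hasSum_class φ h0 hφ C (J C) (hJ C) s (hD' C s hs).1).mul_left
        ((torsionOrder K : ℂ)⁻¹ * (Ideal.absNorm (J C : Ideal (𝓞 K)) : ℂ) ^ s)
      refine this.congr_fun fun I => ?_
      have ht : (torsionOrder K : ℂ) ≠ 0 := by exact_mod_cast torsionOrder_ne_zero K
      have hc : (Ideal.absNorm (J C : Ideal (𝓞 K)) : ℂ) ^ s ≠ 0 := by
        rw [Complex.cpow_ne_zero_iff]; exact Or.inl (hN0 C)
      rw [Complex.cpow_neg (Ideal.absNorm (J C : Ideal (𝓞 K)) : ℂ)]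
      field_simp
    have hsum : HasSum (fun I : (Ideal (𝓞 K))⁰ => (Ideal.absNorm (I : Ideal (𝓞 K)) : ℂ) ^ (-s))
        (∑ C, ((torsionOrder K : ℂ)⁻¹ * (Ideal.absNorm (J C : Ideal (𝓞 K)) : ℂ) ^ s *
          ∑' x : idealLattice K (FractionalIdeal.mk0 K (J C)), F φ s (x : mixedSpace K))) := by
      have h2 := hasSum_sum (s := Finset.univ) fun C _ =>
        (hasSum_subtype_iff_indicator (f := fun I : (Ideal (𝓞 K))⁰ =>
          (Ideal.absNorm (I : Ideal (𝓞 K)) : ℂ) ^ (-s)) (s := {I | ClassGroup.mk0 I = C})).mp (hC C)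
      refine h2.congr_fun fun I => ?_
      rw [Finset.sum_eq_single (ClassGroup.mk0 I)]
      · simp
      · intro C _ hCI
        exact Set.indicator_of_notMem (fun h => hCI h.symm) _
      · simp
    refine ⟨hsum.summable, ?_⟩
    rw [hsum.tsum_eq, Finset.mul_sum]
    refine Finset.sum_congr rfl fun C _ => ?_
    rw [← (hD' C s hs).2]
    ring

end NF

end

section

open Filter Topology Set Complex NumberField Module
open scoped nonZeroDivisors

namespace NF

variable (K : Type*) [Field K] [NumberField K]

/-- Dedekind zeta as a sum over ideals -/
noncomputable def zI (s : ℂ) : ℂ := ∑' I : (Ideal (𝓞 K))⁰, (Ideal.absNorm (I : Ideal (𝓞 K)) : ℂ) ^ (-s)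

lemma hasSum_group {X : Type*} (N : X → ℕ) (hfin : ∀ n, Finite {x // N x = n}) (c : X → ℂ) (h : ℕ → ℂ)
    (hN : ∀ x, N x ≠ 0) (S : ℂ)
    (H : HasSum (fun x => c x * h (N x)) S) :
    HasSum (fun n => if n = 0 then 0 else (∑' x : {x // N x = n}, c x) * h n) S := by
  rw [← (Equiv.sigmaFiberEquiv N).hasSum_iff] at H
  refine H.sigma fun n => ?_
  have := hfin n
  have := Fintype.ofFinite {x // N x = n}
  have h1 : HasSum (fun x : {x // N x = n} => c x) (∑' x : {x // N x = n}, c x) :=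
    (hasSum_fintype _).summable.hasSum
  split_ifs with h0
  · subst h0
    have : IsEmpty {x // N x = 0} := ⟨fun x => hN x.1 x.2⟩
    exact hasSum_empty
  · refine (h1.mul_right (h n)).congr_fun fun x => ?_
    simp [Equiv.sigmaFiberEquiv, x.2]

lemma finite_norm (n : ℕ) : Finite {I : (Ideal (𝓞 K))⁰ // Ideal.absNorm (I : Ideal (𝓞 K)) = n} := by
  have := (Ideal.finite_setOfPred_absNorm_eq (S := 𝓞 K) n)
  have : Finite {I : Ideal (𝓞 K) // Ideal.absNorm I = n} := this
  refine Finite.of_injective (β := {I : Ideal (𝓞 K) // Ideal.absNorm I = n}) (fun x => ⟨x.1.1, x.2⟩) ?_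
  intro x y h
  simp only [Subtype.mk.injEq] at h
  exact Subtype.ext (Subtype.ext h)

/-- the number of ideals of norm n -/
noncomputable def aK (n : ℕ) : ℂ := Nat.card {I : Ideal (𝓞 K) // Ideal.absNorm I = n}

lemma aK_eq {n : ℕ} (hn : n ≠ 0) :
    aK K n = ∑' x : {I : (Ideal (𝓞 K))⁰ // Ideal.absNorm (I : Ideal (𝓞 K)) = n}, (1 : ℂ) := by
  have := finite_norm K n
  have := Fintype.ofFinite {I : (Ideal (𝓞 K))⁰ // Ideal.absNorm (I : Ideal (𝓞 K)) = n}
  rw [tsum_fintype, Finset.sum_const, nsmul_one, Finset.card_univ, ← Nat.card_eq_fintype_card, aK]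
  congr 1
  refine Nat.card_congr ⟨fun I => ⟨⟨I.1, ?_⟩, I.2⟩, fun I => ⟨I.1.1, I.2⟩, fun I => rfl, fun I => rfl⟩
  apply mem_nonZeroDivisors_of_ne_zero
  intro h
  apply hn
  rw [← I.2, h]; simp

lemma zI_group (h : ℕ → ℂ) (S : ℂ)
    (H : HasSum (fun I : (Ideal (𝓞 K))⁰ => h (Ideal.absNorm (I : Ideal (𝓞 K)))) S) :
    HasSum (fun n => if n = 0 then 0 else aK K n * h n) S := by
  have := hasSum_group (fun I : (Ideal (𝓞 K))⁰ => Ideal.absNorm (I : Ideal (𝓞 K))) (finite_norm K)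
    (fun _ => 1) h (fun I => Ideal.absNorm_ne_zero_of_nonZeroDivisors I) S (by simpa using H)
  refine this.congr_fun fun n => ?_
  split_ifs with hn
  · rfl
  · rw [aK_eq K hn]

lemma summable_zI {s : ℂ} (hs : 1 < s.re) :
    Summable (fun I : (Ideal (𝓞 K))⁰ => (Ideal.absNorm (I : Ideal (𝓞 K)) : ℂ) ^ (-s)) := by
  obtain ⟨D, -, hD⟩ := exists_zeta_continuation K 2 le_rfl
  exact (hD s hs).1

lemma hasSum_aK {s : ℂ} (hs : 1 < s.re) : HasSum (LSeries.term (aK K) s) (zI K s) := by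
  refine (zI_group K (fun n => (n:ℂ) ^ (-s)) _ (summable_zI K hs).hasSum).congr_fun fun n => ?_
  rw [LSeries.term_def]
  split_ifs
  · rfl
  · rw [Complex.cpow_neg, div_eq_mul_inv]

lemma LSeriesSummable_aK {s : ℂ} (hs : 1 < s.re) : LSeriesSummable (aK K) s := (hasSum_aK K hs).summable

lemma zI_eq_LSeries {s : ℂ} (hs : 1 < s.re) : zI K s = LSeries (aK K) s := (hasSum_aK K hs).tsum_eq.symm

lemma tendsto_zI : Tendsto (fun s : ℝ => ((s:ℂ) - 1) * zI K s) (𝓝[>] 1) (𝓝 (dedekindZeta_residue K)) := by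
  refine (tendsto_sub_one_mul_dedekindZeta_nhdsGT K).congr' ?_
  filter_upwards [self_mem_nhdsWithin] with s hs
  rw [zI_eq_LSeries K (by simpa using hs)]
  rfl

lemma pow_rel {a b : ℤ} (ha : a ≠ 0) (h : (a:ℝ) * Real.log 3 = b * Real.log 2) : False := by
  have h2 : Real.log 2 ≠ 0 := (Real.log_pos (by norm_num)).ne'
  have h3 : Real.log 3 ≠ 0 := (Real.log_pos (by norm_num)).ne'
  have h4 : ((a.natAbs : ℕ):ℝ) * Real.log 3 = (b.natAbs : ℕ) * Real.log 2 := by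
    have := congrArg abs h
    rw [abs_mul, abs_mul, abs_of_pos (Real.log_pos (by norm_num : (1:ℝ) < 3)),
      abs_of_pos (Real.log_pos (by norm_num : (1:ℝ) < 2))] at this
    rw [Nat.cast_natAbs, Nat.cast_natAbs]
    push_cast
    exact this
  rw [← Real.log_pow, ← Real.log_pow] at h4
  have h5 := Real.log_injOn_pos (by simp) (by simp) h4
  have h6 : 3 ^ a.natAbs = 2 ^ b.natAbs := by exact_mod_cast h5
  have hc : Nat.Coprime (3 ^ a.natAbs) (2 ^ b.natAbs) := Nat.Coprime.pow _ _ (by norm_num)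
  rw [← h6, Nat.coprime_self] at hc
  have h7 : 1 < 3 ^ a.natAbs := Nat.one_lt_pow (by simpa using ha) (by norm_num)
  omega

/-- the factor -/
noncomputable def uu (n k : ℕ) (s : ℂ) : ℂ := 1 - (k:ℂ) ^ ((n:ℂ) * (1 - s))

lemma uu_hasDeriv (n k : ℕ) (hk : 2 ≤ k) (s : ℂ) :
    HasDerivAt (uu n k) (n * Complex.log k * (k:ℂ) ^ ((n:ℂ) * (1 - s))) s := by
  have hk0 : (k:ℂ) ≠ 0 := by exact_mod_cast (by omega : k ≠ 0)
  have h1 : HasDerivAt (fun s : ℂ => (n:ℂ) * (1 - s)) ((n:ℂ) * (-1)) s :=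
    ((hasDerivAt_id s).const_sub 1).const_mul _
  have := (h1.const_cpow (c := (k:ℂ)) (Or.inl hk0)).const_sub 1
  refine this.congr_deriv ?_
  ring

/-- the desingularised factor -/
noncomputable def vv (n k : ℕ) : ℂ → ℂ := dslope (uu n k) 1

lemma vv_diff (n k : ℕ) (hk : 2 ≤ k) : Differentiable ℂ (vv n k) := by
  rw [← differentiableOn_univ, vv, Complex.differentiableOn_dslope univ_mem, differentiableOn_univ]
  exact fun s => (uu_hasDeriv n k hk s).differentiableAt

lemma vv_mul (n k : ℕ) (s : ℂ) : (s - 1) * vv n k s = uu n k s := by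
  have := sub_smul_dslope (uu n k) 1 s
  simpa [uu, vv] using this

lemma vv_one (n k : ℕ) (hn : 0 < n) (hk : 2 ≤ k) : vv n k 1 ≠ 0 := by
  rw [vv, dslope_same, (uu_hasDeriv n k hk 1).deriv]
  have h1 : (n:ℂ) ≠ 0 := by exact_mod_cast hn.ne'
  have h2 : Complex.log k ≠ 0 := by
    rw [← Complex.natCast_log]
    exact_mod_cast (Real.log_pos (by exact_mod_cast (by omega : 1 < k))).ne'
  simp only [sub_self, mul_zero, Complex.cpow_zero, mul_one]
  exact mul_ne_zero h1 h2

lemma vv_no_common (n : ℕ) (hn : 0 < n) (s : ℂ) (h2 : vv n 2 s = 0) : vv n 3 s ≠ 0 := by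
  intro h3
  have hs : s ≠ 1 := by rintro rfl; exact vv_one n 2 hn le_rfl h2
  have hn' : (n:ℂ) ≠ 0 := by exact_mod_cast hn.ne'
  have e2 := vv_mul n 2 s
  have e3 := vv_mul n 3 s
  rw [h2, mul_zero, uu] at e2
  rw [h3, mul_zero, uu] at e3
  set w := (n:ℂ) * (1 - s) with hw
  have hw0 : w ≠ 0 := mul_ne_zero hn' (sub_ne_zero.mpr hs.symm)
  have e2' : Complex.exp (Complex.log (2:ℕ) * w) = 1 := by
    rw [← Complex.cpow_def_of_ne_zero (by norm_num)]; exact (sub_eq_zero.mp e2.symm).symm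
  have e3' : Complex.exp (Complex.log (3:ℕ) * w) = 1 := by
    rw [← Complex.cpow_def_of_ne_zero (by norm_num)]; exact (sub_eq_zero.mp e3.symm).symm
  obtain ⟨a, ha⟩ := Complex.exp_eq_one_iff.mp e2'
  obtain ⟨b, hb⟩ := Complex.exp_eq_one_iff.mp e3'
  rw [← Complex.natCast_log] at ha hb
  have hl2 : ((Real.log (2:ℕ) : ℝ) : ℂ) ≠ 0 := by
    exact_mod_cast (Real.log_pos (by norm_num)).ne'
  have ha0 : a ≠ 0 := by
    rintro rfl
    simp only [Int.cast_zero, zero_mul, mul_eq_zero] at ha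
    exact ha.elim hl2 hw0
  have hrel : (a:ℂ) * (Real.log (3:ℕ) : ℝ) = b * (Real.log (2:ℕ) : ℝ) := by
    have h := congrArg (· * ((Real.log (3:ℕ) : ℝ) : ℂ)) ha
    have h' := congrArg (· * ((Real.log (2:ℕ) : ℝ) : ℂ)) hb
    have hpi : (2 * (Real.pi:ℂ) * I) ≠ 0 := Complex.two_pi_I_ne_zero
    apply mul_right_cancel₀ hpi
    linear_combination h' - h
  refine pow_rel ha0 (b := b) ?_
  exact_mod_cast hrel

theorem exists_H : ∃ H : ℂ → ℂ, DifferentiableOn ℂ H {s | 1 - 1 / (finrank ℚ K : ℝ) < s.re} ∧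
    (∀ s : ℂ, 1 < s.re → H s = (s - 1) * zI K s) ∧ H 1 ≠ 0 := by
  obtain ⟨D2, hD2, hz2⟩ := exists_zeta_continuation K 2 le_rfl
  obtain ⟨D3, hD3, hz3⟩ := exists_zeta_continuation K 3 (by norm_num)
  set n := finrank ℚ K with hn
  have hn0 : 0 < n := finrank_pos
  set Ω : Set ℂ := {s | 1 - 1 / (n : ℝ) < s.re} with hΩ
  have hΩo : IsOpen Ω := isOpen_lt continuous_const Complex.continuous_re
  have hn1 : (0:ℝ) < 1 / n := by positivity
  have hsub : ∀ s : ℂ, 1 ≤ s.re → s ∈ Ω := fun s hs => by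
    simp only [hΩ, mem_ofPred_eq]; linarith
  have hrel : EqOn (fun s => D2 s * vv n 3 s) (fun s => D3 s * vv n 2 s) Ω := by
    have hconv : IsPreconnected Ω := (convex_halfSpace_re_gt _).isPreconnected
    refine AnalyticOnNhd.eqOn_of_preconnected_of_eventuallyEq (z₀ := 2)
      ((hD2.mul (vv_diff n 3 (by norm_num)).differentiableOn).analyticOnNhd hΩo)
      ((hD3.mul (vv_diff n 2 le_rfl).differentiableOn).analyticOnNhd hΩo) hconv
      (hsub 2 (by norm_num)) ?_
    have : {s : ℂ | 1 < s.re} ∈ 𝓝 (2:ℂ) :=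
      (isOpen_lt continuous_const Complex.continuous_re).mem_nhds (by norm_num)
    filter_upwards [this] with s hs
    rw [← (hz2 s hs).2, ← (hz3 s hs).2]
    have e2 := vv_mul n 2 s
    have e3 := vv_mul n 3 s
    rw [uu] at e2 e3
    rw [← e2, ← e3]
    ring
  let H : ℂ → ℂ := fun s => if vv n 2 s ≠ 0 then D2 s / vv n 2 s else D3 s / vv n 3 s
  have hHz : ∀ s : ℂ, 1 < s.re → H s = (s - 1) * zI K s := by
    intro s hs
    have e2 := vv_mul n 2 s
    have e3 := vv_mul n 3 s
    rw [uu] at e2 e3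
    simp only [H]
    split_ifs with h
    · rw [div_eq_iff h, ← (hz2 s hs).2, ← e2, zI]; ring
    · rw [div_eq_iff (vv_no_common n hn0 s (not_not.mp h)), ← (hz3 s hs).2, ← e3, zI]; ring
  have hHd : DifferentiableOn ℂ H Ω := by
    intro s hs
    apply DifferentiableAt.differentiableWithinAt
    by_cases h : vv n 2 s = 0
    · have h3 := vv_no_common n hn0 s h
      have : H =ᶠ[𝓝 s] fun s => D3 s / vv n 3 s := by
        have c3 := (vv_diff n 3 (by norm_num)).continuous.continuousAt.eventually_ne h3
        filter_upwards [hΩo.mem_nhds hs, c3] with t ht h3t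
        simp only [H]
        split_ifs with h2t
        · rw [div_eq_div_iff h2t h3t]; exact hrel ht
        · rfl
      refine DifferentiableAt.congr_of_eventuallyEq ?_ this
      exact (hD3.differentiableAt (hΩo.mem_nhds hs)).div (vv_diff n 3 (by norm_num)).differentiableAt h3
    · have : H =ᶠ[𝓝 s] fun s => D2 s / vv n 2 s := by
        have c3 := (vv_diff n 2 le_rfl).continuous.continuousAt.eventually_ne h
        filter_upwards [c3] with t h3t
        simp only [H, if_pos h3t]
      refine DifferentiableAt.congr_of_eventuallyEq ?_ this
      exact (hD2.differentiableAt (hΩo.mem_nhds hs)).div (vv_diff n 2 le_rfl).differentiableAt h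
  refine ⟨H, hHd, hHz, ?_⟩
  have hc : ContinuousAt H 1 :=
    (hHd.differentiableAt (hΩo.mem_nhds (hsub 1 (by simp)))).continuousAt
  have ht : Tendsto (fun s : ℝ => H s) (𝓝[>] 1) (𝓝 (H 1)) := by
    have : Tendsto (fun s : ℝ => (s:ℂ)) (𝓝[>] 1) (𝓝 1) :=
      (Complex.continuous_ofReal.tendsto' 1 1 (by simp)).mono_left nhdsWithin_le_nhds
    exact hc.tendsto.comp this
  have := tendsto_nhds_unique (ht.congr' ?_) (tendsto_zI K)
  · rw [this]; exact_mod_cast dedekindZeta_residue_ne_zero K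
  · filter_upwards [self_mem_nhdsWithin] with s hs
    exact hHz s (by simpa using hs)

end NF

end

section

open Filter Topology Set Complex NumberField Module IsDedekindDomain
open scoped nonZeroDivisors

namespace NF

variable (K : Type*) [Field K] [NumberField K]

/-- prime powers -/
abbrev WW := HeightOneSpectrum (𝓞 K) × ℕ

variable {K}

/-- norm of prime -/
noncomputable def NP (P : HeightOneSpectrum (𝓞 K)) : ℕ := Ideal.absNorm P.asIdeal

lemma NP_gt (P : HeightOneSpectrum (𝓞 K)) : 1 < NP P := by
  have h0 : NP P ≠ 0 := by
    rw [NP, Ne, Ideal.absNorm_eq_zero_iff]; exact P.ne_bot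
  have h1 : NP P ≠ 1 := by
    rw [NP, Ne, Ideal.absNorm_eq_one_iff]; exact P.isPrime.ne_top
  omega

/-- the ideal -/
noncomputable def wI (w : WW K) : (Ideal (𝓞 K))⁰ :=
  ⟨w.1.asIdeal ^ (w.2 + 1), mem_nonZeroDivisors_of_ne_zero (pow_ne_zero _ w.1.ne_bot)⟩

lemma wI_coe (w : WW K) : (wI w : Ideal (𝓞 K)) = w.1.asIdeal ^ (w.2 + 1) := rfl

/-- norm -/
noncomputable def wN (w : WW K) : ℕ := Ideal.absNorm (wI w : Ideal (𝓞 K))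

lemma wN_eq (w : WW K) : wN w = NP w.1 ^ (w.2 + 1) := by
  rw [wN, wI_coe, map_pow, NP]

lemma prime_P (P : HeightOneSpectrum (𝓞 K)) : Prime P.asIdeal := P.prime

lemma dvd_iff (P Q : HeightOneSpectrum (𝓞 K)) : P.asIdeal ∣ Q.asIdeal ↔ P = Q := by
  constructor
  · intro h
    have := (associated_iff_eq.mp ((prime_P P).associated_of_dvd (prime_P Q) h))
    exact HeightOneSpectrum.ext this
  · rintro rfl; rfl

lemma wI_inj : Function.Injective (wI (K := K)) := by
  rintro ⟨P, k⟩ ⟨Q, l⟩ h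
  have h' : P.asIdeal ^ (k+1) = Q.asIdeal ^ (l+1) := congrArg Subtype.val h
  have hPQ : P = Q := by
    rw [← dvd_iff]
    apply (prime_P P).dvd_of_dvd_pow (n := l+1)
    rw [← h']
    exact dvd_pow_self _ (by omega)
  subst hPQ
  have hN : NP P ^ (k+1) = NP P ^ (l+1) := by
    have := congrArg Ideal.absNorm h'
    simpa [NP] using this
  have := Nat.pow_right_injective (NP_gt P) hN
  simp only [Prod.mk.injEq, true_and]
  omega

open scoped Classical in
lemma hasSum_dvd (J : Ideal (𝓞 K)) (hJ : J ≠ 0) :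
    HasSum (fun w : WW K => if (wI w : Ideal (𝓞 K)) ∣ J then Real.log (NP w.1) else 0)
      (Real.log (Ideal.absNorm J)) := by
  induction J using UniqueFactorizationMonoid.induction_on_prime with
  | h₁ => exact absurd rfl hJ
  | h₂ x hx =>
    have hx1 : x = 1 := by simpa using hx
    subst hx1
    simp only [map_one, Nat.cast_one, Real.log_one]
    refine hasSum_zero.congr_fun fun w => ?_
    rw [if_neg]
    intro h
    rw [wI_coe] at h
    have := (dvd_pow_self w.1.asIdeal (by omega : w.2 + 1 ≠ 0)).trans h
    exact (prime_P w.1).not_isUnit (isUnit_of_dvd_one this)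
  | h₃ J Q hJ0 hQ ih =>
    let Q' : HeightOneSpectrum (𝓞 K) := ⟨Q, Ideal.isPrime_of_prime hQ, hQ.ne_zero⟩
    have hfin : FiniteMultiplicity Q J := FiniteMultiplicity.of_prime_left hQ hJ0
    have h1 := (ih hJ0).add (hasSum_ite_eq ((Q', multiplicity Q J) : WW K) (Real.log (NP Q')))
    have hlog : Real.log (Ideal.absNorm (Q * J)) = Real.log (Ideal.absNorm J) + Real.log (NP Q') := by
      rw [map_mul, Nat.cast_mul, Real.log_mul, add_comm]
      · rfl
      · have := NP_gt Q'
        have h2 : Ideal.absNorm Q ≠ 0 := by change NP Q' ≠ 0; omega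
        exact_mod_cast h2
      · have : Ideal.absNorm J ≠ 0 := by rwa [Ne, Ideal.absNorm_eq_zero_iff]
        exact_mod_cast this
    rw [hlog]
    refine h1.congr_fun ?_
    rintro ⟨P, k⟩
    simp only [wI_coe, Prod.mk.injEq]
    by_cases hP : P = Q'
    · subst hP
      change (if Q ^ (k+1) ∣ Q * J then _ else _) = (if Q ^ (k+1) ∣ J then _ else _) + _
      have e1 : Q ^ (k+1) ∣ Q * J ↔ Q ^ k ∣ J := by
        rw [pow_succ', mul_dvd_mul_iff_left hQ.ne_zero]
      rw [e1, hfin.pow_dvd_iff_le_multiplicity, hfin.pow_dvd_iff_le_multiplicity]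
      by_cases h1 : k < multiplicity Q J
      · simp [h1.le, Nat.succ_le_of_lt h1, h1.ne]
      · by_cases h2 : k = multiplicity Q J
        · simp [h2]
        · have h3 : ¬ k ≤ multiplicity Q J := by omega
          have h4 : ¬ k + 1 ≤ multiplicity Q J := by omega
          simp [h3, h4, h2]
    · have e1 : P.asIdeal ^ (k+1) ∣ Q * J ↔ P.asIdeal ^ (k+1) ∣ J := by
        have hnd : ¬ P.asIdeal ∣ Q := fun h => hP ((dvd_iff P Q').mp h)
        constructor
        · exact fun h => (prime_P P).pow_dvd_of_dvd_mul_left _ hnd h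
        · exact fun h => h.mul_left _
      by_cases h7 : P.asIdeal ^ (k+1) ∣ J
      · simp [e1.mpr h7, h7, hP]
      · simp [mt e1.mp h7, h7, hP]

lemma absNorm_pos' (J : (Ideal (𝓞 K))⁰) : 1 ≤ Ideal.absNorm (J : Ideal (𝓞 K)) :=
  Nat.one_le_iff_ne_zero.mpr (Ideal.absNorm_ne_zero_of_nonZeroDivisors J)

lemma summable_log {s : ℂ} (hs : 1 < s.re) :
    Summable (fun J : (Ideal (𝓞 K))⁰ => (Real.log (Ideal.absNorm (J : Ideal (𝓞 K))) : ℂ) *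
      (Ideal.absNorm (J : Ideal (𝓞 K)) : ℂ) ^ (-s)) := by
  set ε := (s.re - 1) / 2 with hε
  have hε0 : 0 < ε := by rw [hε]; linarith
  have h1 := (summable_zI K (s := s - (ε:ℂ)) (by simp [hε]; linarith)).norm
  refine Summable.of_norm_bounded (h1.mul_left (1/ε)) fun J => ?_
  have hN := absNorm_pos' J
  have hN' : (0:ℝ) < Ideal.absNorm (J : Ideal (𝓞 K)) := by exact_mod_cast hN
  rw [norm_mul, Complex.norm_natCast_cpow_of_pos hN, Complex.norm_natCast_cpow_of_pos hN]
  rw [Complex.norm_real, Real.norm_eq_abs, abs_of_nonneg (Real.log_nonneg (by exact_mod_cast hN))]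
  have := Real.log_le_rpow_div hN'.le hε0
  calc _ ≤ _ := mul_le_mul_of_nonneg_right this (by positivity)
    _ = _ := by
      rw [show (-(s - (ε:ℂ))).re = ε + (-s).re by simp; ring, Real.rpow_add hN']
      ring

lemma summable_W {s : ℂ} (hs : 1 < s.re) :
    Summable (fun w : WW K => (Real.log (NP w.1) : ℂ) * (wN w : ℂ) ^ (-s)) := by
  refine Summable.of_norm_bounded ((summable_log (K := K) hs).norm.comp_injective wI_inj) fun w => ?_
  simp only [Function.comp, norm_mul]
  refine mul_le_mul_of_nonneg_right ?_ (norm_nonneg _)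
  rw [Complex.norm_real, Complex.norm_real]
  have h1 := NP_gt w.1
  have h2 : NP w.1 ≤ wN w := by
    rw [wN_eq]; exact Nat.le_self_pow (by omega) _
  have h1' : (1:ℝ) < NP w.1 := by exact_mod_cast h1
  have h2' : (NP w.1 : ℝ) ≤ wN w := by exact_mod_cast h2
  rw [Real.norm_eq_abs, abs_of_pos (Real.log_pos h1')]
  exact (Real.log_le_log (by linarith) h2').trans (le_abs_self _)

/-- sum over W -/
noncomputable def LW (K : Type*) [Field K] [NumberField K] (s : ℂ) : ℂ :=
  ∑' w : WW K, (Real.log (NP w.1) : ℂ) * (wN w : ℂ) ^ (-s)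

lemma mul_aux {X Y : Type*} (f : X → ℂ) (g : Y → ℂ) (hf : Summable f) (hg : Summable g) :
    HasSum (fun p : X × Y => f p.1 * g p.2) ((∑' x, f x) * ∑' y, g y) :=
  hf.hasSum.mul hg.hasSum (summable_mul_of_summable_norm hf.norm hg.norm)

open scoped Classical in
lemma LW_mul_zI {s : ℂ} (hs : 1 < s.re) :
    LW K s * zI K s = ∑' J : (Ideal (𝓞 K))⁰, (Real.log (Ideal.absNorm (J : Ideal (𝓞 K))) : ℂ) *
      (Ideal.absNorm (J : Ideal (𝓞 K)) : ℂ) ^ (-s) := by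
  have h1 := mul_aux _ _ (summable_W (K := K) hs) (summable_zI K hs)
  rw [← (Equiv.sigmaFiberEquiv (fun p : WW K × (Ideal (𝓞 K))⁰ => wI p.1 * p.2)).hasSum_iff] at h1
  refine (HasSum.tsum_eq (h1.sigma fun J => ?_)).symm
  have h2 := hasSum_dvd (J : Ideal (𝓞 K)) (nonZeroDivisors.coe_ne_zero J)
  have h3 : HasSum (fun p : {p : WW K × (Ideal (𝓞 K))⁰ // wI p.1 * p.2 = J} => Real.log (NP p.1.1.1))
      (Real.log (Ideal.absNorm (J : Ideal (𝓞 K)))) := by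
    have hinj : Function.Injective
        (fun p : {p : WW K × (Ideal (𝓞 K))⁰ // wI p.1 * p.2 = J} => p.1.1) := by
      rintro ⟨⟨w, I⟩, h⟩ ⟨⟨w', I'⟩, h'⟩ hh
      simp only at hh h h'
      subst hh
      have : I = I' := by
        have h5 := congrArg Subtype.val (h.trans h'.symm)
        exact Subtype.ext (mul_left_cancel₀ (nonZeroDivisors.coe_ne_zero (wI w)) h5)
      subst this
      rfl
    refine ((hinj.hasSum_iff ?_).mpr h2).congr_fun ?_
    · intro w hw
      rw [if_neg]
      rintro ⟨I, hI⟩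
      apply hw
      have hI0 : I ≠ 0 := by
        rintro rfl
        rw [mul_zero] at hI
        exact nonZeroDivisors.coe_ne_zero J hI
      exact ⟨⟨(w, ⟨I, mem_nonZeroDivisors_of_ne_zero hI0⟩), Subtype.ext hI.symm⟩, rfl⟩
    · rintro ⟨⟨w, I⟩, h⟩
      simp only [Function.comp]
      rw [if_pos]
      exact ⟨I, (congrArg Subtype.val h).symm⟩
  refine ((Complex.hasSum_ofReal.mpr h3).mul_right _).congr_fun ?_
  rintro ⟨⟨w, I⟩, h⟩
  simp only [Function.comp, Equiv.sigmaFiberEquiv, Equiv.coe_fn_mk]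
  simp only at h
  rw [mul_assoc, ← h, Submonoid.coe_mul, map_mul]
  congr 1
  rw [wN]
  exact (Complex.natCast_mul_natCast_cpow _ _ _).symm ▸ by push_cast; rfl

lemma deriv_zI {s : ℂ} (hs : 1 < s.re) : HasDerivAt (zI K) (-(LW K s * zI K s)) s := by
  have habs : LSeries.abscissaOfAbsConv (aK K) < s.re := by
    have : LSeries.abscissaOfAbsConv (aK K) ≤ ((1 + s.re)/2 : ℝ) := by
      refine LSeriesSummable.abscissaOfAbsConv_le (s := (((1 + s.re)/2 : ℝ) : ℂ)) ?_ 
      exact LSeriesSummable_aK K (by rw [Complex.ofReal_re]; linarith)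
    refine this.trans_lt ?_
    exact_mod_cast (by linarith : (1 + s.re)/2 < s.re)
  have h1 := LSeries_hasDerivAt habs
  have h2 : zI K =ᶠ[𝓝 s] LSeries (aK K) := by
    filter_upwards [(isOpen_lt continuous_const Complex.continuous_re).mem_nhds hs] with t ht
    exact zI_eq_LSeries K ht
  refine (h1.congr_of_eventuallyEq h2).congr_deriv ?_
  congr 1
  rw [LW_mul_zI hs]
  refine HasSum.tsum_eq ?_
  refine (zI_group K (fun n => (Real.log n : ℂ) * (n:ℂ)^(-s)) _ (summable_log hs).hasSum).congr_fun fun n => ?_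
  rw [LSeries.term_def]
  split_ifs with h
  · rfl
  · rw [Complex.cpow_neg, div_eq_mul_inv, LSeries.logMul, ← Complex.natCast_log]
    ring

end NF

end

section

open Filter Topology Set Complex NumberField Module IsDedekindDomain
open scoped nonZeroDivisors

namespace NF

variable {K : Type*} [Field K] [NumberField K]

lemma finite_W (n : ℕ) : Finite {w : WW K // wN w = n} := by
  have := finite_norm K n
  refine Finite.of_injective (β := {I : (Ideal (𝓞 K))⁰ // Ideal.absNorm (I : Ideal (𝓞 K)) = n})
    (fun w => ⟨wI w.1, w.2⟩) ?_
  intro x y h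
  exact Subtype.ext (wI_inj (congrArg Subtype.val h))

variable (K) in
/-- von Mangoldt function of `K`, grouped by norms -/
noncomputable def lamK (n : ℕ) : ℝ := ∑' w : {w : WW K // wN w = n}, Real.log (NP w.1.1)

lemma log_NP_pos (P : HeightOneSpectrum (𝓞 K)) : 0 < Real.log (NP P) :=
  Real.log_pos (by exact_mod_cast NP_gt P)

lemma lamK_nonneg (n : ℕ) : 0 ≤ lamK K n := tsum_nonneg fun w => (log_NP_pos _).le

lemma wN_gt (w : WW K) : 1 < wN w := by
  rw [wN_eq]; exact Nat.one_lt_pow (by omega) (NP_gt _)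

lemma hasSum_lamK {s : ℂ} (hs : 1 < s.re) :
    HasSum (LSeries.term (fun n => (lamK K n : ℂ)) s) (LW K s) := by
  have := hasSum_group (fun w : WW K => wN w) finite_W (fun w => (Real.log (NP w.1) : ℂ))
    (fun n => (n:ℂ)^(-s)) (fun w => by have := wN_gt w; omega) _ (summable_W hs).hasSum
  refine this.congr_fun fun n => ?_
  rw [LSeries.term_def]
  split_ifs
  · rfl
  · rw [Complex.cpow_neg, div_eq_mul_inv, lamK, Complex.ofReal_tsum]

lemma LSeries_lamK {s : ℂ} (hs : 1 < s.re) : LSeries (fun n => (lamK K n : ℂ)) s = LW K s :=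
  (hasSum_lamK hs).tsum_eq

lemma exists_prime_NP (P : HeightOneSpectrum (𝓞 K)) :
    ∃ p f : ℕ, p.Prime ∧ f ≠ 0 ∧ NP P = p ^ f ∧ (p : 𝓞 K) ∈ P.asIdeal := by
  have := P.isMaximal
  obtain ⟨p, f, hf, hmem, hp, h⟩ := Ideal.exists_prime_and_absNorm_eq_pow P.asIdeal
  exact ⟨p, f, hp, hf.ne', h, hmem⟩

lemma lamK_le (n : ℕ) : lamK K n ≤ finrank ℚ K * ArithmeticFunction.vonMangoldt n := by
  classical
  by_cases hne : Nonempty {w : WW K // wN w = n}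
  swap
  · rw [not_nonempty_iff] at hne
    rw [lamK, tsum_empty]
    exact mul_nonneg (Nat.cast_nonneg _) ArithmeticFunction.vonMangoldt_nonneg
  obtain ⟨⟨w0, hw0⟩⟩ := hne
  obtain ⟨p, f, hp, hf, hNP, hmem⟩ := exists_prime_NP w0.1
  have hn : n = p ^ (f * (w0.2 + 1)) := by rw [← hw0, wN_eq, hNP, pow_mul]
  have hL : ArithmeticFunction.vonMangoldt n = Real.log p := by
    rw [hn, ArithmeticFunction.vonMangoldt_apply_pow (Nat.mul_ne_zero hf (by omega)),
      ArithmeticFunction.vonMangoldt_apply_prime hp]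
  have := finite_W (K := K) n
  have := Fintype.ofFinite {w : WW K // wN w = n}
  have hall : ∀ w : {w : WW K // wN w = n}, w.1.1.asIdeal ∣ Ideal.span {(p : 𝓞 K)} := by
    rintro ⟨w, hw⟩
    obtain ⟨p', f', hp', hf', hNP', hmem'⟩ := exists_prime_NP w.1
    have h1 : p' ^ (f' * (w.2+1)) = p ^ (f * (w0.2 + 1)) := by
      rw [← hn, ← hw, wN_eq, hNP', pow_mul]
    have h2 : p' = p := by
      have : p' ∣ p ^ (f * (w0.2 + 1)) := by
        rw [← h1]; exact dvd_pow_self _ (Nat.mul_ne_zero hf' (by omega))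
      exact (Nat.prime_dvd_prime_iff_eq hp' hp).mp (hp'.dvd_of_dvd_pow this)
    rw [Ideal.dvd_span_singleton]
    rwa [h2] at hmem'
  have hinj : Function.Injective (fun w : {w : WW K // wN w = n} => w.1.1.asIdeal) := by
    rintro ⟨⟨P, k⟩, hw⟩ ⟨⟨Q, l⟩, hw'⟩ h
    have hPQ : P = Q := HeightOneSpectrum.ext h
    subst hPQ
    rw [wN_eq] at hw hw'
    have := Nat.pow_right_injective (NP_gt P) (hw.trans hw'.symm)
    simp only [Subtype.mk.injEq, Prod.mk.injEq, true_and]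
    simp only at this
    omega
  have hprod : ∏ w : {w : WW K // wN w = n}, w.1.1.asIdeal ∣ Ideal.span {(p : 𝓞 K)} := by
    have := Finset.prod_primes_dvd (s := Finset.univ.image (fun w : {w : WW K // wN w = n} => w.1.1.asIdeal))
      (Ideal.span {(p : 𝓞 K)}) ?_ ?_
    · rwa [Finset.prod_image (fun x _ y _ h => hinj h)] at this
    · intro a ha
      obtain ⟨w, -, rfl⟩ := Finset.mem_image.mp ha
      exact prime_P _
    · intro a ha
      obtain ⟨w, -, rfl⟩ := Finset.mem_image.mp ha
      exact hall w
  have hdvd := Ideal.absNorm_dvd_absNorm_of_le (Ideal.le_of_dvd hprod)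
  rw [Ideal.absNorm_span_natCast, map_prod, RingOfIntegers.rank] at hdvd
  have hle := Nat.le_of_dvd (pow_pos hp.pos _) hdvd
  rw [lamK, tsum_fintype, hL, ← Real.log_prod (fun w _ => by
    have := NP_gt w.1.1
    exact_mod_cast (by omega : NP w.1.1 ≠ 0)), ← Real.log_pow]
  refine Real.log_le_log (Finset.prod_pos fun w _ => ?_) ?_
  · have := NP_gt w.1.1
    exact_mod_cast (by omega : 0 < NP w.1.1)
  · exact_mod_cast hle

lemma lamK_prime {p : ℕ} (hp : p.Prime) :
    lamK K p = Nat.card {I : Ideal (𝓞 K) // Ideal.absNorm I = p} * Real.log p := by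
  have := finite_W (K := K) p
  have := Fintype.ofFinite {w : WW K // wN w = p}
  have key : ∀ w : {w : WW K // wN w = p}, w.1.2 = 0 ∧ NP w.1.1 = p := by
    rintro ⟨w, hw⟩
    rw [wN_eq] at hw
    have h1 : w.2 + 1 = 1 := by
      have h := hp
      rw [← hw] at h
      exact Nat.Prime.eq_one_of_pow h
    simp only
    refine ⟨by omega, ?_⟩
    rwa [h1, pow_one] at hw
  rw [lamK, tsum_fintype]
  have h2 : ∀ w : {w : WW K // wN w = p}, Real.log (NP w.1.1) = Real.log p := fun w => by
    rw [(key w).2]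
  simp only [h2, Finset.sum_const, Finset.card_univ, nsmul_eq_mul]
  rw [← Nat.card_eq_fintype_card]
  congr 2
  refine Nat.card_congr (Equiv.ofBijective (fun w => ⟨w.1.1.asIdeal, (key w).2⟩) ⟨?_, ?_⟩)
  · rintro w w' h
    have hPQ : w.1.1 = w'.1.1 := HeightOneSpectrum.ext (congrArg Subtype.val h)
    refine Subtype.ext (Prod.ext hPQ ?_)
    rw [(key w).1, (key w').1]
  · rintro ⟨I, hI⟩
    have hprime : I.IsPrime := Ideal.isPrime_of_irreducible_absNorm (by rw [hI]; exact hp)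
    have hI0 : I ≠ ⊥ := by
      rintro rfl
      rw [Ideal.absNorm_bot] at hI
      exact hp.ne_zero hI.symm
    exact ⟨⟨(⟨I, hprime, hI0⟩, 0), by rw [wN_eq]; simpa [NP] using hI⟩, rfl⟩

lemma card_le {p : ℕ} (hp : p.Prime) :
    Nat.card {I : Ideal (𝓞 K) // Ideal.absNorm I = p} ≤ finrank ℚ K := by
  have h1 := lamK_le (K := K) p
  rw [lamK_prime hp, ArithmeticFunction.vonMangoldt_apply_prime hp] at h1
  have h2 : 0 < Real.log p := Real.log_pos (by exact_mod_cast hp.one_lt)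
  exact_mod_cast le_of_mul_le_mul_right h1 h2

end NF

end

section

open Filter Topology Set Complex NumberField Module IsDedekindDomain
open scoped nonZeroDivisors

namespace NF

variable {K : Type*} [Field K] [NumberField K]

lemma order_limit (H : ℂ → ℂ) (s0 : ℂ) (hH : AnalyticAt ℂ H s0) (htop : analyticOrderAt H s0 ≠ ⊤) :
    Tendsto (fun σ : ℝ => (σ : ℂ) * logDeriv H (s0 + σ)) (𝓝[>] 0) (𝓝 (analyticOrderNatAt H s0)) ∧
    ∀ᶠ σ : ℝ in 𝓝[>] 0, H (s0 + σ) ≠ 0 := by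
  obtain ⟨g, hg, hg0, hHg⟩ := hH.analyticOrderAt_ne_top.mp htop
  set m := analyticOrderNatAt H s0 with hm
  have hHg' : ∀ᶠ z in 𝓝 s0, H =ᶠ[𝓝 z] fun z ↦ (z - s0) ^ m • g z := hHg.eventually_nhds
  have hgd : ∀ᶠ z in 𝓝 s0, AnalyticAt ℂ g z := hg.eventually_analyticAt
  have hgn : ∀ᶠ z in 𝓝 s0, g z ≠ 0 := hg.continuousAt.eventually_ne hg0
  have hlim : Tendsto (fun σ : ℝ => s0 + (σ:ℂ)) (𝓝[>] 0) (𝓝 s0) := by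
    have : Continuous (fun σ : ℝ => s0 + (σ:ℂ)) := by fun_prop
    exact (this.tendsto' 0 s0 (by simp)).mono_left nhdsWithin_le_nhds
  have hev := hlim.eventually (hHg'.and (hgd.and hgn))
  refine ⟨?_, ?_⟩
  · have hcont : Tendsto (fun z => logDeriv g z) (𝓝 s0) (𝓝 (logDeriv g s0)) := by
      have : ContinuousAt (fun z => deriv g z / g z) s0 := hg.deriv.continuousAt.div hg.continuousAt hg0
      exact this.tendsto
    have h0 : Tendsto (fun σ : ℝ => (σ:ℂ)) (𝓝[>] 0) (𝓝 0) :=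
      (Complex.continuous_ofReal.tendsto' 0 0 (by simp)).mono_left nhdsWithin_le_nhds
    have h1 : Tendsto (fun σ : ℝ => (m:ℂ) + σ * logDeriv g (s0 + σ)) (𝓝[>] 0) (𝓝 ((m:ℂ) + 0 * logDeriv g s0)) :=
      tendsto_const_nhds.add (h0.mul (hcont.comp hlim))
    rw [zero_mul, add_zero] at h1
    refine h1.congr' ?_
    filter_upwards [hev, self_mem_nhdsWithin] with σ ⟨h2, h3, h4⟩ hσ
    have hσ0 : (σ:ℂ) ≠ 0 := by exact_mod_cast (ne_of_gt hσ)
    have e1 : logDeriv H (s0 + σ) = logDeriv (fun z ↦ (z - s0) ^ m * g z) (s0 + σ) := by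
      rw [logDeriv_apply, logDeriv_apply, h2.deriv_eq, h2.eq_of_nhds]
      rfl
    rw [e1, logDeriv_mul (f := fun z => (z - s0)^m) _ (pow_ne_zero _ (by simpa using hσ0)) h4 (by fun_prop) h3.differentiableAt,
      logDeriv_fun_pow (f := fun z => z - s0) (by fun_prop)]
    have : logDeriv (fun z => z - s0) (s0 + σ) = 1 / (σ:ℂ) := by
      rw [logDeriv_apply, deriv_sub_const]; simp
    rw [this]
    field_simp
  · filter_upwards [hev, self_mem_nhdsWithin] with σ ⟨h2, h3, h4⟩ hσ
    have hσ0 : (σ:ℂ) ≠ 0 := by exact_mod_cast (ne_of_gt hσ)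
    rw [h2.eq_of_nhds]
    simp only [add_sub_cancel_left, smul_eq_mul]
    exact mul_ne_zero (pow_ne_zero _ hσ0) h4

lemma LW_continuousAt {s : ℂ} (hs : 1 < s.re) : ContinuousAt (LW K) s := by
  have habs : LSeries.abscissaOfAbsConv (fun n => (lamK K n : ℂ)) < s.re := by
    have : LSeries.abscissaOfAbsConv (fun n => (lamK K n : ℂ)) ≤ ((1 + s.re)/2 : ℝ) := by
      refine LSeriesSummable.abscissaOfAbsConv_le (s := (((1 + s.re)/2 : ℝ) : ℂ)) ?_
      exact (hasSum_lamK (by rw [Complex.ofReal_re]; linarith)).summable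
    refine this.trans_lt ?_
    exact_mod_cast (by linarith : (1 + s.re)/2 < s.re)
  refine (LSeries_hasDerivAt habs).continuousAt.congr ?_
  filter_upwards [(isOpen_lt continuous_const Complex.continuous_re).mem_nhds hs] with t ht
  exact LSeries_lamK ht

lemma three_four_one (x t : ℝ) (hx : 1 < x) :
    0 ≤ 3 * (LW K x).re + 4 * (LW K (x + t * I)).re + (LW K (x + (2 * t : ℝ) * I)).re := by
  have h (t : ℝ) := Complex.hasSum_re (summable_W (K := K) (s := (x:ℂ) + t * I) (by simpa using hx)).hasSum
  have h0 := h 0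
  have h3 := ((h0.mul_left 3).add ((h t).mul_left 4)).add (h (2*t))
  simp only [Complex.ofReal_zero, zero_mul, add_zero] at h3
  have h4 := h3.nonneg ?_
  · exact h4
  intro w
  have hN : (wN w : ℂ) ≠ 0 := by
    have := wN_gt w
    exact_mod_cast (by omega : wN w ≠ 0)
  have hNp : 0 < wN w := by have := wN_gt w; omega
  set z : ℂ := (wN w : ℂ) ^ (-(t * I)) with hz
  have hz1 : ‖z‖ = 1 := by
    rw [hz, Complex.norm_natCast_cpow_of_pos hNp]; simp
  set r : ℝ := (wN w : ℝ) ^ (-x) with hr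
  have hr0 : 0 ≤ r := by positivity
  have e0 : (wN w : ℂ) ^ (-(x:ℂ)) = r := by
    rw [hr, Complex.ofReal_cpow (by positivity)]; push_cast; rfl
  have e1 : (wN w : ℂ) ^ (-((x:ℂ) + t * I)) = r * z := by
    rw [neg_add, Complex.cpow_add _ _ hN, e0]
  have e2 : (wN w : ℂ) ^ (-((x:ℂ) + (2 * t : ℝ) * I)) = r * z ^ 2 := by
    rw [neg_add, Complex.cpow_add _ _ hN, e0, hz, ← Complex.cpow_nat_mul]
    congr 2
    push_cast; ring
  have hl := (log_NP_pos w.1).le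
  rw [e0, e1, e2]
  have hsq : z.re ^ 2 + z.im ^ 2 = 1 := by
    have := Complex.sq_norm z
    rw [hz1, Complex.normSq_apply] at this
    linarith
  simp only [pow_two, Complex.mul_re, Complex.ofReal_re, Complex.ofReal_im, zero_mul, sub_zero]
  have : 3 * (Real.log (NP w.1) * r) + 4 * (Real.log (NP w.1) * (r * z.re)) +
      Real.log (NP w.1) * (r * (z.re * z.re - z.im * z.im)) =
      Real.log (NP w.1) * r * (2 * (1 + z.re)^2) := by
    linear_combination (-Real.log (NP w.1) * r) * hsq
  rw [this]
  positivity

variable (K) in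
theorem exists_H_nonzero : ∃ (H : ℂ → ℂ) (Ω : Set ℂ), IsOpen Ω ∧ {s | 1 ≤ s.re} ⊆ Ω ∧ DifferentiableOn ℂ H Ω ∧
    (∀ s : ℂ, 1 ≤ s.re → H s ≠ 0) ∧ ∀ s : ℂ, 1 < s.re → LW K s - 1 / (s - 1) = - logDeriv H s := by
  obtain ⟨H, hHd, hHz, hH1⟩ := exists_H K
  set Ω : Set ℂ := {s | 1 - 1 / (finrank ℚ K : ℝ) < s.re} with hΩ
  have hΩo : IsOpen Ω := isOpen_lt continuous_const Complex.continuous_re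
  have hn0 : 0 < finrank ℚ K := finrank_pos
  have hn1 : (0:ℝ) < 1 / finrank ℚ K := by positivity
  have hsub : ∀ s : ℂ, 1 ≤ s.re → s ∈ Ω := fun s hs => by
    simp only [hΩ, mem_ofPred_eq]; linarith
  have hconv : IsPreconnected Ω := (convex_halfSpace_re_gt _).isPreconnected
  have hana := hHd.analyticOnNhd hΩo
  have htop : ∀ s : ℂ, 1 ≤ s.re → analyticOrderAt H s ≠ ⊤ := by
    intro s hs
    refine hana.analyticOrderAt_ne_top_of_isPreconnected hconv (hsub 1 (by simp)) (hsub s hs) ?_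
    rw [(hana 1 (hsub 1 (by simp))).analyticOrderAt_eq_zero.mpr hH1]
    simp
  have hrel : ∀ s : ℂ, 1 < s.re → (LW K s - 1 / (s - 1)) * H s = - deriv H s := by
    intro s hs
    have h1 : H =ᶠ[𝓝 s] fun s => (s - 1) * zI K s := by
      filter_upwards [(isOpen_lt continuous_const Complex.continuous_re).mem_nhds hs] with t ht
      exact hHz t ht
    have h2 := (((hasDerivAt_id s).sub_const 1).mul (deriv_zI (K := K) hs))
    have h3 := h2.deriv
    have h4 : deriv H s = 1 * zI K s + (s - 1) * (-(LW K s * zI K s)) := by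
      rw [h1.deriv_eq]; exact h3
    have hs1 : s - 1 ≠ 0 := by
      intro h
      rw [sub_eq_zero] at h
      rw [h] at hs; simp at hs
    rw [h4, hHz s hs]
    field_simp
    ring
  have hrel' : ∀ s : ℂ, 1 < s.re → H s ≠ 0 → LW K s - 1 / (s - 1) = - logDeriv H s := by
    intro s hs h
    rw [logDeriv_apply, ← neg_div, ← hrel s hs, mul_div_cancel_right₀ _ h]
  have hpos : ∀ s : ℂ, 1 ≤ s.re → ∀ᶠ σ : ℝ in 𝓝[>] 0, 1 < (s + σ).re := by
    intro s hs
    filter_upwards [self_mem_nhdsWithin] with σ hσ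
    have : 0 < σ := hσ
    simp; linarith
  have hlim : ∀ s : ℂ, Tendsto (fun σ : ℝ => s + (σ:ℂ)) (𝓝[>] 0) (𝓝 s) := by
    intro s
    have : Continuous (fun σ : ℝ => s + (σ:ℂ)) := by fun_prop
    exact (this.tendsto' 0 s (by simp)).mono_left nhdsWithin_le_nhds
  have h0 : Tendsto (fun σ : ℝ => (σ:ℂ)) (𝓝[>] 0) (𝓝 0) :=
      (Complex.continuous_ofReal.tendsto' 0 0 (by simp)).mono_left nhdsWithin_le_nhds
  have hM : ∀ s : ℂ, 1 ≤ s.re → Tendsto (fun σ : ℝ => (σ:ℂ) * (LW K (s + σ) - 1 / (s + σ - 1)))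
      (𝓝[>] 0) (𝓝 (-(analyticOrderNatAt H s : ℂ))) := by
    intro s hs
    obtain ⟨h1, h2⟩ := order_limit H s (hana s (hsub s hs)) (htop s hs)
    refine h1.neg.congr' ?_
    filter_upwards [h2, hpos s hs] with σ h3 h4
    rw [hrel' _ h4 h3]; ring
  have hordne : ∀ s : ℂ, 1 ≤ s.re → analyticOrderNatAt H s = 0 → H s ≠ 0 := by
    intro s hs h
    rw [← (hana s (hsub s hs)).analyticOrderAt_eq_zero, ← Nat.cast_analyticOrderNatAt (htop s hs), h]
    rfl
  have hord0 : ∀ s : ℂ, 1 ≤ s.re → s ≠ 1 → Tendsto (fun σ : ℝ => (σ:ℂ) * LW K (s + σ))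
      (𝓝[>] 0) (𝓝 (-(analyticOrderNatAt H s : ℂ))) := by
    intro s hs hs1
    have hs1' : s - 1 ≠ 0 := sub_ne_zero.mpr hs1
    have h1 : Tendsto (fun σ : ℝ => (σ:ℂ) * (1 / (s + σ - 1))) (𝓝[>] 0) (𝓝 (0 * (1 / (s - 1)))) :=
      h0.mul (tendsto_const_nhds.div ((hlim s).sub_const 1) hs1')
    have h2 := (hM s hs).add h1
    rw [zero_mul, add_zero] at h2
    refine h2.congr fun σ => by ring
  have hnz1 : ∀ s : ℂ, 1 < s.re → H s ≠ 0 := by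
    intro s hs
    refine hordne s hs.le ?_
    have hs1 : s ≠ 1 := by rintro rfl; simp at hs
    have h1 : Tendsto (fun σ : ℝ => (σ:ℂ) * LW K (s + σ)) (𝓝[>] 0) (𝓝 (0 * LW K s)) :=
      h0.mul ((LW_continuousAt hs).tendsto.comp (hlim s))
    have h2 := tendsto_nhds_unique h1 (hord0 s hs.le hs1)
    rw [zero_mul, eq_comm, neg_eq_zero] at h2
    exact_mod_cast h2
  refine ⟨H, Ω, hΩo, fun s hs => hsub s hs, hHd, ?_, fun s hs => hrel' s hs (hnz1 s hs)⟩
  intro s hs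
  rcases hs.lt_or_eq with h | h
  · exact hnz1 s h
  by_cases hs1 : s = 1
  · rw [hs1]; exact hH1
  have him : s.im ≠ 0 := by
    intro him
    exact hs1 (Complex.ext (by simp [← h]) (by simp [him]))
  set t := s.im with ht
  have hst : s = 1 + t * I := by
    apply Complex.ext <;> simp [← h, ht]
  set s2 : ℂ := 1 + (2 * t : ℝ) * I with hs2
  have hs21 : s2 ≠ 1 := by
    intro hh
    have := congrArg Complex.im hh
    simp [hs2] at this
    exact him this
  have hs2r : 1 ≤ s2.re := by simp [hs2]
  have l1 : Tendsto (fun σ : ℝ => (σ:ℂ) * LW K (1 + σ)) (𝓝[>] 0) (𝓝 1) := by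
    have h2 := (hM 1 (by simp)).add (tendsto_const_nhds (x := (1:ℂ)))
    have ho : analyticOrderNatAt H 1 = 0 := by
      rw [analyticOrderNatAt, (hana 1 (hsub 1 (by simp))).analyticOrderAt_eq_zero.mpr hH1]; rfl
    rw [ho] at h2
    simp only [Nat.cast_zero, neg_zero, zero_add] at h2
    refine h2.congr' ?_
    filter_upwards [self_mem_nhdsWithin] with σ hσ
    have hσ0 : (σ:ℂ) ≠ 0 := by exact_mod_cast (ne_of_gt hσ)
    rw [add_sub_cancel_left]
    field_simp
    ring
  have lt1 := hord0 s hs hs1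
  have lt2 := hord0 s2 hs2r hs21
  have lsum := ((Complex.continuous_re.tendsto _).comp
    (((l1.const_mul 3).add (lt1.const_mul 4)).add lt2))
  have hge := ge_of_tendsto lsum (b := 0) ?_
  · simp at hge
    refine hordne s hs ?_
    have h5 : (analyticOrderNatAt H s2 : ℝ) ≥ 0 := Nat.cast_nonneg _
    have h6 : (analyticOrderNatAt H s : ℝ) < 1 := by linarith
    have h7 : analyticOrderNatAt H s < 1 := by exact_mod_cast h6
    omega
  · filter_upwards [self_mem_nhdsWithin] with σ hσ
    have hσ0 : 0 < σ := hσ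
    have := three_four_one (K := K) (1 + σ) t (by linarith)
    have e1 : s + σ = ((1 + σ : ℝ) : ℂ) + t * I := by rw [hst]; push_cast; ring
    have e2 : s2 + σ = ((1 + σ : ℝ) : ℂ) + (2 * t : ℝ) * I := by rw [hs2]; push_cast; ring
    have e0 : (1:ℂ) + σ = ((1 + σ : ℝ) : ℂ) := by push_cast; rfl
    simp only [Function.comp, e1, e2, e0]
    have e3 : (3 * (↑σ * LW K ((1 + σ : ℝ) : ℂ)) + 4 * (↑σ * LW K (((1 + σ : ℝ) : ℂ) + t * I))
      + ↑σ * LW K (((1 + σ : ℝ) : ℂ) + (2 * t : ℝ) * I)) = ((σ:ℝ) : ℂ) * (((3:ℝ):ℂ) * LW K ((1 + σ : ℝ) : ℂ) + ((4:ℝ):ℂ) * LW K (((1 + σ : ℝ) : ℂ) + t * I)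
      + LW K (((1 + σ : ℝ) : ℂ) + (2 * t : ℝ) * I)) := by push_cast; ring
    rw [e3, Complex.re_ofReal_mul]
    refine mul_nonneg hσ0.le ?_
    simpa only [Complex.add_re, Complex.re_ofReal_mul] using this

end NF

end

section

open Filter Topology Set Complex NumberField Module IsDedekindDomain
open scoped nonZeroDivisors

namespace NF

variable (K : Type*) [Field K] [NumberField K]

lemma sum_lamK_le (N : ℕ) :
    ∑ k ∈ Finset.Icc 1 N, lamK K k ≤ (finrank ℚ K * (Real.log 4 + 4)) * N := by
  have h1 : Chebyshev.psi N ≤ (Real.log 4 + 4) * N := Chebyshev.psi_le_const_mul_self (Nat.cast_nonneg _)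
  rw [Chebyshev.psi, Nat.floor_natCast] at h1
  calc _ ≤ ∑ k ∈ Finset.Icc 1 N, finrank ℚ K * ArithmeticFunction.vonMangoldt k :=
        Finset.sum_le_sum fun k _ => lamK_le k
    _ = finrank ℚ K * ∑ k ∈ Finset.Ioc 0 N, ArithmeticFunction.vonMangoldt k := by
        rw [← Finset.mul_sum]; rfl
    _ ≤ finrank ℚ K * ((Real.log 4 + 4) * N) := by gcongr
    _ = _ := by ring

theorem lamK_asymp : Tendsto (fun N : ℕ => (∑ k ∈ Finset.Icc 1 N, lamK K k) / N) atTop (𝓝 1) := by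
  obtain ⟨H, Ω, hΩ, hsub, hHd, hH0, hrel⟩ := exists_H_nonzero K
  refine WI.wiener_ikehara _ lamK_nonneg _ (sum_lamK_le K) (fun s => (-logDeriv H s - 1) / s) ?_ ?_
  · have hana := hHd.analyticOnNhd hΩ
    intro s hs
    have hs' : (1:ℝ) ≤ s.re := hs
    apply ContinuousAt.continuousWithinAt
    have h1 : ContinuousAt (fun z => deriv H z / H z) s :=
      (hana s (hsub hs)).deriv.continuousAt.div (hana s (hsub hs)).continuousAt (hH0 s hs)
    have h1' : ContinuousAt (logDeriv H) s := h1
    refine ((h1'.neg).sub continuousAt_const).div continuousAt_id ?_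
    rintro rfl
    simp at hs'
    linarith
  · intro s hs
    have hs0 : s ≠ 0 := by rintro rfl; simp at hs; linarith
    have hs1 : s - 1 ≠ 0 := by
      intro h
      rw [sub_eq_zero] at h
      rw [h] at hs; simp at hs
    rw [← hrel s hs, LSeries_lamK hs]
    field_simp
    ring

lemma sqrt_log_tendsto : Tendsto (fun N : ℕ => (2 * √(N:ℝ) * Real.log N) / N) atTop (𝓝 0) := by
  have h1 : Tendsto (fun x : ℝ => Real.log x / x ^ (1/2:ℝ)) atTop (𝓝 0) :=
    (isLittleO_log_rpow_atTop (by norm_num)).tendsto_div_nhds_zero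
  have h2 := (h1.const_mul 2).comp tendsto_natCast_atTop_atTop
  rw [mul_zero] at h2
  refine h2.congr' ?_
  filter_upwards [eventually_gt_atTop 0] with N hN
  have hN' : (0:ℝ) < N := by exact_mod_cast hN
  simp only [Function.comp]
  rw [← Real.sqrt_eq_rpow]
  have h3 := Real.sqrt_pos.mpr hN'
  rw [mul_div_assoc', div_eq_div_iff h3.ne' hN'.ne']
  have := Real.mul_self_sqrt hN'.le
  linear_combination (-2 * Real.log N) * this

/-- number of ideals of norm p, real -/
noncomputable def aR (p : ℕ) : ℝ := Nat.card {I : Ideal (𝓞 K) // Ideal.absNorm I = p}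

theorem prime_ideal_theorem : Tendsto (fun N : ℕ =>
    (∑ p ∈ (Finset.Ioc 0 N).filter Nat.Prime, aR K p * Real.log p) / N) atTop (𝓝 1) := by
  have h1 := lamK_asymp K
  have h2 : Tendsto (fun N : ℕ => (∑ k ∈ (Finset.Ioc 0 N).filter (fun k => ¬ Nat.Prime k), lamK K k) / N)
      atTop (𝓝 0) := by
    have h3 := sqrt_log_tendsto.const_mul (finrank ℚ K : ℝ)
    rw [mul_zero] at h3
    refine squeeze_zero' (Eventually.of_forall fun N => ?_) ?_ h3
    · exact div_nonneg (Finset.sum_nonneg fun k _ => lamK_nonneg k) (Nat.cast_nonneg _)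
    · filter_upwards [eventually_ge_atTop 1] with N hN
      have h4 := Chebyshev.psi_sub_theta_le (x := N) (by exact_mod_cast hN)
      rw [Chebyshev.psi_sub_theta_eq_sum_not_prime, Nat.floor_natCast] at h4
      rw [← mul_div_assoc]
      gcongr
      calc _ ≤ ∑ k ∈ (Finset.Ioc 0 N).filter (fun k => ¬ Nat.Prime k), finrank ℚ K * ArithmeticFunction.vonMangoldt k :=
            Finset.sum_le_sum fun k _ => lamK_le k
        _ = finrank ℚ K * _ := by rw [← Finset.mul_sum]
        _ ≤ _ := by gcongr
  have h5 := h1.sub h2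
  rw [sub_zero] at h5
  refine h5.congr fun N => ?_
  rw [← sub_div]
  congr 1
  rw [sub_eq_iff_eq_add]
  have : Finset.Icc 1 N = Finset.Ioc 0 N := rfl
  rw [this, ← Finset.sum_filter_add_sum_filter_not _ Nat.Prime]
  congr 1
  refine Finset.sum_congr rfl fun p hp => ?_
  rw [lamK_prime (Finset.mem_filter.mp hp).2, aR]

end NF

end

section

open Filter Topology Set NumberField Module IsDedekindDomain Polynomial
open scoped nonZeroDivisors

namespace KM

lemma exists_pow_of_dvd {q l : ℕ} (hq : q ≠ 0)
    (h : ∀ r : ℕ, r.Prime → r ∣ q → l ∣ q.factorization r) : ∃ x : ℕ, x ^ l = q := by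
  refine ⟨∏ r ∈ q.primeFactors, r ^ (q.factorization r / l), ?_⟩
  rw [← Finset.prod_pow]
  conv_rhs => rw [← Nat.prod_factorization_pow_eq_self hq]
  rw [Finsupp.prod, Nat.support_factorization]
  refine Finset.prod_congr rfl fun r hr => ?_
  rw [← pow_mul, Nat.div_mul_cancel (h r (Nat.prime_of_mem_primeFactors hr) (Nat.dvd_of_mem_primeFactors hr))]

lemma no_root (d : ℕ) [NeZero d] (E : Type*) [Field E] [NumberField E]
    [IsCyclotomicExtension {d} ℚ E] {q l : ℕ} (hq : q ≠ 0) (hl : l.Prime)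
    (hco : Nat.Coprime d q) (hpow : ¬ ∃ x : ℕ, x ^ l = q) (β : E) : β ^ l ≠ (q : E) := by
  intro hβ
  apply hpow
  apply exists_pow_of_dvd hq
  intro r hr hrq
  haveI : Fact r.Prime := ⟨hr⟩
  have hrd : ¬ r ∣ d := fun h => hr.not_dvd_one (by
    have := Nat.dvd_gcd h hrq
    rwa [hco] at this)
  have hintg : IsIntegral ℤ β := by
    refine IsIntegral.of_pow hl.pos ?_
    rw [hβ]
    simpa using isIntegral_algebraMap (R := ℤ) (A := E) (x := (q : ℤ))
  obtain ⟨b, hb⟩ : ∃ b : 𝓞 E, (b : E) = β := ⟨⟨β, hintg⟩, rfl⟩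
  have hbq : b ^ l = (q : 𝓞 E) := by
    apply RingOfIntegers.ext
    rw [RingOfIntegers.coe_eq_algebraMap, map_pow, ← RingOfIntegers.coe_eq_algebraMap, hb, hβ]
    simp
  have hpr : (Ideal.span {(r : ℤ)}).IsPrime := by
    rw [Ideal.span_singleton_prime (by exact_mod_cast hr.ne_zero)]
    exact Nat.prime_iff_prime_int.mp hr
  have hmx : (Ideal.span {(r : ℤ)}).IsMaximal :=
    Ideal.IsPrime.isMaximal hpr (by simpa using hr.ne_zero)
  obtain ⟨P, hP, hPo⟩ :=
    Ideal.exists_maximal_ideal_liesOver_of_isIntegral (S := 𝓞 E) (Ideal.span {(r : ℤ)})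
  have hram := IsCyclotomicExtension.Rat.ramificationIdx_eq_of_not_dvd r E P hrd
  have hmap : Ideal.map (algebraMap ℤ (𝓞 E)) (Ideal.span {(r : ℤ)}) = Ideal.span {(r : 𝓞 E)} := by
    rw [Ideal.map_span]; simp
  have hne : Ideal.span {(r : 𝓞 E)} ≠ ⊥ := by simpa using hr.ne_zero
  rw [Ideal.IsDedekindDomain.ramificationIdx_eq_multiplicity (Ideal.span {(r : ℤ)}) P
    (by rw [hmap]; exact hne), hmap] at hram
  have hrP : (r : 𝓞 E) ∈ P := by
    have : (r : ℤ) ∈ P.under ℤ := by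
      rw [← Ideal.over_def P (Ideal.span {(r : ℤ)})]; exact Ideal.mem_span_singleton_self _
    simpa using this
  have hP0 : P ≠ ⊥ := by
    rintro rfl
    have : (r : 𝓞 E) = 0 := by simpa using hrP
    exact hr.ne_zero (by exact_mod_cast this)
  have hPp : Prime P := Ideal.prime_of_isPrime hP0 hP.isPrime
  have hfin : ∀ I : Ideal (𝓞 E), I ≠ ⊥ → FiniteMultiplicity P I := fun I hI =>
    FiniteMultiplicity.of_prime_left hPp hI
  set k := q.factorization r with hk
  have hqe : q = r ^ k * (q / r ^ k) := (Nat.ordProj_mul_ordCompl_eq_self q r).symm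
  have hu : ¬ r ∣ q / r ^ k := Nat.not_dvd_ordCompl hr hq
  set u := q / r ^ k with hudef
  have hu0 : u ≠ 0 := by rintro h; rw [h] at hu; exact hu (dvd_zero _)
  have huP : (u : 𝓞 E) ∉ P := by
    intro h
    have : (u : ℤ) ∈ P.under ℤ := by simpa using h
    rw [← Ideal.over_def P (Ideal.span {(r : ℤ)}), Ideal.mem_span_singleton] at this
    exact hu (by exact_mod_cast this)
  have hspan : Ideal.span {b} ^ l = Ideal.span {(r : 𝓞 E)} ^ k * Ideal.span {(u : 𝓞 E)} := by
    rw [Ideal.span_singleton_pow, Ideal.span_singleton_pow, Ideal.span_singleton_mul_span_singleton, hbq]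
    congr 2
    conv_lhs => rw [hqe]
    push_cast
    rfl
  have hu0' : Ideal.span {(u : 𝓞 E)} ≠ ⊥ := by simpa using hu0
  have hb0 : Ideal.span {b} ≠ ⊥ := by
    rw [Ne, Ideal.span_singleton_eq_bot]
    rintro rfl
    rw [zero_pow hl.ne_zero] at hbq
    exact hq (by exact_mod_cast hbq.symm)
  have h1 := congrArg (multiplicity P) hspan
  have h2 : multiplicity P (Ideal.span {(u : 𝓞 E)}) = 0 := by
    rw [multiplicity_eq_zero, Ideal.dvd_span_singleton]
    exact huP
  rw [multiplicity_mul hPp (hfin _ (mul_ne_zero (pow_ne_zero _ hne) hu0')),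
    (hfin _ hb0).multiplicity_pow hPp, (hfin _ hne).multiplicity_pow hPp, hram, h2] at h1
  exact ⟨multiplicity P (Ideal.span {b}), by omega⟩

end KM

end

section

open Filter Topology Set NumberField Module IsDedekindDomain Polynomial
open scoped nonZeroDivisors IntermediateField

namespace KM
variable {K : Type*} [Field K] [NumberField K] 

lemma le_finrank {d e q : ℕ} (hd : d ≠ 0) (he : Squarefree e) (hq : q ≠ 0)
    (hco : Nat.Coprime d q) (hpow : ∀ l : ℕ, l.Prime → l ∣ e → ¬ ∃ x : ℕ, x ^ l = q)
    {ζ α : K} (hζ : IsPrimitiveRoot ζ d) (hα : α ^ e = q) :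
    d.totient * e ≤ finrank ℚ K := by
  haveI : NeZero d := ⟨hd⟩
  haveI : IsCyclotomicExtension {d} ℚ ℚ⟮ζ⟯ := hζ.intermediateField_adjoin_isCyclotomicExtension ℚ
  have h1 : finrank ℚ ℚ⟮ζ⟯ = d.totient := IsCyclotomicExtension.Rat.finrank d ℚ⟮ζ⟯
  rw [← finrank_mul_finrank ℚ ℚ⟮ζ⟯ K, h1]
  refine Nat.mul_le_mul_left _ (Nat.le_of_dvd finrank_pos ?_)
  rw [← Nat.prod_primeFactors_of_squarefree he]
  refine Finset.prod_primes_dvd _ (fun l hl => (Nat.prime_of_mem_primeFactors hl).prime) fun l hl => ?_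
  have hlp := Nat.prime_of_mem_primeFactors hl
  have hle := Nat.dvd_of_mem_primeFactors hl
  have hirr : Irreducible (X ^ l - C (q : ℚ⟮ζ⟯)) :=
    (X_pow_sub_C_irreducible_iff_of_prime hlp).mpr fun b => no_root d ℚ⟮ζ⟯ hq hlp hco (hpow l hlp hle) b
  have hmin := minpoly.eq_of_irreducible_of_monic hirr (x := α ^ (e / l)) (by
    simp only [map_sub, map_pow, aeval_X, map_natCast]
    rw [← pow_mul, Nat.div_mul_cancel hle, hα, sub_self]) (monic_X_pow_sub_C _ hlp.ne_zero)
  have := minpoly.degree_dvd (K := ℚ⟮ζ⟯) (x := α ^ (e / l)) (Algebra.IsIntegral.isIntegral _)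
  rwa [← hmin, natDegree_X_pow_sub_C] at this

lemma finrank_le [IsGalois ℚ K] {d e q : ℕ} (hd : d ≠ 0) (he : 0 < e)
    {ζ α : K} (hζ : IsPrimitiveRoot ζ d) (hα : α ^ e = q)
    (hgen : ∀ σ : K ≃ₐ[ℚ] K, σ ζ = ζ → σ α = α → σ = 1) :
    finrank ℚ K ≤ d.totient * e := by
  classical
  rw [← IsGalois.card_aut_eq_finrank ℚ K, ← hζ.card_primitiveRoots]
  have h2 : (nthRoots e (q : K)).toFinset.card ≤ e :=
    (Multiset.toFinset_card_le _).trans (card_nthRoots _ _)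
  refine le_trans ?_ (Nat.mul_le_mul_left _ h2)
  rw [← Finset.card_product, Nat.card_eq_fintype_card, ← Finset.card_univ]
  refine Finset.card_le_card_of_injOn (fun σ : Gal(K/ℚ) => (σ ζ, σ α)) ?_ ?_
  · intro σ _
    simp only [Finset.coe_product, Set.mem_prod, Finset.mem_coe, Multiset.mem_toFinset]
    refine ⟨(mem_primitiveRoots (Nat.pos_of_ne_zero hd)).mpr (hζ.map_of_injective σ.injective), ?_⟩
    rw [mem_nthRoots he, ← map_pow, hα, map_natCast]
  · intro σ _ τ _ h
    simp only [Prod.mk.injEq] at h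
    have : τ⁻¹ * σ = 1 := by
      apply hgen
      · rw [AlgEquiv.mul_apply, h.1]; exact τ.symm_apply_apply ζ
      · rw [AlgEquiv.mul_apply, h.2]; exact τ.symm_apply_apply α
    exact (inv_mul_eq_one.mp this).symm

lemma finrank_eq [IsGalois ℚ K] {d e q : ℕ} (hd : d ≠ 0) (he : Squarefree e) (hq : q ≠ 0)
    (hco : Nat.Coprime d q) (hpow : ∀ l : ℕ, l.Prime → l ∣ e → ¬ ∃ x : ℕ, x ^ l = q)
    {ζ α : K} (hζ : IsPrimitiveRoot ζ d) (hα : α ^ e = q)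
    (hgen : ∀ σ : K ≃ₐ[ℚ] K, σ ζ = ζ → σ α = α → σ = 1) :
    finrank ℚ K = d.totient * e :=
  le_antisymm (finrank_le hd (Nat.pos_of_ne_zero he.ne_zero) hζ hα hgen)
    (le_finrank hd he hq hco hpow hζ hα)

lemma of_norm {p d e q : ℕ} (hp : p.Prime) (hd : ¬ p ∣ d)
    {ζ α : 𝓞 K} (hζ : IsPrimitiveRoot ζ d) (hα : α ^ e = q) {I : Ideal (𝓞 K)}
    (hI : Ideal.absNorm I = p) : d ∣ p - 1 ∧ ∃ c : ZMod p, c ^ e = q := by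
  haveI : Fact p.Prime := ⟨hp⟩
  have hcard : Nat.card (𝓞 K ⧸ I) = p := by
    rw [← hI, Ideal.absNorm_apply, Submodule.cardQuot_apply]
  haveI : Finite (𝓞 K ⧸ I) := Nat.finite_of_card_ne_zero (by rw [hcard]; exact hp.ne_zero)
  letI := Fintype.ofFinite (𝓞 K ⧸ I)
  let φ : ZMod p ≃+* 𝓞 K ⧸ I := ZMod.ringEquivOfPrime _ hp (by rw [← Nat.card_eq_fintype_card, hcard])
  let f : 𝓞 K →+* ZMod p := φ.symm.toRingHom.comp (Ideal.Quotient.mk I)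
  have hd0 : d ≠ 0 := by rintro rfl; exact hd (dvd_zero _)
  haveI : NeZero (d : ZMod p) := ⟨by rwa [Ne, ZMod.natCast_eq_zero_iff]⟩
  refine ⟨?_, f α, by rw [← map_pow, hα, map_natCast]⟩
  have h1 : IsRoot (cyclotomic d (ZMod p)) (f ζ) := by
    have := (hζ.isRoot_cyclotomic (Nat.pos_of_ne_zero hd0)).map (f := f)
    rwa [map_cyclotomic] at this
  rw [isRoot_cyclotomic_iff] at h1
  exact h1.dvd_of_pow_eq_one _ (ZMod.pow_card_sub_one_eq_one (h1.ne_zero hd0))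

end KM

end

section

open Filter Topology Set NumberField Module IsDedekindDomain Polynomial
open scoped nonZeroDivisors IntermediateField Pointwise

namespace KM

lemma sep {R : Type*} [CommRing R] [IsDomain R] {P : Ideal R} (hP : P.IsPrime) {n : ℕ}
    (hn : (n : R) ∉ P) {u v : R} (huv : u ^ n = v ^ n) (hv : v ∉ P) (h : u - v ∈ P) : u = v := by
  by_contra hne
  have h1 := geom_sum₂_mul u v n
  rw [huv, sub_self] at h1
  have h2 := (mul_eq_zero.mp h1).resolve_right (sub_ne_zero.mpr hne)
  have h3 := congrArg (Ideal.Quotient.mk P) h2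
  have h4 : Ideal.Quotient.mk P u = Ideal.Quotient.mk P v := Ideal.Quotient.eq.mpr h
  rw [map_sum, map_zero] at h3
  have h5 : ∀ i ∈ Finset.range n, Ideal.Quotient.mk P (u ^ i * v ^ (n - 1 - i)) =
      Ideal.Quotient.mk P v ^ (n - 1) := by
    intro i hi
    rw [Finset.mem_range] at hi
    rw [map_mul, map_pow, map_pow, h4, ← pow_add]
    congr 1; omega
  rw [Finset.sum_congr rfl h5, Finset.sum_const, Finset.card_range, nsmul_eq_mul,
    ← map_natCast (Ideal.Quotient.mk P), ← map_pow, ← map_mul, Ideal.Quotient.eq_zero_iff_mem] at h3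
  rcases hP.mem_or_mem h3 with h | h
  · exact hn h
  · exact hv (hP.mem_of_pow_mem _ h)

variable {K : Type*} [Field K] [NumberField K]

lemma absNorm_smul (σ : Gal(K/ℚ)) (I : Ideal (𝓞 K)) : Ideal.absNorm (σ • I) = Ideal.absNorm I := by
  rw [Ideal.absNorm_apply, Ideal.absNorm_apply, Submodule.cardQuot_apply, Submodule.cardQuot_apply]
  exact (Nat.card_congr (Ideal.quotientEquiv I (σ • I) (MulSemiringAction.toRingEquiv _ (𝓞 K) σ)
    (Ideal.pointwise_smul_def I)).toEquiv).symm

lemma card_ge [IsGalois ℚ K] {p d e q : ℕ} (hp : p.Prime) (hd : ¬ p ∣ d) (hed : e ∣ d)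
    (hpq : ¬ p ∣ q)
    {ζ α : 𝓞 K} (hζ : IsPrimitiveRoot ζ d) (hα : α ^ e = q)
    (hgen : ∀ σ : Gal(K/ℚ), σ • ζ = ζ → σ • α = α → σ = 1)
    (hdp : d ∣ p - 1) (hc : ∃ c : ZMod p, c ^ e = q) :
    finrank ℚ K ≤ Nat.card {I : Ideal (𝓞 K) // Ideal.absNorm I = p} := by
  haveI : Fact p.Prime := ⟨hp⟩
  have hpr : (Ideal.span {(p : ℤ)}).IsPrime := by
    rw [Ideal.span_singleton_prime (by exact_mod_cast hp.ne_zero)]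
    exact Nat.prime_iff_prime_int.mp hp
  have hmx : (Ideal.span {(p : ℤ)}).IsMaximal :=
    Ideal.IsPrime.isMaximal hpr (by simpa using hp.ne_zero)
  obtain ⟨P, hP, hPo⟩ :=
    Ideal.exists_maximal_ideal_liesOver_of_isIntegral (S := 𝓞 K) (Ideal.span {(p : ℤ)})
  have hund : P.under ℤ = Ideal.span {(p : ℤ)} := (Ideal.over_def P (Ideal.span {(p : ℤ)})).symm
  have hmem : ∀ n : ℕ, (n : 𝓞 K) ∈ P ↔ p ∣ n := by
    intro n
    have : (n : ℤ) ∈ P.under ℤ ↔ (n : 𝓞 K) ∈ P := by simp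
    rw [← this, hund, Ideal.mem_span_singleton, Int.natCast_dvd_natCast]
  have hPp := hP.isPrime
  have hP0 : P ≠ ⊥ := by
    rintro rfl
    have := (hmem p).mpr dvd_rfl
    simp only [Ideal.mem_bot, Nat.cast_eq_zero] at this
    exact hp.ne_zero this
  haveI : Finite (𝓞 K ⧸ P) := Ideal.finiteQuotientOfFreeOfNeBot P hP0
  have hd0 : d ≠ 0 := by rintro rfl; exact hd (dvd_zero _)
  have he0 : e ≠ 0 := by rintro rfl; exact hd0 (zero_dvd_iff.mp hed)
  have hζP : ζ ∉ P := fun h => hPp.ne_top ((Ideal.eq_top_iff_one _).mpr (by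
    rw [← hζ.pow_eq_one]; exact Ideal.pow_mem_of_mem _ h _ (Nat.pos_of_ne_zero hd0)))
  have hαP : α ∉ P := fun h => hpq ((hmem q).mp (by
    rw [← hα]; exact Ideal.pow_mem_of_mem _ h _ (Nat.pos_of_ne_zero he0)))
  have key : ∀ σ : Gal(K/ℚ), σ • ζ - ζ ∈ P → σ • α - α ∈ P → σ = 1 := by
    intro σ h1 h2
    refine hgen σ (sep hPp (n := d) (by rwa [hmem]) ?_ hζP h1) (sep hPp (n := e) ?_ ?_ hαP h2)
    · rw [← smul_pow', hζ.pow_eq_one, smul_one]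
    · rw [hmem]; exact fun h => hd (h.trans hed)
    · rw [← smul_pow', hα]
      exact map_natCast (MulSemiringAction.toRingHom _ (𝓞 K) σ) q
  obtain ⟨σ, hσ⟩ := IsArithFrobAt.exists_of_isInvariant ℤ Gal(K/ℚ) P
  have hcardp : Nat.card (ℤ ⧸ P.under ℤ) = p := by
    rw [hund, Nat.card_congr (Int.quotientSpanNatEquivZMod p).toEquiv, Nat.card_zmod]
  have hσ' : ∀ x : 𝓞 K, σ • x - x ^ p ∈ P := by
    intro x
    have := hσ x
    rwa [hcardp] at this
  have hp1 : p = p - 1 + 1 := (Nat.sub_add_cancel hp.one_le).symm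
  have hσ1 : σ = 1 := by
    apply key
    · have := hσ' ζ
      obtain ⟨k, hk⟩ := hdp
      rwa [hp1, pow_succ, hk, pow_mul, hζ.pow_eq_one, one_pow, one_mul] at this
    · have h1 := hσ' α
      obtain ⟨k, hk⟩ := hed.trans hdp
      obtain ⟨c, hc⟩ := hc
      have h2 : ((q ^ k : ℕ) : ZMod p) = ((1 : ℕ) : ZMod p) := by
        push_cast
        rw [← hc, ← pow_mul, ← hk]
        apply ZMod.pow_card_sub_one_eq_one
        rintro rfl
        rw [zero_pow he0] at hc
        exact hpq ((ZMod.natCast_eq_zero_iff _ _).mp hc.symm)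
      have h3 : ((q : 𝓞 K) ^ k - 1) ∈ P := by
        have h4 : (((q : ℤ) ^ k - 1 : ℤ) : ZMod p) = 0 := by
          push_cast at h2 ⊢; rw [h2, sub_self]
        rw [ZMod.intCast_zmod_eq_zero_iff_dvd, ← Ideal.mem_span_singleton, ← hund] at h4
        simpa using h4
      have h5 : σ • α - α = (σ • α - α ^ p) + ((q : 𝓞 K) ^ k - 1) * α := by
        have : α ^ p = q ^ k * α := by
          conv_lhs => rw [hp1, pow_succ, hk, pow_mul, hα]
        rw [this]; ring
      rw [h5]
      exact Ideal.add_mem _ h1 (Ideal.mul_mem_right _ _ h3)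
  subst hσ1
  letI := Ideal.Quotient.field P
  letI := Fintype.ofFinite (𝓞 K ⧸ P)
  have hF : ∀ y : 𝓞 K ⧸ P, y ^ p = y := by
    intro y
    obtain ⟨x, rfl⟩ := Ideal.Quotient.mk_surjective y
    have := hσ' x
    rw [one_smul] at this
    rw [← map_pow, eq_comm]
    exact Ideal.Quotient.eq.mpr this
  haveI : CharP (𝓞 K ⧸ P) p := by
    refine (CharP.charP_iff_prime_eq_zero hp).mpr ?_
    rw [← map_natCast (Ideal.Quotient.mk P), Ideal.Quotient.eq_zero_iff_mem, hmem]
  have hle : Fintype.card (𝓞 K ⧸ P) ≤ p := by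
    classical
    have hne : (X ^ p - X : (𝓞 K ⧸ P)[X]) ≠ 0 := FiniteField.X_pow_card_sub_X_ne_zero _ hp.one_lt
    calc Fintype.card (𝓞 K ⧸ P) = (Finset.univ : Finset (𝓞 K ⧸ P)).card := rfl
      _ ≤ (X ^ p - X : (𝓞 K ⧸ P)[X]).roots.toFinset.card := by
        refine Finset.card_le_card fun y _ => ?_
        rw [Multiset.mem_toFinset, mem_roots hne]
        simp [hF]
      _ ≤ _ := Multiset.toFinset_card_le _
      _ ≤ _ := card_roots' _
      _ = p := FiniteField.X_pow_card_sub_X_natDegree_eq _ hp.one_lt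
  have hinj : Function.Injective (ZMod.castHom (dvd_refl p) (𝓞 K ⧸ P)) := RingHom.injective _
  have hcard : Fintype.card (𝓞 K ⧸ P) = p :=
    le_antisymm hle (by have := Fintype.card_le_of_injective _ hinj; rwa [ZMod.card] at this)
  have hbij := (Fintype.bijective_iff_injective_and_card _).mpr ⟨hinj, by rw [ZMod.card, hcard]⟩
  have hrep : ∀ x : 𝓞 K, ∃ n : ℤ, x - n ∈ P := by
    intro x
    obtain ⟨z, hz⟩ := hbij.2 (Ideal.Quotient.mk P x)
    obtain ⟨n, rfl⟩ := ZMod.intCast_surjective z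
    refine ⟨n, Ideal.Quotient.eq.mp ?_⟩
    rw [← hz]; simp
  have hnorm : Ideal.absNorm P = p := by
    rw [Ideal.absNorm_apply, Submodule.cardQuot_apply, Nat.card_eq_fintype_card, hcard]
  have hstab : ∀ τ : Gal(K/ℚ), τ • P = P → τ = 1 := by
    intro τ hτ
    have : ∀ x : 𝓞 K, τ • x - x ∈ P := by
      intro x
      obtain ⟨n, hn⟩ := hrep x
      have h1 : τ • (x - n) ∈ τ • P := Ideal.smul_mem_pointwise_smul_iff.mpr hn
      rw [hτ] at h1
      have h2 : τ • (n : 𝓞 K) = n := map_intCast (MulSemiringAction.toRingHom _ (𝓞 K) τ) n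
      rw [smul_sub, h2] at h1
      have := Ideal.sub_mem _ h1 hn
      simpa using this
    exact key τ (this _) (this _)
  rw [← IsGalois.card_aut_eq_finrank ℚ K]
  haveI : Finite {I : Ideal (𝓞 K) // Ideal.absNorm I = p} := Ideal.finite_setOf_absNorm_eq p
  refine Nat.card_le_card_of_injective
    (fun τ : Gal(K/ℚ) => (⟨τ • P, by rw [absNorm_smul, hnorm]⟩ : {I : Ideal (𝓞 K) // Ideal.absNorm I = p})) ?_
  intro τ τ' h
  have h' : τ • P = τ' • P := congrArg Subtype.val h
  have : τ'⁻¹ * τ = 1 := hstab _ (by rw [mul_smul, h', inv_smul_smul])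
  exact (inv_mul_eq_one.mp this).symm

end KM

end

section

open Filter Topology Set NumberField Module IsDedekindDomain Polynomial
open scoped nonZeroDivisors IntermediateField Pointwise

namespace KM

lemma exists_split (f : ℚ[X]) :
    ∃ (K : Type) (_ : Field K) (_ : CharZero K), IsSplittingField ℚ K f := by
  refine ⟨f.SplittingField, inferInstance, algebraRat.charZero _, ?_⟩
  convert IsSplittingField.splittingField f
  exact Subsingleton.elim _ _

lemma exists_field {d e q : ℕ} (hd : d ≠ 0) (hed : e ∣ d) (hq : q ≠ 0) :
    ∃ (K : Type) (_ : Field K) (_ : NumberField K) (_ : IsGalois ℚ K) (ζ α : K),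
      IsPrimitiveRoot ζ d ∧ α ^ e = q ∧
        ∀ σ : Gal(K/ℚ), σ ζ = ζ → σ α = α → σ = 1 := by
  have he : e ≠ 0 := by rintro rfl; exact hd (zero_dvd_iff.mp hed)
  have hm1 : (X ^ d - C 1 : ℚ[X]).Monic := monic_X_pow_sub_C _ hd
  have hm2 : (X ^ e - C (q : ℚ) : ℚ[X]).Monic := monic_X_pow_sub_C _ he
  set f : ℚ[X] := (X ^ d - C 1) * (X ^ e - C (q : ℚ)) with hf
  have hf0 : f ≠ 0 := (hm1.mul hm2).ne_zero
  obtain ⟨K, _, _, hK⟩ := exists_split f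
  have hfd : FiniteDimensional ℚ K := IsSplittingField.finiteDimensional K f
  have hnor : Normal ℚ K := Normal.of_isSplittingField f
  have hgal : IsGalois ℚ K := IsGalois.mk
  have hnf : NumberField K := { to_charZero := inferInstance, to_finiteDimensional := inferInstance }
  have hspl : (f.map (algebraMap ℚ K)).Splits := IsSplittingField.splits K f
  have hroot : ∀ g : ℚ[X], g ∣ f → g.degree ≠ 0 → ∃ x : K, aeval x g = 0 := by
    intro g hg hdeg
    have h1 : (g.map (algebraMap ℚ K)).Splits :=
      hspl.of_dvd ((Polynomial.map_ne_zero hf0)) (Polynomial.map_dvd _ hg)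
    obtain ⟨x, hx⟩ := h1.exists_eval_eq_zero (by rwa [degree_map])
    exact ⟨x, by rwa [eval_map_algebraMap] at hx⟩
  obtain ⟨ζ, hζ⟩ := hroot (cyclotomic d ℚ) (by
    refine (cyclotomic.dvd_X_pow_sub_one d ℚ).trans ?_
    rw [hf, C_1]; exact dvd_mul_right _ _) (degree_cyclotomic_pos d ℚ (Nat.pos_of_ne_zero hd)).ne'
  obtain ⟨α, hα⟩ := hroot (X ^ e - C (q : ℚ)) (dvd_mul_left _ _) (by
    rw [degree_X_pow_sub_C (Nat.pos_of_ne_zero he)]; exact_mod_cast he)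
  haveI : NeZero (d : K) := ⟨by exact_mod_cast hd⟩
  haveI : NeZero d := ⟨hd⟩
  have hζ' : IsPrimitiveRoot ζ d := by
    rw [← isRoot_cyclotomic_iff, IsRoot, ← map_cyclotomic d (algebraMap ℚ K), eval_map_algebraMap, hζ]
  have hα' : α ^ e = q := by
    simpa [sub_eq_zero] using hα
  have hα0 : α ≠ 0 := by
    rintro rfl
    rw [zero_pow he] at hα'
    exact hq (by exact_mod_cast hα'.symm)
  refine ⟨K, inferInstance, hnf, hgal, ζ, α, hζ', hα', ?_⟩
  intro σ h1 h2
  have hfix : ∀ y : K, y ^ d = 1 → σ y = y := by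
    intro y hy
    obtain ⟨i, -, rfl⟩ := hζ'.eq_pow_of_pow_eq_one hy
    rw [map_pow, h1]
  have : (σ : K →ₐ[ℚ] K) = AlgHom.id ℚ K := by
    refine AlgHom.ext_of_adjoin_eq_top (IsSplittingField.adjoin_rootSet K f) ?_
    intro x hx
    rw [mem_rootSet_of_ne hf0] at hx
    replace hx : aeval x ((X ^ d - C 1) * (X ^ e - C (q : ℚ)) : ℚ[X]) = 0 := hx
    rw [map_mul, mul_eq_zero] at hx
    show σ x = x
    rcases hx with hx | hx
    · exact hfix x (by simpa [sub_eq_zero] using hx)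
    · have hx' : x ^ e = q := by simpa [sub_eq_zero] using hx
      have h3 : (x / α) ^ e = 1 := by
        rw [div_pow, hx', hα', div_self]; exact_mod_cast hq
      have h4 := hfix (x / α) (by obtain ⟨k, rfl⟩ := hed; rw [pow_mul, h3, one_pow])
      rw [map_div₀, h2] at h4
      exact (div_left_inj' hα0).mp h4
  ext x
  exact DFunLike.congr_fun this x

open scoped Classical in
theorem dens {d e q : ℕ} (hd : d ≠ 0) (hed : e ∣ d) (he : Squarefree e) (hq : q ≠ 0)
    (hco : Nat.Coprime d q) (hpow : ∀ l : ℕ, l.Prime → l ∣ e → ¬ ∃ x : ℕ, x ^ l = q) :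
    Tendsto (fun N : ℕ => (∑ p ∈ (Finset.Ioc 0 N).filter Nat.Prime,
      if d ∣ p - 1 ∧ ∃ c : ZMod p, c ^ e = q then Real.log p else 0) / N) atTop
      (𝓝 (1 / (d.totient * e))) := by
  obtain ⟨K, _, _, _, ζ, α, hζ, hα, hgen⟩ := exists_field hd hed hq
  have he0 : e ≠ 0 := he.ne_zero
  have hn := finrank_eq hd he hq hco hpow hζ hα hgen
  have hζi : IsIntegral ℤ ζ := hζ.isIntegral (Nat.pos_of_ne_zero hd)
  have hαi : IsIntegral ℤ α := by
    refine IsIntegral.of_pow (Nat.pos_of_ne_zero he0) ?_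
    rw [hα]
    simpa using isIntegral_algebraMap (R := ℤ) (A := K) (x := (q : ℤ))
  let z : 𝓞 K := ⟨ζ, hζi⟩
  let a : 𝓞 K := ⟨α, hαi⟩
  have hz : IsPrimitiveRoot z d :=
    IsPrimitiveRoot.of_map_of_injective (f := algebraMap (𝓞 K) K) hζ RingOfIntegers.coe_injective
  have ha : a ^ e = q := by
    apply RingOfIntegers.ext
    rw [RingOfIntegers.coe_eq_algebraMap, map_pow]
    show α ^ e = _
    rw [hα]; simp
  have hgen' : ∀ σ : Gal(K/ℚ), σ • z = z → σ • a = a → σ = 1 := by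
    intro σ h1 h2
    exact hgen σ (congrArg (algebraMap (𝓞 K) K) h1) (congrArg (algebraMap (𝓞 K) K) h2)
  have hPNT := NF.prime_ideal_theorem K
  set n : ℝ := d.totient * e with hndef
  have hn' : (finrank ℚ K : ℝ) = n := by rw [hn, hndef]; push_cast; rfl
  have hn0 : n ≠ 0 := by
    rw [← hn']; exact_mod_cast (finrank_pos (R := ℚ) (M := K)).ne'
  set ind : ℕ → ℝ := fun p => if d ∣ p - 1 ∧ ∃ c : ZMod p, c ^ e = q then Real.log p else 0 with hind
  have hloc : ∀ p : ℕ, p.Prime → ¬ p ∣ d * q → NF.aR K p * Real.log p - n * ind p = 0 := by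
    intro p hp hpdq
    have hpd : ¬ p ∣ d := fun h => hpdq (h.mul_right _)
    have hpq : ¬ p ∣ q := fun h => hpdq (h.mul_left _)
    by_cases hcase : d ∣ p - 1 ∧ ∃ c : ZMod p, c ^ e = q
    · have h1 := card_ge hp hpd hed hpq hz ha hgen' hcase.1 hcase.2
      have h2 : Nat.card {I : Ideal (𝓞 K) // Ideal.absNorm I = p} = finrank ℚ K :=
        le_antisymm (NF.card_le hp) h1
      simp only [hind, if_pos hcase, NF.aR, h2, hn']
      ring
    · have h2 : NF.aR K p = 0 := by
        have : IsEmpty {I : Ideal (𝓞 K) // Ideal.absNorm I = p} :=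
          ⟨fun I => hcase (of_norm hp hpd hz ha I.2)⟩
        simp [NF.aR]
      simp only [hind, if_neg hcase, h2]
      ring
  set C : ℝ := ∑ p ∈ (Finset.Ioc 0 (d * q)).filter Nat.Prime, (NF.aR K p * Real.log p - n * ind p)
  have hev : ∀ᶠ N : ℕ in atTop, (∑ p ∈ (Finset.Ioc 0 N).filter Nat.Prime, NF.aR K p * Real.log p) / N
      - C / N = n * ((∑ p ∈ (Finset.Ioc 0 N).filter Nat.Prime, ind p) / N) := by
    filter_upwards [eventually_ge_atTop (d * q)] with N hN
    have : C = ∑ p ∈ (Finset.Ioc 0 N).filter Nat.Prime, (NF.aR K p * Real.log p - n * ind p) := by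
      refine Finset.sum_subset ?_ ?_
      · refine Finset.filter_subset_filter _ (Finset.Ioc_subset_Ioc_right hN)
      · intro p hp hp'
        rw [Finset.mem_filter, Finset.mem_Ioc] at hp hp'
        refine hloc p hp.2 fun hdvd => hp' ⟨⟨hp.1.1, Nat.le_of_dvd (Nat.pos_of_ne_zero (mul_ne_zero hd hq)) hdvd⟩, hp.2⟩
    rw [Finset.sum_sub_distrib, ← Finset.mul_sum] at this
    rw [this]; ring
  have hC : Tendsto (fun N : ℕ => C / (N : ℝ)) atTop (𝓝 0) := tendsto_const_div_atTop_nhds_zero_nat C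
  have h3 := ((hPNT.sub hC).congr' hev).const_mul n⁻¹
  rw [sub_zero, mul_one] at h3
  rw [one_div]
  refine h3.congr fun N => ?_
  rw [← mul_assoc, inv_mul_cancel₀ hn0, one_mul]

end KM

end

section

open Filter Topology Set

namespace KM

open scoped Classical in
/-- indicator that `d ∣ p - 1` and `q` is an `e`-th power mod `p`. -/
noncomputable def ind (q d e p : ℕ) : ℝ := if d ∣ p - 1 ∧ ∃ c : ZMod p, c ^ e = q then 1 else 0

def HM (f : ℕ → ℝ) (c : ℝ) : Prop :=
  Tendsto (fun N : ℕ => (∑ p ∈ (Finset.Ioc 0 N).filter Nat.Prime, f p * Real.log p) / N) atTop (𝓝 c)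

lemma HM.congr {f g : ℕ → ℝ} {c : ℝ} (hf : HM f c) (h : ∀ p : ℕ, p.Prime → f p = g p) : HM g c := by
  refine Tendsto.congr (fun N => ?_) hf
  rw [Finset.sum_congr rfl fun p hp => by rw [h p (Finset.mem_filter.mp hp).2]]

lemma HM.comb {f g h : ℕ → ℝ} {a b c : ℝ} (hf : HM f a) (hg : HM g b) (hh : HM h c) :
    HM (fun p => f p - g p + h p) (a - b + c) := by
  refine Tendsto.congr (fun N => ?_) ((Tendsto.sub hf hg).add hh)
  rw [← sub_div, ← add_div, ← Finset.sum_sub_distrib, ← Finset.sum_add_distrib]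
  congr 1
  exact Finset.sum_congr rfl fun p _ => by ring

lemma dens_HM {d e q : ℕ} (hd : d ≠ 0) (hed : e ∣ d) (he : Squarefree e) (hq : q ≠ 0)
    (hco : Nat.Coprime d q) (hpow : ∀ l : ℕ, l.Prime → l ∣ e → ¬ ∃ x : ℕ, x ^ l = q) :
    HM (ind q d e) (1 / (d.totient * e)) := by
  refine Tendsto.congr (fun N => ?_) (dens hd hed he hq hco hpow)
  congr 1
  refine Finset.sum_congr rfl fun p _ => ?_
  rw [ind]
  split_ifs <;> simp

lemma pow_mul_iff {F : Type*} [Field F] {i j : ℕ} (hij : Nat.Coprime i j) (hi : i ≠ 0) (hj : j ≠ 0) (x : F) :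
    (∃ c : F, c ^ (i * j) = x) ↔ (∃ c : F, c ^ i = x) ∧ ∃ c : F, c ^ j = x := by
  constructor
  · rintro ⟨c, rfl⟩
    exact ⟨⟨c ^ j, by rw [← pow_mul, mul_comm]⟩, ⟨c ^ i, by rw [← pow_mul]⟩⟩
  · rintro ⟨⟨a, ha⟩, ⟨b, hb⟩⟩
    by_cases hx : x = 0
    · exact ⟨0, by rw [hx, zero_pow (mul_ne_zero hi hj)]⟩
    · have hbez : (1 : ℤ) = i * Nat.gcdA i j + j * Nat.gcdB i j := by
        rw [← Nat.gcd_eq_gcd_ab, hij]; rfl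
      refine ⟨b ^ (Nat.gcdA i j) * a ^ (Nat.gcdB i j), ?_⟩
      have ha0 : a ≠ 0 := by rintro rfl; rw [zero_pow hi] at ha; exact hx ha.symm
      have hb0 : b ≠ 0 := by rintro rfl; rw [zero_pow hj] at hb; exact hx hb.symm
      calc (b ^ (Nat.gcdA i j) * a ^ (Nat.gcdB i j)) ^ (i * j)
          = (b ^ j) ^ ((i : ℤ) * Nat.gcdA i j) * (a ^ i) ^ ((j : ℤ) * Nat.gcdB i j) := by
            rw [mul_pow, ← zpow_natCast, ← zpow_natCast (a ^ _), ← zpow_mul, ← zpow_mul,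
              ← zpow_natCast b, ← zpow_mul, ← zpow_natCast a, ← zpow_mul]
            push_cast
            congr 2 <;> ring
        _ = x := by rw [hb, ha, ← zpow_add₀ hx, ← hbez, zpow_one]

lemma ind_mul {q d d' e e' p : ℕ} (hp : p.Prime) (hd : Nat.Coprime d d') (he : Nat.Coprime e e')
    (he0 : e ≠ 0) (he0' : e' ≠ 0) :
    ind q d e p * ind q d' e' p = ind q (d * d') (e * e') p := by
  haveI : Fact p.Prime := ⟨hp⟩
  have h1 : d * d' ∣ p - 1 ↔ d ∣ p - 1 ∧ d' ∣ p - 1 :=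
    ⟨fun h => ⟨(dvd_mul_right _ _).trans h, (dvd_mul_left _ _).trans h⟩,
      fun h => hd.mul_dvd_of_dvd_of_dvd h.1 h.2⟩
  unfold ind
  simp only [pow_mul_iff he he0 he0', h1]
  by_cases a : d ∣ p - 1 <;> by_cases b : d' ∣ p - 1 <;>
    by_cases c : ∃ c : ZMod p, c ^ e = q <;> by_cases c' : ∃ c : ZMod p, c ^ e' = q <;>
    simp [a, b, c, c']

noncomputable def FF (q : ℕ) (S : Finset ℕ) (p : ℕ) : ℝ :=
  ∏ l ∈ S, (1 - ind q l 1 p + ind q l l p)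

lemma main_mean {q m : ℕ} (hq : q ≠ 0) (hm : m ≠ 0) (hsq : Squarefree m)
    (hco : Nat.Coprime m q)
    (hpow : ∀ p : ℕ, p.Prime → p ∣ m → ¬∃ x : ℕ, x ^ p = q) (S : Finset ℕ) :
    ∀ (D E : ℕ), (∀ l ∈ S, l.Prime) → D * ∏ l ∈ S, l ∣ m → E ∣ D →
      HM (fun p => FF q S p * ind q D E p) (1 / (D.totient * E) * ∏ l ∈ S, (1 - 1 / (l : ℝ))) := by
  induction S using Finset.induction_on with
  | empty =>
    intro D E _ hD hE
    simp only [FF, Finset.prod_empty, mul_one, one_mul] at hD ⊢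
    exact dens_HM (ne_zero_of_dvd_ne_zero hm hD) hE (hsq.squarefree_of_dvd (hE.trans hD)) hq
      (hco.coprime_dvd_left hD) fun l hl hle => hpow l hl (hle.trans (hE.trans hD))
  | insert l S hl ih =>
    intro D E hS hD hE
    rw [Finset.prod_insert hl] at hD
    have hlp : l.Prime := hS l (Finset.mem_insert_self _ _)
    have hS' : ∀ l ∈ S, l.Prime := fun x hx => hS x (Finset.mem_insert_of_mem hx)
    have hDl : D * l ∣ m := (mul_dvd_mul_left D (dvd_mul_right _ _)).trans hD
    have hcop : Nat.Coprime D l := Nat.coprime_of_squarefree_mul (hsq.squarefree_of_dvd hDl)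
    have hcopE : Nat.Coprime E l := hcop.coprime_dvd_left hE
    have hD0 : D ≠ 0 := ne_zero_of_dvd_ne_zero hm ((dvd_mul_right _ _).trans hD)
    have hE0 : E ≠ 0 := ne_zero_of_dvd_ne_zero hD0 hE
    have h1 := ih D E hS' ((mul_dvd_mul_left D (dvd_mul_left _ l)).trans hD) hE
    have h2 := ih (D * l) E hS' (by rwa [mul_assoc]) (hE.mul_right l)
    have h3 := ih (D * l) (E * l) hS' (by rwa [mul_assoc]) (mul_dvd_mul_right hE l)
    have h4 := (h1.comb h2 h3).congr (g := fun p => FF q (insert l S) p * ind q D E p) (by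
      intro p hp
      have e1 := ind_mul (q := q) hp hcop (Nat.coprime_one_right E) hE0 one_ne_zero
      have e2 := ind_mul (q := q) hp hcop hcopE hE0 hlp.ne_zero
      rw [mul_one] at e1
      rw [← e1, ← e2]
      simp only [FF, Finset.prod_insert hl]
      ring)
    convert h4 using 1
    rw [Finset.prod_insert hl, Nat.totient_mul hcop, Nat.totient_prime hlp]
    have hl1 : (1 : ℝ) < l := by exact_mod_cast hlp.one_lt
    have : ((l - 1 : ℕ) : ℝ) = l - 1 := by rw [Nat.cast_sub hlp.one_le]; simp
    push_cast
    rw [this]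
    have a1 : (l : ℝ) ≠ 0 := by positivity
    have a2 : (l : ℝ) - 1 ≠ 0 := by linarith
    have a3 : (D.totient : ℝ) ≠ 0 := by
      exact_mod_cast (Nat.totient_pos.mpr (Nat.pos_of_ne_zero hD0)).ne'
    have a4 : (E : ℝ) ≠ 0 := by exact_mod_cast hE0
    generalize (∏ x ∈ S, (1 - 1 / (x : ℝ))) = PP
    field_simp
    ring

lemma HM_FF {q m : ℕ} (hq : q ≠ 0) (hm : m ≠ 0) (hsq : Squarefree m)
    (hco : Nat.Coprime m q)
    (hpow : ∀ p : ℕ, p.Prime → p ∣ m → ¬∃ x : ℕ, x ^ p = q) :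
    HM (FF q m.primeFactors) (m.totient / m) := by
  have h := main_mean hq hm hsq hco hpow m.primeFactors 1 1
    (fun l hl => Nat.prime_of_mem_primeFactors hl)
    (by rw [one_mul, Nat.prod_primeFactors_of_squarefree hsq]) dvd_rfl
  have h2 := h.congr (g := FF q m.primeFactors) (by intro p hp; simp [ind])
  convert h2 using 1
  have h3 := Nat.totient_eq_mul_prod_factors m
  have hm' : (m : ℝ) ≠ 0 := by exact_mod_cast hm
  rw [div_eq_iff hm']
  have h4 := congrArg (Rat.cast : ℚ → ℝ) h3
  push_cast at h4
  rw [h4]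
  simp
  ring

lemma HM_one : HM (fun _ => 1) 1 := by
  have h := dens_HM (d := 1) (e := 1) (q := 1) one_ne_zero dvd_rfl squarefree_one one_ne_zero (by simp)
    (fun l hl h => absurd h hl.not_dvd_one)
  have h2 := h.congr (g := fun _ => 1) (by intro p hp; simp [ind])
  simpa using h2

lemma FF_nonneg (q : ℕ) (S : Finset ℕ) (p : ℕ) : 0 ≤ FF q S p := by
  refine Finset.prod_nonneg fun l _ => ?_
  unfold ind
  split_ifs <;> norm_num

lemma FF_eq_one {q m p : ℕ} (h : ∃ c : ZMod p, c ^ m = q) : FF q m.primeFactors p = 1 := by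
  obtain ⟨c, hc⟩ := h
  refine Finset.prod_eq_one fun l hl => ?_
  obtain ⟨k, hk⟩ := Nat.dvd_of_mem_primeFactors hl
  have h1 : ∃ c : ZMod p, c ^ l = q := ⟨c ^ k, by rw [← pow_mul, mul_comm, ← hk, hc]⟩
  simp [ind, h1]

end KM

end

section

open Filter Topology Set

namespace KM

/-- the primes up to `x` -/
def Q (x : ℕ) : Finset ℕ := (Finset.Ioc 0 x).filter Nat.Prime

lemma ratio_le {F : ℕ → ℝ} (hF : ∀ p, 0 ≤ F p) {P : Set ℕ} (hP : ∀ p ∈ P, p.Prime)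
    (hF1 : ∀ p ∈ P, F p = 1) {δ : ℝ} (hδ1 : δ < 1) {x : ℕ} (hx : 2 ≤ x)
    (T : Finset ℕ) (hT : ∀ p ∈ T, p ∈ P ∧ p ≤ x) :
    (T.card : ℝ) / (Q x).card ≤
      (((x : ℝ) ^ (1 - δ) + 1) * Real.log x + (∑ p ∈ Q x, F p * Real.log p) / (1 - δ)) /
        ∑ p ∈ Q x, 1 * Real.log p := by
  have hx1 : (1 : ℝ) < x := by exact_mod_cast hx
  have hlog : 0 < Real.log x := Real.log_pos hx1
  have hδ : 0 < 1 - δ := by linarith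
  have hlp : ∀ p ∈ Q x, 0 ≤ Real.log p := fun p _ => Real.log_natCast_nonneg p
  have hB : ∑ p ∈ Q x, 1 * Real.log p ≤ (Q x).card * Real.log x := by
    rw [← nsmul_eq_mul]
    refine Finset.sum_le_card_nsmul _ _ _ fun p hp => ?_
    simp only [Q, Finset.mem_filter, Finset.mem_Ioc] at hp
    rw [one_mul]
    exact Real.log_le_log (by exact_mod_cast hp.1.1) (by exact_mod_cast hp.1.2)
  have hBpos : 0 < ∑ p ∈ Q x, 1 * Real.log p := by
    have h2 : 2 ∈ Q x := by simp [Q, hx, Nat.prime_two]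
    refine lt_of_lt_of_le ?_ (Finset.single_le_sum (f := fun p : ℕ => 1 * Real.log p)
      (fun p hp => by rw [one_mul]; exact hlp p hp) h2)
    rw [one_mul]
    exact Real.log_pos (by norm_num)
  have hTQ : T ⊆ Q x := fun p hp => by
    have := hT p hp
    simp only [Q, Finset.mem_filter, Finset.mem_Ioc]
    exact ⟨⟨(hP p this.1).pos, this.2⟩, hP p this.1⟩
  set y : ℝ := (x : ℝ) ^ (1 - δ) with hy
  have hy0 : 0 < y := Real.rpow_pos_of_pos (by linarith) _
  have hsplit : (T.card : ℝ) = (T.filter (fun p : ℕ => (p : ℝ) ≤ y)).card +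
      (T.filter (fun p : ℕ => ¬ (p : ℝ) ≤ y)).card := by
    exact_mod_cast (Finset.card_filter_add_card_filter_not (s := T) (fun p : ℕ => (p : ℝ) ≤ y)).symm
  have hsmall : ((T.filter (fun p : ℕ => (p : ℝ) ≤ y)).card : ℝ) ≤ y + 1 := by
    have : T.filter (fun p : ℕ => (p : ℝ) ≤ y) ⊆ Finset.range (⌊y⌋₊ + 1) := by
      intro p hp
      rw [Finset.mem_filter] at hp
      rw [Finset.mem_range, Nat.lt_succ_iff]
      exact Nat.le_floor hp.2
    have h2 := Finset.card_le_card this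
    rw [Finset.card_range] at h2
    have h3 := Nat.floor_le hy0.le
    have h4 : ((T.filter (fun p : ℕ => (p : ℝ) ≤ y)).card : ℝ) ≤ ((⌊y⌋₊ + 1 : ℕ) : ℝ) := by exact_mod_cast h2
    push_cast at h4
    linarith
  have hbig : ((T.filter (fun p : ℕ => ¬ (p : ℝ) ≤ y)).card : ℝ) * ((1 - δ) * Real.log x) ≤
      ∑ p ∈ Q x, F p * Real.log p := by
    calc _ = (T.filter (fun p : ℕ => ¬ (p : ℝ) ≤ y)).card • ((1 - δ) * Real.log x) := by rw [nsmul_eq_mul]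
      _ ≤ ∑ p ∈ T.filter (fun p : ℕ => ¬ (p : ℝ) ≤ y), F p * Real.log p := by
        refine Finset.card_nsmul_le_sum _ _ _ fun p hp => ?_
        rw [Finset.mem_filter, not_le] at hp
        rw [hF1 p (hT p hp.1).1, one_mul, ← Real.log_rpow (by linarith)]
        exact Real.log_le_log hy0 hp.2.le
      _ ≤ _ := Finset.sum_le_sum_of_subset_of_nonneg ((Finset.filter_subset _ _).trans hTQ)
        fun p hp _ => mul_nonneg (hF p) (hlp p hp)
  have hbig' : ((T.filter (fun p : ℕ => ¬ (p : ℝ) ≤ y)).card : ℝ) * Real.log x ≤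
      (∑ p ∈ Q x, F p * Real.log p) / (1 - δ) := by
    rw [le_div_iff₀ hδ]; linarith
  have hcard : (0 : ℝ) < (Q x).card := by
    by_contra h
    have : (Q x).card * Real.log x ≤ 0 := mul_nonpos_of_nonpos_of_nonneg (not_lt.mp h) hlog.le
    linarith
  rw [div_le_div_iff₀ hcard hBpos]
  calc (T.card : ℝ) * ∑ p ∈ Q x, 1 * Real.log p ≤ T.card * ((Q x).card * Real.log x) := by gcongr
    _ = (T.card * Real.log x) * (Q x).card := by ring
    _ ≤ _ := by
      refine mul_le_mul_of_nonneg_right ?_ hcard.le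
      rw [hsplit, add_mul]
      refine add_le_add (mul_le_mul_of_nonneg_right hsmall hlog.le) hbig'

lemma bound_tendsto {F : ℕ → ℝ} {c : ℝ} (hc : HM F c) {δ : ℝ} (hδ : 0 < δ) (hδ1 : δ < 1) :
    Tendsto (fun x : ℕ => (((x : ℝ) ^ (1 - δ) + 1) * Real.log x + (∑ p ∈ Q x, F p * Real.log p) / (1 - δ)) /
        ∑ p ∈ Q x, 1 * Real.log p) atTop (𝓝 (c / (1 - δ))) := by
  have h1 : Tendsto (fun x : ℝ => (x ^ (1 - δ) + 1) * Real.log x / x) atTop (𝓝 0) := by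
    have a1 : Tendsto (fun x : ℝ => Real.log x / x ^ δ) atTop (𝓝 0) :=
      (isLittleO_log_rpow_atTop hδ).tendsto_div_nhds_zero
    have a2 : Tendsto (fun x : ℝ => Real.log x / x ^ (1 : ℝ)) atTop (𝓝 0) :=
      (isLittleO_log_rpow_atTop one_pos).tendsto_div_nhds_zero
    have a3 := a1.add a2
    rw [add_zero] at a3
    refine a3.congr' ?_
    filter_upwards [eventually_gt_atTop 0] with x hx
    have hxd : (0 : ℝ) < x ^ δ := Real.rpow_pos_of_pos hx _
    rw [Real.rpow_sub hx, Real.rpow_one]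
    field_simp
  have h1' := h1.comp (tendsto_natCast_atTop_atTop (R := ℝ))
  have h2 : Tendsto (fun x : ℕ => ((((x : ℝ) ^ (1 - δ) + 1) * Real.log x / x +
      (∑ p ∈ Q x, F p * Real.log p) / x / (1 - δ)) / ((∑ p ∈ Q x, 1 * Real.log p) / x)))
      atTop (𝓝 ((0 + c / (1 - δ)) / 1)) :=
    Tendsto.div (Tendsto.add h1' (Tendsto.div_const hc _)) HM_one one_ne_zero
  rw [zero_add, div_one] at h2
  refine h2.congr' ?_
  filter_upwards [eventually_gt_atTop 0] with x hx
  have hx' : (x : ℝ) ≠ 0 := by exact_mod_cast hx.ne'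
  rw [div_right_comm, ← add_div, div_div_div_cancel_right₀ hx']

lemma limsup_bound {F : ℕ → ℝ} {c : ℝ} (hc : HM F c) (hF : ∀ p, 0 ≤ F p) {P : Set ℕ}
    (hP : ∀ p ∈ P, p.Prime) (hF1 : ∀ p ∈ P, F p = 1) (T : ℕ → Finset ℕ)
    (hT : ∀ x, ∀ p ∈ T x, p ∈ P ∧ p ≤ x) :
    limsup (fun x : ℕ => ((T x).card : ℝ) / (Q x).card) atTop ≤ c := by
  have hδ : ∀ δ : ℝ, 0 < δ → δ < 1 →
      limsup (fun x : ℕ => ((T x).card : ℝ) / (Q x).card) atTop ≤ c / (1 - δ) + δ := by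
    intro δ h0 h1
    refine limsup_le_of_le ?_ ?_
    · exact isCoboundedUnder_le_of_le atTop (x := 0) fun x => by positivity
    · filter_upwards [(bound_tendsto hc h0 h1).eventually (gt_mem_nhds (lt_add_of_pos_right _ h0)),
        eventually_ge_atTop 2] with x hx hx2
      exact (ratio_le hF hP hF1 h1 hx2 (T x) (hT x)).trans hx.le
  have hlim : Tendsto (fun δ : ℝ => c / (1 - δ) + δ) (𝓝[>] 0) (𝓝 c) := by
    have : ContinuousAt (fun δ : ℝ => c / (1 - δ) + δ) 0 := by
      refine ContinuousAt.add (ContinuousAt.div continuousAt_const (by fun_prop) (by norm_num)) continuousAt_id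
    have h2 := this.tendsto
    simp only [sub_zero, div_one, add_zero] at h2
    exact h2.mono_left nhdsWithin_le_nhds
  refine ge_of_tendsto hlim ?_
  filter_upwards [Ioo_mem_nhdsGT (zero_lt_one (α := ℝ))] with δ hδ'
  exact hδ δ hδ'.1 hδ'.2

end KM

end

open Filter in
open scoped Classical in
theorem stmt_19 (q : ℕ) (hq : 1 < q) (m : ℕ) (hm : 1 < m) (hsq : Squarefree m)
    (hco : Nat.Coprime m q)
    (hpow : ∀ p : ℕ, p.Prime → p ∣ m → ¬∃ x : ℕ, x ^ p = q)
    (P : Set ℕ) (hP : ∀ p ∈ P, Nat.Prime p) (hinf : P.Infinite)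
    (hsol : ∀ p ∈ P, ∃ x : ℤ, (p : ℤ) ∣ x ^ m - (q : ℤ)) :
    Filter.limsup (fun x : ℕ =>
        (((Finset.range (x + 1)).filter (fun p => p ∈ P)).card : ℝ) /
          (((Finset.range (x + 1)).filter Nat.Prime).card : ℝ)) atTop
      ≤ (Nat.totient m : ℝ) / m ∧ (Nat.totient m : ℝ) / m < 1 := by
  constructor
  · have h := KM.limsup_bound (P := P)
      (KM.HM_FF (q := q) (m := m) (by omega) (by omega) hsq hco hpow) (KM.FF_nonneg q m.primeFactors) hP
      (fun p hp => KM.FF_eq_one (by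
        obtain ⟨x, hx⟩ := hsol p hp
        refine ⟨(x : ZMod p), ?_⟩
        rw [← ZMod.intCast_zmod_eq_zero_iff_dvd] at hx
        push_cast at hx
        exact sub_eq_zero.mp hx))
      (fun x => (Finset.range (x + 1)).filter (fun p => p ∈ P))
      (fun x p hp => by
        rw [Finset.mem_filter, Finset.mem_range] at hp
        exact ⟨hp.2, by omega⟩)
    refine le_of_eq_of_le ?_ h
    congr 1
    funext x
    have : KM.Q x = (Finset.range (x + 1)).filter Nat.Prime := by
      ext p
      simp only [KM.Q, Finset.mem_filter, Finset.mem_Ioc, Finset.mem_range]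
      constructor
      · rintro ⟨h1, h2⟩; exact ⟨by omega, h2⟩
      · rintro ⟨h1, h2⟩; exact ⟨⟨h2.pos, by omega⟩, h2⟩
    rw [this]
  · rw [div_lt_one (by positivity)]
    exact_mod_cast Nat.totient_lt m hm
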